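/- arXiv:1104.5690 — 2 statements merged into one kernel-verified Lean document; each statement's English description precedes it below -/
import Mathlib

section
/- For every n ≥ 2, the ε-twisted conjugacy problem in B_n is decidable: there exists a computable function f taking two signed words u, v and returning a Boolean, such that f(u,v) = true if and only if there exists x ∈ B_n with π(v) = rev(x) · π(u) · x. -/
/-!
Decidability of twisted conjugacy is reduced to two facts: the word problem is solvable, and
`ε`-twisted conjugate braids `u`, `v` are twisted conjugate by a braid whose word length is bounded
by a computable function of the lengths of `u` and `v`.

*Garside theory.* Garside's lemma (`garside`) on least common multiples of two generators in the
positive braid monoid is proved by induction on the length, the key being the cube condition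
(`cube`). It gives left cancellation and least common multiples. A power of `σ₁ ⋯ σ_m` is central and
divisible by all generators, so the monoid embeds in its localization at this element, hence in
the braid group (`inc_injective`). Thus the braid group is a lattice-like ordered group: the order
`a ≤ b ↔ a⁻¹ b ∈ P` has joins (`exists_sup`), and the powers of a central element `z` are cofinal;
this is axiomatized as `GarsideGroup`. Multiplying the full twist by its reversal makes `z`
invariant under `rev`.

*Word problem.* The interval from `1` to `z²` is finite and closed under the complement
`a⁻¹ (a ∨ b)`. Running the finite complement table along a product of elements of the interval
decides whether `z` divides it, and computes the quotient (`divOnce_iterate`). Hence positivity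
is primitive recursive, and a braid is trivial iff it and its inverse are positive.

*Bounded conjugators.* Let `dist a b` be the least `k` with `a z⁻ᵏ ≤ b ≤ a zᵏ`. Balls are order
intervals, so they have the Helly property (`helly`), and the space is coarsely injective. The map
`φ a = u ε(a)` reverses the order and is therefore an isometry, and the displacement `a⁻¹ φ(a)` runs
through the twisted conjugates of `u`. In an injective space there is an isometry-invariant conical
bicombing, obtained by retracting convex combinations of distance functions onto minimal
admissible functions; displacement is convex along its geodesics. Finitely many averaging steps
of the retraction suffice for an integral version (`exists_path`): two points of displacement at
most `R` are joined by a path with jumps at most `4` along which the displacement is at most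
`R + 3`. So `u` and `v` are joined by a chain of twisted conjugations by elements of the ball of
radius `4` that stays in a fixed finite ball (`twisted_chain`); deleting repetitions bounds the
number of steps (`chain_bound`), hence the length of the conjugator (`bounded_conjugator`).
-/

def braidRels (m : ℕ) : Set (FreeGroup (Fin m)) :=
  { r | (∃ i j : Fin m, (i : ℕ) + 1 < (j : ℕ) ∧
          r = FreeGroup.of i * FreeGroup.of j * (FreeGroup.of i)⁻¹ * (FreeGroup.of j)⁻¹) ∨
        (∃ i j : Fin m, (i : ℕ) + 1 = (j : ℕ) ∧
          r = FreeGroup.of i * FreeGroup.of j * FreeGroup.of i *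
              (FreeGroup.of j)⁻¹ * (FreeGroup.of i)⁻¹ * (FreeGroup.of j)⁻¹) }

/-- The braid group on `n` strands. -/
abbrev B (n : ℕ) := PresentedGroup (braidRels (n - 1))

/-- The Artin generators. -/
def σ {n : ℕ} (i : Fin (n - 1)) : B n := PresentedGroup.of i

/-- Evaluation of a signed word in the generators. -/
def π {n : ℕ} (w : List (Fin (n - 1) × Bool)) : B n :=
  (w.map (fun p => if p.2 then σ p.1 else (σ p.1)⁻¹)).prod

/-- The submonoid of positive braids. -/
def P (n : ℕ) : Submonoid (B n) := Submonoid.closure (Set.range (σ (n := n)))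

def σ' {n : ℕ} (j : ℕ) : B n := if h : j < n - 1 then σ ⟨j, h⟩ else 1

/-- The Garside half-twist element Δ. -/
def Δ (n : ℕ) : B n :=
  ((List.range (n - 1)).map
    (fun k => (((List.range (k + 1)).reverse).map (σ' (n := n))).prod)).prod

/-- Simple elements: positive prefixes of Δ. -/
def Simple {n : ℕ} (s : B n) : Prop := s ∈ P n ∧ s⁻¹ * Δ n ∈ P n

/-- Palindromic-free positive braids. -/
def PalFree {n : ℕ} (x : B n) : Prop :=
  ∀ i : Fin (n - 1), (σ i)⁻¹ * x * (σ i)⁻¹ ∉ P n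

/-- Canonical length at most `m`. -/
def lenLE {n : ℕ} (x : B n) (m : ℕ) : Prop :=
  ∃ p : ℤ, (Δ n) ^ (-p) * x ∈ P n ∧ x⁻¹ * (Δ n) ^ (p + (m : ℤ)) ∈ P n

/-- Canonical length exactly `m`. -/
def lenEQ {n : ℕ} (x : B n) (m : ℕ) : Prop :=
  lenLE x m ∧ (1 ≤ m → ¬ lenLE x (m - 1))

/-- Left normal form (as a list of simple factors). -/
def IsLeftNF {n : ℕ} (x : B n) (L : List (B n)) : Prop :=
  (∀ s ∈ L, Simple s ∧ s ≠ 1) ∧ L.prod = x ∧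
  ∀ i : ℕ, i + 1 < L.length → ∀ u : B n, Simple u →
    u⁻¹ * (L.getD i 1 * L.getD (i + 1) 1) ∈ P n → u⁻¹ * L.getD i 1 ∈ P n

/-- Right normal form (as a list of simple factors). -/
def IsRightNF {n : ℕ} (x : B n) (L : List (B n)) : Prop :=
  (∀ s ∈ L, Simple s ∧ s ≠ 1) ∧ L.prod = x ∧
  ∀ i : ℕ, i + 1 < L.length → ∀ u : B n, Simple u →
    (L.getD i 1 * L.getD (i + 1) 1) * u⁻¹ ∈ P n → L.getD (i + 1) 1 * u⁻¹ ∈ P n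

namespace TwistedBraid

/-! ### The positive braid monoid and Garside's lemma -/

/-- The braid relations, oriented, as a relation on the free monoid on `m` generators. -/
def monRel (m : ℕ) : FreeMonoid (Fin m) → FreeMonoid (Fin m) → Prop := fun x y =>
  (∃ i j : Fin m, (i : ℕ) + 1 < j ∧
    x = FreeMonoid.of i * FreeMonoid.of j ∧ y = FreeMonoid.of j * FreeMonoid.of i) ∨
  (∃ i j : Fin m, (i : ℕ) + 1 = j ∧
    x = FreeMonoid.of i * FreeMonoid.of j * FreeMonoid.of i ∧
    y = FreeMonoid.of j * FreeMonoid.of i * FreeMonoid.of j)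

/-- The monoid of positive braids on `m + 1` strands, given by Artin's presentation. -/
abbrev BM (m : ℕ) := PresentedMonoid (monRel m)

/-- The generators of the positive braid monoid. -/
def gen {m : ℕ} (i : Fin m) : BM m := PresentedMonoid.of (monRel m) i

/-- The word length, which is well defined because the braid relations are homogeneous. -/
def lenHom (m : ℕ) : BM m →* Multiplicative ℕ :=
  PresentedMonoid.lift (fun _ => Multiplicative.ofAdd 1) (by
    rintro a b (⟨i, j, -, rfl, rfl⟩ | ⟨i, j, -, rfl, rfl⟩) <;> simp)

/-- `lenHom` with values in `ℕ`. -/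
def ln {m : ℕ} (a : BM m) : ℕ := Multiplicative.toAdd (lenHom m a)

variable {m : ℕ}

@[simp] lemma ln_one : ln (1 : BM m) = 0 := by simp [ln]

@[simp] lemma ln_mul (a b : BM m) : ln (a * b) = ln a + ln b := by simp [ln]

@[simp] lemma ln_gen (i : Fin m) : ln (gen i) = 1 := rfl

lemma ln_mk (x : FreeMonoid (Fin m)) : ln (PresentedMonoid.mk (monRel m) x) = x.length := by
  induction x with
  | one => simp
  | of x => exact ln_gen x
  | mul x y hx hy => simp [hx, hy]

/-- Two generators are adjacent when they satisfy the relation of length three. -/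
def Adj (i j : Fin m) : Prop := (i : ℕ) + 1 = j ∨ (j : ℕ) + 1 = i

instance (i j : Fin m) : Decidable (Adj i j) := by unfold Adj; infer_instance

lemma Adj.symm {i j : Fin m} (h : Adj i j) : Adj j i := Or.symm h

lemma adj_comm {i j : Fin m} : Adj i j ↔ Adj j i := Or.comm

lemma Adj.ne {i j : Fin m} (h : Adj i j) : i ≠ j := by
  rintro rfl; unfold Adj at h; omega

lemma gen_braid {i j : Fin m} (h : Adj i j) :
    gen i * gen j * gen i = gen j * gen i * gen j := by
  rcases h with h | h
  · exact PresentedMonoid.mk_eq_mk_of_rel (Or.inr ⟨i, j, h, rfl, rfl⟩)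
  · exact (PresentedMonoid.mk_eq_mk_of_rel (Or.inr ⟨j, i, h, rfl, rfl⟩)).symm

lemma gen_comm {i j : Fin m} (h : ¬ Adj i j) : gen i * gen j = gen j * gen i := by
  by_cases e : i = j
  · rw [e]
  have e' : (i : ℕ) ≠ j := fun h' => e (Fin.ext h')
  unfold Adj at h
  rcases lt_or_gt_of_ne e' with h' | h'
  · exact PresentedMonoid.mk_eq_mk_of_rel (Or.inl ⟨i, j, by omega, rfl, rfl⟩)
  · exact (PresentedMonoid.mk_eq_mk_of_rel (Or.inl ⟨j, i, by omega, rfl, rfl⟩)).symm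

lemma braid' {i j : Fin m} (h : Adj i j) (x : BM m) :
    gen i * (gen j * (gen i * x)) = gen j * (gen i * (gen j * x)) := by
  simpa only [mul_assoc] using congrArg (· * x) (gen_braid h)

lemma comm' {i j : Fin m} (h : ¬ Adj i j) (x : BM m) :
    gen i * (gen j * x) = gen j * (gen i * x) := by
  simpa only [mul_assoc] using congrArg (· * x) (gen_comm h)

/-- The complement `cpl i j`: the least common right multiple of `gen i` and `gen j` is
`gen i * cpl i j = gen j * cpl j i`. -/
def cpl (i j : Fin m) : BM m :=
  if i = j then 1 else if Adj i j then gen j * gen i else gen j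

@[simp] lemma cpl_self (i : Fin m) : cpl i i = 1 := by simp [cpl]

lemma cpl_adj {i j : Fin m} (h : Adj i j) : cpl i j = gen j * gen i := by
  simp [cpl, h, h.ne]

lemma cpl_nadj {i j : Fin m} (e : i ≠ j) (h : ¬ Adj i j) : cpl i j = gen j := by
  simp [cpl, h, e]

lemma gen_mul_cpl (i j : Fin m) : gen i * cpl i j = gen j * cpl j i := by
  by_cases e : i = j
  · subst e; rfl
  by_cases h : Adj i j
  · rw [cpl_adj h, cpl_adj h.symm, ← mul_assoc, ← mul_assoc, gen_braid h]
  · rw [cpl_nadj e h, cpl_nadj (Ne.symm e) (fun h' => h h'.symm), gen_comm h]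

/-- Garside's lemma for products of length at most `L`: a common multiple of two generators
is a multiple of `gen i * cpl i j`. For `i = j` this is left cancellation. -/
def GarsideUpTo (m L : ℕ) : Prop := ∀ (i j : Fin m) (a b : BM m), ln a < L → gen i * a = gen j * b →
  ∃ w, a = cpl i j * w ∧ b = cpl j i * w

lemma GarsideUpTo.cancel {L : ℕ} (hQ : GarsideUpTo m L) {i : Fin m} {a b : BM m} (hl : ln a < L)
    (h : gen i * a = gen i * b) : a = b := by
  obtain ⟨w, h1, h2⟩ := hQ i i a b hl h
  rw [h1, h2]

lemma GarsideUpTo.comm {L : ℕ} (hQ : GarsideUpTo m L) {i j : Fin m} (e : i ≠ j) (hij : ¬ Adj i j)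
    {a b : BM m}
    (hl : ln a < L) (h : gen i * a = gen j * b) : ∃ w, a = gen j * w ∧ b = gen i * w := by
  have := hQ i j a b hl h
  rwa [cpl_nadj e hij, cpl_nadj (Ne.symm e) (fun h' => hij h'.symm)] at this

lemma GarsideUpTo.adj {L : ℕ} (hQ : GarsideUpTo m L) {i j : Fin m} (hij : Adj i j) {a b : BM m}
    (hl : ln a < L) (h : gen i * a = gen j * b) :
    ∃ w, a = gen j * (gen i * w) ∧ b = gen i * (gen j * w) := by
  have := hQ i j a b hl h
  rw [cpl_adj hij, cpl_adj hij.symm] at this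
  simpa only [mul_assoc] using this

/-- The conclusion of the cube condition. -/
def Cube (i k j : Fin m) (a b : BM m) : Prop :=
  ∃ w, cpl i k * a = cpl i j * w ∧ cpl j k * b = cpl j i * w

lemma Cube.swap {i k j : Fin m} {a b : BM m} (h : Cube i k j a b) : Cube j k i b a := by
  obtain ⟨w, h1, h2⟩ := h
  exact ⟨w, h2, h1⟩

lemma cube_100 {L : ℕ} (hQ : GarsideUpTo m L) {i k j : Fin m} {a b : BM m}
    (hl : ln (cpl k i * a) ≤ L) (h : cpl k i * a = cpl k j * b)
    (hij : i ≠ j) (hkj : k ≠ j) (ki : Adj k i) (kj : ¬ Adj k j) (ij : ¬ Adj i j) :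
    Cube i k j a b := by
  have ji : ¬ Adj j i := fun h' => ij h'.symm
  have jk : ¬ Adj j k := fun h' => kj h'.symm
  rw [cpl_adj ki, cpl_nadj hkj kj, mul_assoc] at h
  simp [cpl_adj ki] at hl
  obtain ⟨X, h1, rfl⟩ := hQ.comm hij ij (by simp; omega) h
  obtain ⟨Y, rfl, rfl⟩ := hQ.comm hkj kj (by omega) h1
  refine ⟨gen k * (gen i * Y), ?_, ?_⟩
  · rw [cpl_adj ki.symm, cpl_nadj hij ij, mul_assoc, comm' ij, comm' kj]
  · rw [cpl_nadj hkj.symm jk, cpl_nadj hij.symm ji, braid' ki]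

lemma cube_110 {L : ℕ} (hQ : GarsideUpTo m L) {i k j : Fin m} {a b : BM m}
    (hl : ln (cpl k i * a) ≤ L) (h : cpl k i * a = cpl k j * b)
    (hij : i ≠ j) (ki : Adj k i) (kj : Adj k j) (ij : ¬ Adj i j) :
    Cube i k j a b := by
  have ji : ¬ Adj j i := fun h' => ij h'.symm
  have hlen := congrArg ln h
  simp [cpl_adj ki, cpl_adj kj] at hl hlen
  rw [cpl_adj ki, cpl_adj kj, mul_assoc, mul_assoc] at h
  obtain ⟨X, h1, h2⟩ := hQ.comm hij ij (by simp; omega) h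
  have hX := congrArg ln h1
  simp at hX
  obtain ⟨Y, rfl, rfl⟩ := hQ.adj kj (by omega) h1
  obtain ⟨Z, rfl, h3⟩ := hQ.adj ki (by omega) h2
  simp at hX hlen hl
  have h4 := hQ.cancel (by simp; omega) h3
  obtain ⟨Q, rfl, rfl⟩ := hQ.comm hij.symm ji (by omega) h4
  refine ⟨gen k * (gen j * (gen i * (gen k * Q))), ?_, ?_⟩
  · rw [cpl_adj ki.symm, cpl_nadj hij ij, mul_assoc, comm' ij, braid' ki.symm, braid' kj]
  · rw [cpl_adj kj.symm, cpl_nadj hij.symm ji, mul_assoc, comm' ji, braid' kj.symm, braid' ki,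
      comm' ij]

lemma cube_101 {L : ℕ} (hQ : GarsideUpTo m L) {i k j : Fin m} {a b : BM m}
    (hl : ln (cpl k i * a) ≤ L) (h : cpl k i * a = cpl k j * b)
    (hkj : k ≠ j) (ki : Adj k i) (kj : ¬ Adj k j) (ij : Adj i j) :
    Cube i k j a b := by
  have jk : ¬ Adj j k := fun h' => kj h'.symm
  have hlen := congrArg ln h
  simp [cpl_adj ki, cpl_nadj hkj kj] at hl hlen
  rw [cpl_adj ki, cpl_nadj hkj kj, mul_assoc] at h
  obtain ⟨X, h1, rfl⟩ := hQ.adj ij (by simp; omega) h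
  obtain ⟨Y, rfl, h2⟩ := hQ.comm hkj kj (by omega) h1
  simp at hlen hl
  obtain ⟨Z, rfl, rfl⟩ := hQ.adj ki.symm (by omega) h2
  refine ⟨gen k * (gen i * (gen j * Z)), ?_, ?_⟩
  · rw [cpl_adj ki.symm, cpl_adj ij, mul_assoc, mul_assoc, braid' ij, comm' jk Z, comm' kj,
      braid' ki]
  · rw [cpl_nadj hkj.symm jk, cpl_adj ij.symm, mul_assoc, comm' jk, comm' jk, braid' ij.symm,
      braid' ki]

/-- The cube condition for the braid presentation, by the possible adjacencies of three
generators. -/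
lemma cube {L : ℕ} (hQ : GarsideUpTo m L) (i k j : Fin m) (a b : BM m)
    (hl : ln (cpl k i * a) ≤ L) (h : cpl k i * a = cpl k j * b) : Cube i k j a b := by
  by_cases hki : k = i
  · subst hki
    exact ⟨b, by simpa using h, rfl⟩
  by_cases hkj : k = j
  · subst hkj
    exact ⟨a, rfl, by simpa using h.symm⟩
  by_cases hij : i = j
  · subst hij
    suffices a = b by subst this; exact ⟨cpl i k * a, by simp, by simp⟩
    by_cases ki : Adj k i
    · simp [cpl_adj ki] at hl
      rw [cpl_adj ki, mul_assoc, mul_assoc] at h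
      exact hQ.cancel (by omega) (hQ.cancel (by simp; omega) h)
    · simp [cpl_nadj hki ki] at hl
      rw [cpl_nadj hki ki] at h
      exact hQ.cancel (by omega) h
  by_cases ki : Adj k i
  · by_cases kj : Adj k j
    · by_cases ij : Adj i j
      · exfalso; unfold Adj at *; omega
      · exact cube_110 hQ hl h hij ki kj ij
    · by_cases ij : Adj i j
      · exact cube_101 hQ hl h hkj ki kj ij
      · exact cube_100 hQ hl h hij hkj ki kj ij
  · by_cases kj : Adj k j
    · by_cases ij : Adj i j
      · exact (cube_101 hQ (h ▸ hl) h.symm hki kj ki ij.symm).swap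
      · exact (cube_100 hQ (h ▸ hl) h.symm (Ne.symm hij) hki kj ki
          (fun h' => ij h'.symm)).swap
    · have ik : ¬ Adj i k := fun h' => ki h'.symm
      have jk : ¬ Adj j k := fun h' => kj h'.symm
      simp [cpl_nadj hki ki] at hl
      rw [cpl_nadj hki ki, cpl_nadj hkj kj] at h
      by_cases ij : Adj i j
      · obtain ⟨w, rfl, rfl⟩ := hQ.adj ij (by omega) h
        refine ⟨gen k * w, ?_, ?_⟩
        · rw [cpl_nadj (Ne.symm hki) ik, cpl_adj ij, mul_assoc, comm' kj, comm' ki]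
        · rw [cpl_nadj (Ne.symm hkj) jk, cpl_adj ij.symm, mul_assoc, comm' ki, comm' kj]
      · obtain ⟨w, rfl, rfl⟩ := hQ.comm hij ij (by omega) h
        refine ⟨gen k * w, ?_, ?_⟩
        · rw [cpl_nadj (Ne.symm hki) ik, cpl_nadj hij ij, comm' kj]
        · rw [cpl_nadj (Ne.symm hkj) jk, cpl_nadj (Ne.symm hij) (fun h' => ij h'.symm), comm' ki]

/-- Two words that are both empty, or whose tails witness that their common value is a multiple
of the least common multiple of their first letters. -/
def HeadRel (x y : FreeMonoid (Fin m)) : Prop :=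
  (x = 1 ∧ y = 1) ∨ ∃ (i j : Fin m) (a b : FreeMonoid (Fin m)) (w : BM m),
    x = FreeMonoid.of i * a ∧ y = FreeMonoid.of j * b ∧
    PresentedMonoid.mk (monRel m) a = cpl i j * w ∧ PresentedMonoid.mk (monRel m) b = cpl j i * w

lemma HeadRel.symm {x y : FreeMonoid (Fin m)} (h : HeadRel x y) : HeadRel y x := by
  rcases h with ⟨h1, h2⟩ | ⟨i, j, a, b, w, h1, h2, h3, h4⟩
  · exact Or.inl ⟨h2, h1⟩
  · exact Or.inr ⟨j, i, b, a, w, h2, h1, h4, h3⟩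

lemma HeadRel.refl (x : FreeMonoid (Fin m)) : HeadRel x x := by
  induction x using FreeMonoid.casesOn with
  | one => exact Or.inl ⟨rfl, rfl⟩
  | of_mul i a => exact Or.inr ⟨i, i, a, a, PresentedMonoid.mk _ a, rfl, rfl, by simp, by simp⟩

lemma of_mul_inj {i j : Fin m} {a b : FreeMonoid (Fin m)}
    (h : FreeMonoid.of i * a = FreeMonoid.of j * b) : i = j ∧ a = b := by
  have h' : (i :: FreeMonoid.toList a) = (j :: FreeMonoid.toList b) := congrArg FreeMonoid.toList h
  simpa using h'

lemma headRel_of_conGen {L : ℕ} (hQ : GarsideUpTo m L) {x y : FreeMonoid (Fin m)}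
    (h : ConGen.Rel (monRel m) x y) : x.length ≤ L + 1 → HeadRel x y := by
  induction h with
  | of x y h =>
    intro _
    rcases h with ⟨i, j, hij, rfl, rfl⟩ | ⟨i, j, hij, rfl, rfl⟩
    · have e : i ≠ j := by rintro rfl; omega
      have e2 : ¬ Adj i j := by unfold Adj; omega
      refine Or.inr ⟨i, j, _, _, 1, rfl, rfl, ?_, ?_⟩
      · rw [cpl_nadj e e2, mul_one]; rfl
      · rw [cpl_nadj e.symm (fun h' => e2 h'.symm), mul_one]; rfl
    · have e2 : Adj i j := Or.inl hij
      refine Or.inr ⟨i, j, _, _, 1, rfl, rfl, ?_, ?_⟩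
      · rw [cpl_adj e2, mul_one]; rfl
      · rw [cpl_adj e2.symm, mul_one]; rfl
  | refl x => intro _; exact HeadRel.refl x
  | @symm x y h ih =>
    intro hl
    have e : x.length = y.length := by
      rw [← ln_mk, ← ln_mk, PresentedMonoid.mk_eq_mk_iff.2 h]
    exact (ih (by omega)).symm
  | @trans x y z h1 h2 ih1 ih2 =>
    intro hl
    have e : x.length = y.length := by
      rw [← ln_mk, ← ln_mk, PresentedMonoid.mk_eq_mk_iff.2 h1]
    rcases ih1 hl with ⟨rfl, rfl⟩ | ⟨i, k, a, t, w1, rfl, rfl, ha, ht⟩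
    · exact ih2 (by omega)
    · rcases ih2 (by omega) with ⟨h, -⟩ | ⟨k', j, t', b, w2, hk, rfl, ht', hb⟩
      · have := congrArg FreeMonoid.length h; simp at this
      · obtain ⟨rfl, rfl⟩ := of_mul_inj hk
        simp only [FreeMonoid.length_mul, FreeMonoid.length_of] at e hl
        obtain ⟨w, h3, h4⟩ := cube hQ i k j w1 w2
          (by rw [← ht, ln_mk]; omega) (by rw [← ht, ← ht'])
        exact Or.inr ⟨i, j, a, b, w, rfl, rfl, by rw [ha, h3], by rw [hb, h4]⟩
  | @mul x1 y1 x2 y2 h1 h2 ih1 ih2 =>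
    intro hl
    simp only [FreeMonoid.length_mul] at hl
    rcases ih1 (by omega) with ⟨rfl, rfl⟩ | ⟨i, j, a, b, w, rfl, rfl, ha, hb⟩
    · simpa using ih2 (by omega)
    · refine Or.inr ⟨i, j, a * x2, b * y2, w * PresentedMonoid.mk _ x2, by rw [mul_assoc],
        by rw [mul_assoc], ?_, ?_⟩
      · rw [map_mul, ha, mul_assoc]
      · rw [map_mul, hb, mul_assoc, PresentedMonoid.mk_eq_mk_iff.2 h2]

lemma garside_bounded (m L : ℕ) : GarsideUpTo m L := by
  induction L with
  | zero => intro i j a b h; omega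
  | succ L ih =>
    intro i j a b hl h
    obtain ⟨a, rfl⟩ := PresentedMonoid.surjective_mk a
    obtain ⟨b, rfl⟩ := PresentedMonoid.surjective_mk b
    have h' : PresentedMonoid.mk (monRel m) (FreeMonoid.of i * a) =
      PresentedMonoid.mk (monRel m) (FreeMonoid.of j * b) := h
    rw [ln_mk] at hl
    rcases headRel_of_conGen ih (PresentedMonoid.mk_eq_mk_iff.1 h') (by simp; omega) with
      ⟨h, -⟩ | ⟨i', j', a', b', w, e1, e2, ha, hb⟩
    · have := congrArg FreeMonoid.length h; simp at this
    · obtain ⟨rfl, rfl⟩ := of_mul_inj e1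
      obtain ⟨rfl, rfl⟩ := of_mul_inj e2
      exact ⟨w, ha, hb⟩

/-- Garside's lemma: `gen i * cpl i j` is a least common right multiple. -/
lemma garside {i j : Fin m} {a b : BM m} (h : gen i * a = gen j * b) :
    ∃ w, a = cpl i j * w ∧ b = cpl j i * w :=
  garside_bounded m (ln a + 1) i j a b (by omega) h

lemma exists_gen_mul {a : BM m} (h : a ≠ 1) : ∃ i b, a = gen i * b := by
  obtain ⟨a, rfl⟩ := PresentedMonoid.surjective_mk a
  induction a using FreeMonoid.casesOn with
  | one => exact absurd (map_one _) h
  | of_mul i a => exact ⟨i, PresentedMonoid.mk _ a, map_mul _ _ _⟩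

@[elab_as_elim]
lemma BM.rec_gen {p : BM m → Prop} (one : p 1) (mul : ∀ i a, p a → p (gen i * a)) (a : BM m) :
    p a := by
  obtain ⟨a, rfl⟩ := PresentedMonoid.surjective_mk a
  induction a using FreeMonoid.recOn with
  | one => simpa using one
  | of_mul i a h => exact mul i _ h

lemma eq_one_of_ln {a : BM m} (h : ln a = 0) : a = 1 := by
  by_contra h'
  obtain ⟨i, b, rfl⟩ := exists_gen_mul h'
  simp at h

lemma gen_cancel {i : Fin m} {a b : BM m} (h : gen i * a = gen i * b) : a = b := by
  obtain ⟨w, rfl, rfl⟩ := garside h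
  rfl

lemma mul_cancel (c : BM m) {a b : BM m} (h : c * a = c * b) : a = b := by
  induction c using BM.rec_gen with
  | one => simpa using h
  | mul i c ih => exact ih (gen_cancel (by simpa only [mul_assoc] using h))

/-- Elements of the positive braid monoid that have a common right multiple have a least one. -/
lemma exists_lcm_aux (L : ℕ) : ∀ x a b : BM m, ln x ≤ L → a ∣ x → b ∣ x →
    ∃ l, a ∣ l ∧ b ∣ l ∧ ∀ y, a ∣ y → b ∣ y → l ∣ y := by
  induction L with
  | zero =>
    rintro x a b hl ⟨c, rfl⟩ ⟨d, hd⟩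
    have h1 := congrArg ln hd
    simp at hl h1
    rw [eq_one_of_ln hl.1, eq_one_of_ln (by omega : ln b = 0)]
    exact ⟨1, by simp, by simp, by simp⟩
  | succ L ih =>
    have key : ∀ (i : Fin m) (a b x : BM m), ln x ≤ L + 1 → gen i * a ∣ x → gen i * b ∣ x →
        ∃ l, gen i * a ∣ gen i * l ∧ gen i * b ∣ gen i * l ∧
          ∀ y, gen i * a ∣ y → gen i * b ∣ y → gen i * l ∣ y := by
      rintro i a b x hl ⟨c, rfl⟩ ⟨d, hd⟩
      simp at hl
      rw [mul_assoc, mul_assoc] at hd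
      obtain ⟨l, ⟨p, rfl⟩, ⟨q, hq⟩, hmin⟩ := ih (a * c) a b (by simp; omega) ⟨c, rfl⟩
        ⟨d, gen_cancel hd⟩
      refine ⟨a * p, ⟨p, by rw [mul_assoc]⟩, ⟨q, by rw [mul_assoc, hq]⟩, ?_⟩
      rintro y ⟨r, rfl⟩ ⟨s, hs⟩
      rw [mul_assoc, mul_assoc] at hs
      obtain ⟨t, ht⟩ := hmin (a * r) ⟨r, rfl⟩ ⟨s, gen_cancel hs⟩
      exact ⟨t, by rw [mul_assoc, ht, ← mul_assoc]⟩
    intro x a b hl ha hb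
    by_cases h1 : a = 1
    · subst h1; exact ⟨b, by simp, dvd_rfl, fun y _ h => h⟩
    by_cases h2 : b = 1
    · subst h2; exact ⟨a, dvd_rfl, by simp, fun y h _ => h⟩
    obtain ⟨i, a, rfl⟩ := exists_gen_mul h1
    obtain ⟨j, b, rfl⟩ := exists_gen_mul h2
    -- `gen i * cpl i j` divides every common multiple of the two elements
    have hc : ∀ y, gen i * a ∣ y → gen j * b ∣ y → gen i * cpl i j ∣ y := by
      rintro y ⟨r, rfl⟩ ⟨s, hs⟩
      rw [mul_assoc, mul_assoc] at hs
      obtain ⟨w, hw, -⟩ := garside hs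
      exact ⟨w, by rw [mul_assoc, hw, mul_assoc]⟩
    have hx := hc x ha hb
    obtain ⟨p, hp1, hp2, hp3⟩ := key i a (cpl i j) x hl ha hx
    obtain ⟨q, hq1, hq2, hq3⟩ := key j b (cpl j i) x hl hb (gen_mul_cpl i j ▸ hx)
    have hpx := hp3 x ha hx
    have hqx := hq3 x hb (gen_mul_cpl i j ▸ hx)
    rw [← gen_mul_cpl i j] at hq2
    obtain ⟨q', hq'⟩ := hq2
    rw [mul_assoc] at hq'
    rw [hq'] at hqx hq1
    obtain ⟨l, hl1, hl2, hl3⟩ := key i p (cpl i j * q') x hl hpx hqx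
    refine ⟨gen i * l, hp1.trans hl1, hq1.trans hl2, fun y hy1 hy2 => ?_⟩
    have hy := hc y hy1 hy2
    refine hl3 y (hp3 y hy1 hy) ?_
    rw [← hq']
    exact hq3 y hy2 (gen_mul_cpl i j ▸ hy)

/-! ### A central element of the positive braid monoid -/

/-- The generators indexed by natural numbers, with junk value `1` out of range. -/
def sg (m : ℕ) (i : ℕ) : BM m := if h : i < m then gen ⟨i, h⟩ else 1

lemma sg_comm {i j : ℕ} (h : i + 1 < j) : sg m i * sg m j = sg m j * sg m i := by
  by_cases hj : j < m
  · have hi : i < m := by omega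
    simp only [sg, hi, hj, dif_pos]
    exact gen_comm (by simp only [Adj]; omega)
  · simp [sg, hj]

lemma sg_braid {i : ℕ} (h : i + 1 < m) :
    sg m i * sg m (i + 1) * sg m i = sg m (i + 1) * sg m i * sg m (i + 1) := by
  have hi : i < m := by omega
  simp only [sg, hi, h, dif_pos]
  exact gen_braid (Or.inl rfl)

/-- The product of the first `k` generators. -/
def dl (m : ℕ) : ℕ → BM m
  | 0 => 1
  | k + 1 => dl m k * sg m k

/-- The product of the `k` generators following the first one. -/
def dl' (m : ℕ) : ℕ → BM m
  | 0 => 1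
  | k + 1 => dl' m k * sg m (k + 1)

lemma dl_comm {k j : ℕ} (h : k < j) : dl m k * sg m j = sg m j * dl m k := by
  induction k with
  | zero => simp [dl]
  | succ k ih =>
    rw [dl, mul_assoc, sg_comm (by omega), ← mul_assoc, ih (by omega), mul_assoc]

lemma dl_shift {i k : ℕ} (h : i + 2 ≤ k) (hk : k ≤ m) :
    dl m k * sg m i = sg m (i + 1) * dl m k := by
  induction k, h using Nat.le_induction with
  | base =>
    rw [dl, dl, mul_assoc, mul_assoc, ← mul_assoc (sg m i), sg_braid (by omega), ← mul_assoc,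
      ← mul_assoc, dl_comm (by omega)]
    simp only [mul_assoc]
  | succ k h ih =>
    rw [dl, mul_assoc, ← sg_comm (by omega), ← mul_assoc, ih (by omega), mul_assoc]

lemma dl_mul_dl {j : ℕ} (h : j + 1 ≤ m) : dl m m * dl m j = dl' m j * dl m m := by
  induction j with
  | zero => simp [dl, dl']
  | succ j ih =>
    rw [dl, dl', ← mul_assoc, ih (by omega), mul_assoc, dl_shift (by omega) le_rfl, mul_assoc]

lemma dl_succ' (k : ℕ) : dl m (k + 1) = sg m 0 * dl' m k := by
  induction k with
  | zero => simp [dl, dl']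
  | succ k ih => rw [dl, ih, dl', mul_assoc]

/-- Conjugation by the square of `σ₁ ⋯ σ_m` takes the last generator to the first. -/
lemma dl_sq {k : ℕ} (h : m = k + 1) : dl m m ^ 2 * sg m k = sg m 0 * dl m m ^ 2 := by
  have h1 : dl m m = dl m k * sg m k := by rw [h, dl]
  have h2 : dl m m = sg m 0 * dl' m k := by rw [← dl_succ', ← h]
  have h3 : dl m m * dl m m = dl' m k * dl m m * sg m k := by
    calc dl m m * dl m m = dl m m * (dl m k * sg m k) := congrArg _ h1
      _ = dl m m * dl m k * sg m k := (mul_assoc _ _ _).symm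
      _ = dl' m k * dl m m * sg m k := by rw [dl_mul_dl (by omega)]
  rw [sq]
  calc dl m m * dl m m * sg m k = sg m 0 * dl' m k * dl m m * sg m k := by rw [← h2]
    _ = sg m 0 * (dl' m k * dl m m * sg m k) := by simp only [mul_assoc]
    _ = sg m 0 * (dl m m * dl m m) := by rw [h3]

lemma dl_pow_shift {i j : ℕ} (h : i + j < m) :
    dl m m ^ j * sg m i = sg m (i + j) * dl m m ^ j := by
  induction j with
  | zero => simp
  | succ j ih =>
    rw [pow_succ', mul_assoc, ih (by omega), ← mul_assoc, dl_shift (by omega) le_rfl, mul_assoc]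
    rfl

/-- The full twist `(σ₁ ⋯ σ_m) ^ (m + 1)`. -/
def zt (m : ℕ) : BM m := dl m m ^ (m + 1)

lemma zt_comm_gen (i : Fin m) : zt m * gen i = gen i * zt m := by
  have hg : gen i = sg m i := by simp [sg]
  have := i.isLt
  obtain ⟨k, rfl⟩ : ∃ k, m = k + 1 := ⟨m - 1, by omega⟩
  have e : zt (k + 1) = dl (k + 1) (k + 1) ^ (i : ℕ) * dl (k + 1) (k + 1) ^ 2 *
      dl (k + 1) (k + 1) ^ (k - i) := by
    rw [zt, ← pow_add, ← pow_add]; congr 1; omega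
  have h1 := dl_pow_shift (m := k + 1) (i := i) (j := k - i) (by omega)
  have h2 := dl_pow_shift (m := k + 1) (i := 0) (j := i) (by omega)
  rw [show (i : ℕ) + (k - i) = k by omega] at h1
  rw [zero_add] at h2
  rw [hg, e, mul_assoc, h1, ← mul_assoc, mul_assoc _ _ (sg (k + 1) k), dl_sq rfl, ← mul_assoc, h2]
  simp only [mul_assoc]

lemma zt_comm (a : BM m) : zt m * a = a * zt m := by
  induction a using BM.rec_gen with
  | one => simp
  | mul i a ih => rw [← mul_assoc, zt_comm_gen, mul_assoc, ih, mul_assoc]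

lemma gen_dvd_zt (i : Fin m) : gen i ∣ zt m := by
  have hg : gen i = sg m i := by simp [sg]
  have := i.isLt
  obtain ⟨k, rfl⟩ : ∃ k, m = k + 1 := ⟨m - 1, by omega⟩
  have h2 := dl_pow_shift (m := k + 1) (i := 0) (j := i) (by omega)
  rw [zero_add] at h2
  refine ⟨dl (k + 1) (k + 1) ^ (i : ℕ) * dl' (k + 1) k * dl (k + 1) (k + 1) ^ (k + 1 - i), ?_⟩
  rw [hg, ← mul_assoc, ← mul_assoc, ← h2, mul_assoc (_ ^ _) (sg _ _), ← dl_succ', ← pow_succ,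
    ← pow_add, zt]
  congr 1; omega

lemma dvd_zt_pow (a : BM m) : ∃ k, a ∣ zt m ^ k := by
  induction a using BM.rec_gen with
  | one => exact ⟨0, by simp⟩
  | mul i a ih =>
    obtain ⟨k, c, hc⟩ := ih
    obtain ⟨d, hd⟩ := gen_dvd_zt i
    refine ⟨k + 1, c * d, ?_⟩
    have hk : zt m ^ k * d = d * zt m ^ k := (show Commute (zt m) d from zt_comm d).pow_left k
    calc zt m ^ (k + 1) = zt m * zt m ^ k := pow_succ' _ _
      _ = gen i * (d * zt m ^ k) := by rw [← mul_assoc, ← hd]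
      _ = gen i * (a * c * d) := by rw [← hc, hk]
      _ = gen i * a * (c * d) := by simp only [mul_assoc]

lemma exists_lcm (a b : BM m) :
    ∃ l, a ∣ l ∧ b ∣ l ∧ ∀ y, a ∣ y → b ∣ y → l ∣ y := by
  obtain ⟨k, hk⟩ := dvd_zt_pow a
  obtain ⟨l, hl⟩ := dvd_zt_pow b
  refine exists_lcm_aux _ (zt m ^ (k + l)) a b le_rfl ?_ ?_
  · rw [pow_add]; exact dvd_mul_of_dvd_left hk _
  · rw [add_comm, pow_add]; exact dvd_mul_of_dvd_left hl _

/-! ### The positive monoid embeds in the braid group -/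

instance oreSetZt (m : ℕ) : OreLocalization.OreSet (Submonoid.powers (zt m)) where
  ore_right_cancel r₁ r₂ s h := by
    refine ⟨s, ?_⟩
    obtain ⟨_, k, rfl⟩ := s
    have hc : ∀ r : BM m, zt m ^ k * r = r * zt m ^ k := fun r => Commute.pow_left (zt_comm r) k
    simpa only [hc] using h
  oreNum r _ := r
  oreDenom _ s := s
  ore_eq r s := by
    obtain ⟨_, k, rfl⟩ := s
    exact Commute.pow_left (zt_comm r) k

/-- The localization of the positive monoid at its central element `zt m`. -/
abbrev Loc (m : ℕ) := OreLocalization (Submonoid.powers (zt m)) (BM m)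

lemma numeratorHom_injective (m : ℕ) :
    Function.Injective (OreLocalization.numeratorHom : BM m →* Loc m) := by
  intro a b h
  obtain ⟨u, v, h1, h2⟩ := OreLocalization.oreDiv_eq_iff.1 h
  simp only [OneMemClass.coe_one, mul_one] at h2
  rw [← h2] at h1
  exact (mul_cancel _ h1).symm

lemma isUnit_gen (i : Fin m) :
    IsUnit (OreLocalization.numeratorHom (gen i) : Loc m) := by
  obtain ⟨t, ht⟩ := gen_dvd_zt i
  have hc : Commute (gen i) t := by
    refine mul_cancel (gen i) ?_
    rw [← ht, ← zt_comm_gen, ← mul_assoc, ← ht]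
  have h : IsUnit (OreLocalization.numeratorHom (zt m) : Loc m) :=
    OreLocalization.numerator_isUnit (⟨zt m, 1, by simp⟩ : Submonoid.powers (zt m))
  have e : (OreLocalization.numeratorHom (zt m) : Loc m) =
      OreLocalization.numeratorHom (gen i) * OreLocalization.numeratorHom t := by
    rw [← map_mul]; exact congrArg _ ht
  rw [e] at h
  exact (((hc.map _).isUnit_mul_iff).1 h).1

variable {n : ℕ}

lemma σ_comm {i j : Fin (n - 1)} (h : (i : ℕ) + 1 < j) : σ i * σ j = (σ j * σ i : B n) := by
  have : (PresentedGroup.mk (braidRels (n - 1)) (FreeGroup.of i * FreeGroup.of j *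
      (FreeGroup.of i)⁻¹ * (FreeGroup.of j)⁻¹)) = 1 :=
    PresentedGroup.one_of_mem (Or.inl ⟨i, j, h, rfl⟩)
  have h2 : (σ i * σ j * (σ i)⁻¹ * (σ j)⁻¹ : B n) = 1 := this
  rw [mul_inv_eq_one, mul_inv_eq_iff_eq_mul] at h2
  exact h2

lemma σ_braid {i j : Fin (n - 1)} (h : (i : ℕ) + 1 = j) :
    σ i * σ j * σ i = (σ j * σ i * σ j : B n) := by
  have : (PresentedGroup.mk (braidRels (n - 1)) (FreeGroup.of i * FreeGroup.of j *
      FreeGroup.of i * (FreeGroup.of j)⁻¹ * (FreeGroup.of i)⁻¹ * (FreeGroup.of j)⁻¹)) = 1 :=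
    PresentedGroup.one_of_mem (Or.inr ⟨i, j, h, rfl⟩)
  have h2 : (σ i * σ j * σ i * (σ j)⁻¹ * (σ i)⁻¹ * (σ j)⁻¹ : B n) = 1 := this
  rw [mul_inv_eq_one, mul_inv_eq_iff_eq_mul, mul_inv_eq_iff_eq_mul] at h2
  exact h2

/-- The universal property of the braid group. -/
lemma lift_rels {G : Type*} [Group G] (f : Fin (n - 1) → G)
    (h1 : ∀ i j : Fin (n - 1), (i : ℕ) + 1 < j → f i * f j = f j * f i)
    (h2 : ∀ i j : Fin (n - 1), (i : ℕ) + 1 = j → f i * f j * f i = f j * f i * f j) :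
    ∃ F : B n →* G, ∀ i, F (σ i) = f i := by
  have hr : ∀ r ∈ braidRels (n - 1), FreeGroup.lift f r = 1 := by
    rintro r (⟨i, j, h, rfl⟩ | ⟨i, j, h, rfl⟩)
    · simp [h1 i j h]
    · simp [h2 i j h]
  exact ⟨PresentedGroup.toGroup hr, fun i => PresentedGroup.toGroup.of hr⟩

/-- The canonical map from the positive monoid to the braid group. -/
def inc (n : ℕ) : BM (n - 1) →* B n :=
  PresentedMonoid.lift σ (by
    rintro a b (⟨i, j, h, rfl, rfl⟩ | ⟨i, j, h, rfl, rfl⟩)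
    · simpa using σ_comm h
    · simpa using σ_braid h)

@[simp] lemma inc_gen (i : Fin (n - 1)) : inc n (gen i) = σ i := rfl

lemma inc_injective : Function.Injective (inc n) := by
  have hu : ∀ i, ((isUnit_gen i).unit : Loc (n - 1)) = OreLocalization.numeratorHom (gen i) :=
    fun i => rfl
  obtain ⟨F, hF⟩ := lift_rels (n := n) (fun i => (isUnit_gen i).unit)
    (by
      intro i j h
      ext
      rw [Units.val_mul, Units.val_mul, hu, hu, ← map_mul, ← map_mul,
        gen_comm (by unfold Adj; omega)])
    (by
      intro i j h
      ext
      simp only [Units.val_mul, hu, ← map_mul]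
      rw [gen_braid (Or.inl h)])
  have hc : ∀ a, ((F (inc n a) : (Loc (n - 1))ˣ) : Loc (n - 1)) =
      OreLocalization.numeratorHom a := by
    intro a
    induction a using BM.rec_gen with
    | one => rw [map_one, map_one, map_one]; rfl
    | mul i a ih => rw [map_mul, map_mul, map_mul, Units.val_mul, ih, inc_gen, hF, hu]
  intro a b h
  apply numeratorHom_injective
  rw [← hc, ← hc, h]

lemma mem_P_iff {g : B n} : g ∈ P n ↔ ∃ a, inc n a = g := by
  constructor
  · intro h
    induction h using Submonoid.closure_induction with
    | mem x hx => obtain ⟨i, rfl⟩ := hx; exact ⟨gen i, rfl⟩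
    | one => exact ⟨1, map_one _⟩
    | mul x y _ _ hx hy =>
      obtain ⟨a, rfl⟩ := hx
      obtain ⟨b, rfl⟩ := hy
      exact ⟨a * b, map_mul _ _ _⟩
  · rintro ⟨a, rfl⟩
    induction a using BM.rec_gen with
    | one => rw [map_one]; exact one_mem _
    | mul i a ih =>
      rw [map_mul]
      exact mul_mem (Submonoid.subset_closure ⟨i, rfl⟩) ih

@[elab_as_elim]
lemma B_induction {p : B n → Prop} (one : p 1) (mul : ∀ i g, p g → p (σ i * g))
    (inv_mul : ∀ i g, p g → p ((σ i)⁻¹ * g)) (g : B n) : p g := by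
  have hg : g ∈ Subgroup.closure (Set.range (σ (n := n))) := by
    have : Subgroup.closure (Set.range (σ (n := n))) = ⊤ :=
      PresentedGroup.closure_range_of (braidRels (n - 1))
    rw [this]; trivial
  induction hg using Subgroup.closure_induction_left with
  | one => exact one
  | mul_left x hx y _ h => obtain ⟨i, rfl⟩ := hx; exact mul i y h
  | inv_mul_cancel x hx y _ h => obtain ⟨i, rfl⟩ := hx; exact inv_mul i y h

lemma inc_zt_comm (g : B n) : inc n (zt (n - 1)) * g = g * inc n (zt (n - 1)) := by
  have h1 : ∀ i, Commute (inc n (zt (n - 1))) (σ i) := fun i => by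
    rw [← inc_gen]; exact Commute.map (zt_comm_gen i) _
  change Commute _ _
  induction g using B_induction with
  | one => exact Commute.one_right _
  | mul i g ih => exact (h1 i).mul_right ih
  | inv_mul i g ih => exact ((h1 i).inv_right).mul_right ih

lemma exists_pow_mul_mem (g : B n) : ∃ k : ℕ, inc n (zt (n - 1)) ^ k * g ∈ P n := by
  have hz : inc n (zt (n - 1)) ∈ P n := mem_P_iff.2 ⟨_, rfl⟩
  induction g using B_induction with
  | one => exact ⟨0, by simp⟩
  | mul i g ih =>
    obtain ⟨k, hk⟩ := ih
    refine ⟨k, ?_⟩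
    rw [← mul_assoc, (show Commute _ (σ i) from inc_zt_comm (σ i)).pow_left k |>.eq, mul_assoc]
    exact mul_mem (Submonoid.subset_closure ⟨i, rfl⟩) hk
  | inv_mul i g ih =>
    obtain ⟨k, hk⟩ := ih
    obtain ⟨t, ht⟩ := gen_dvd_zt i
    refine ⟨k + 1, ?_⟩
    have h2 : inc n (zt (n - 1)) * (σ i)⁻¹ = inc n t := by
      rw [inc_zt_comm, ht, map_mul, inc_gen, inv_mul_cancel_left]
    rw [pow_succ, mul_assoc, ← mul_assoc _ _ g, h2, ← mul_assoc,
      (show Commute _ (inc n t) from inc_zt_comm _).pow_left k |>.eq, mul_assoc]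
    exact mul_mem (mem_P_iff.2 ⟨t, rfl⟩) hk

/-- The braid group, ordered by `a ≤ b ↔ a⁻¹ * b ∈ P n`, has binary joins. -/
lemma exists_sup (a b : B n) : ∃ c, a⁻¹ * c ∈ P n ∧ b⁻¹ * c ∈ P n ∧
    ∀ d, a⁻¹ * d ∈ P n → b⁻¹ * d ∈ P n → c⁻¹ * d ∈ P n := by
  obtain ⟨k, hk⟩ := exists_pow_mul_mem a
  obtain ⟨l, hl⟩ := exists_pow_mul_mem b
  set z := inc n (zt (n - 1)) with hz
  have hzP : z ∈ P n := mem_P_iff.2 ⟨_, rfl⟩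
  obtain ⟨a', ha⟩ := mem_P_iff.1 (mul_mem (pow_mem hzP l) hk)
  obtain ⟨b', hb⟩ := mem_P_iff.1 (mul_mem (pow_mem hzP k) hl)
  rw [← mul_assoc, ← pow_add] at ha hb
  rw [add_comm] at ha
  obtain ⟨c, ⟨p, hp⟩, ⟨q, hq⟩, hc⟩ := exists_lcm a' b'
  refine ⟨(z ^ (k + l))⁻¹ * inc n c, ?_, ?_, fun d h1 h2 => ?_⟩
  · rw [hp, map_mul, ha]; simp only [mul_assoc, inv_mul_cancel_left]; exact mem_P_iff.2 ⟨_, rfl⟩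
  · rw [hq, map_mul, hb]; simp only [mul_assoc, inv_mul_cancel_left]; exact mem_P_iff.2 ⟨_, rfl⟩
  · obtain ⟨x, hx⟩ := mem_P_iff.1 h1
    obtain ⟨y, hy⟩ := mem_P_iff.1 h2
    have hxd : inc n (a' * x) = z ^ (k + l) * d := by rw [map_mul, ha, hx]; group
    have hyd : inc n (b' * y) = z ^ (k + l) * d := by rw [map_mul, hb, hy]; group
    obtain ⟨t, ht⟩ := hc (a' * x) ⟨x, rfl⟩ ⟨y, inc_injective (hxd.trans hyd.symm)⟩
    refine mem_P_iff.2 ⟨t, ?_⟩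
    rw [ht, map_mul] at hxd
    rw [mul_inv_rev, inv_inv, mul_assoc, ← hxd, inv_mul_cancel_left]

/-! ### Coarse geodesics in Helly metric spaces -/

section Metric

variable {X : Type*} (D : X → X → ℕ)

/-- Functions dominating the distance: the functions of which the minimal ones form the
injective hull of the metric space. -/
def Adm (f : X → ℝ) : Prop := ∀ a b, (D a b : ℝ) ≤ f a + f b

/-- The conjugate of a function with respect to the distance. -/
noncomputable def star (f : X → ℝ) (x : X) : ℝ := ⨆ a, ((D x a : ℝ) - f a)

/-- One averaging step towards a minimal admissible function. -/
noncomputable def avg (f : X → ℝ) (x : X) : ℝ := (f x + star D f x) / 2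

variable {D}

lemma Adm.bdd {f : X → ℝ} (hf : Adm D f) (x : X) :
    BddAbove (Set.range fun a => (D x a : ℝ) - f a) := by
  refine ⟨f x, ?_⟩
  rintro _ ⟨a, rfl⟩
  have := hf x a
  dsimp only
  linarith

lemma Adm.le_star {f : X → ℝ} (hf : Adm D f) (x a : X) : (D x a : ℝ) - f a ≤ star D f x :=
  le_ciSup (hf.bdd x) a

lemma star_le {f : X → ℝ} {x : X} {c : ℝ} (h : ∀ a, (D x a : ℝ) - f a ≤ c) : star D f x ≤ c :=
  have : Nonempty X := ⟨x⟩
  ciSup_le h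

lemma Adm.star_le_self {f : X → ℝ} (hf : Adm D f) (x : X) : star D f x ≤ f x :=
  star_le fun a => by linarith [hf x a]

lemma Adm.avg_le {f : X → ℝ} (hf : Adm D f) (x : X) : avg D f x ≤ f x := by
  have := hf.star_le_self x
  unfold avg; linarith

lemma Adm.avg {f : X → ℝ} (hD : ∀ a b, D a b = D b a) (hf : Adm D f) : Adm D (avg D f) := by
  intro a b
  have h1 := hf.le_star a b
  have h2 := hf.le_star b a
  rw [hD b a] at h2
  unfold TwistedBraid.avg; linarith

lemma avg_sub_le {f g : X → ℝ} (hg : Adm D g) {c : ℝ}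
    (h : ∀ x, |f x - g x| ≤ c) (x : X) : avg D f x - avg D g x ≤ c := by
  have h1 := (abs_le.1 (h x)).2
  have h2 : star D f x ≤ star D g x + c := star_le fun a => by
    have := hg.le_star x a
    have := (abs_le.1 (h a)).1
    linarith
  unfold avg; linarith

lemma abs_avg_sub_le {f g : X → ℝ} (hf : Adm D f) (hg : Adm D g) {c : ℝ}
    (h : ∀ x, |f x - g x| ≤ c) (x : X) : |avg D f x - avg D g x| ≤ c := by
  refine abs_le.2 ⟨?_, avg_sub_le hg h x⟩
  have := avg_sub_le hf (f := g) (c := c) (fun x => by rw [abs_sub_comm]; exact h x) x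
  linarith

/-- Averaging halves the defect of minimality. -/
lemma defect_avg {f : X → ℝ} (hf : Adm D f) {e : ℝ} (h : ∀ x, f x - star D f x ≤ e)
    (hf' : Adm D (avg D f)) (x : X) : avg D f x - star D (avg D f) x ≤ e / 2 := by
  have h1 : star D f x ≤ star D (avg D f) x := star_le fun a => by
    have := hf'.le_star x a
    have := hf.avg_le a
    linarith
  have := h x
  unfold avg at *; linarith

lemma star_comp {f : X → ℝ} (φ : X ≃ X) (hφ : ∀ a b, D (φ a) (φ b) = D a b) (x : X) :
    star D (fun a => f (φ a)) x = star D f (φ x) := by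
  unfold star
  rw [← φ.iSup_comp (g := fun a => (D (φ x) a : ℝ) - f a)]
  simp only [hφ]

lemma avg_comp {f : X → ℝ} (φ : X ≃ X) (hφ : ∀ a b, D (φ a) (φ b) = D a b) :
    avg D (fun a => f (φ a)) = fun x => avg D f (φ x) := by
  funext x
  unfold avg
  rw [star_comp φ hφ]

lemma iter_comp {f : X → ℝ} (φ : X ≃ X) (hφ : ∀ a b, D (φ a) (φ b) = D a b) (k : ℕ) :
    (avg D)^[k] (fun a => f (φ a)) = fun x => (avg D)^[k] f (φ x) := by
  induction k with
  | zero => rfl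
  | succ k ih => rw [Function.iterate_succ_apply', Function.iterate_succ_apply', ih, avg_comp φ hφ]

lemma Adm.iter (hD : ∀ a b, D a b = D b a) {f : X → ℝ} (hf : Adm D f) (k : ℕ) : Adm D ((TwistedBraid.avg D)^[k] f) := by
  induction k with
  | zero => exact hf
  | succ k ih => rw [Function.iterate_succ_apply']; exact ih.avg hD

lemma Adm.iter_le (hD : ∀ a b, D a b = D b a) {f : X → ℝ} (hf : Adm D f) (k : ℕ) (x : X) :
    (TwistedBraid.avg D)^[k] f x ≤ f x := by
  induction k with
  | zero => exact le_rfl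
  | succ k ih =>
    rw [Function.iterate_succ_apply']
    exact ((hf.iter hD k).avg_le x).trans ih

lemma abs_iter_sub_le (hD : ∀ a b, D a b = D b a) {f g : X → ℝ} (hf : Adm D f) (hg : Adm D g) {c : ℝ}
    (h : ∀ x, |f x - g x| ≤ c) (k : ℕ) :
    ∀ x, |(avg D)^[k] f x - (avg D)^[k] g x| ≤ c := by
  induction k with
  | zero => exact h
  | succ k ih =>
    rw [Function.iterate_succ_apply', Function.iterate_succ_apply']
    exact abs_avg_sub_le (hf.iter hD k) (hg.iter hD k) ih

lemma defect_iter (hD : ∀ a b, D a b = D b a) {f : X → ℝ} (hf : Adm D f) {e : ℝ} (h : ∀ x, f x - star D f x ≤ e) (k : ℕ) :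
    ∀ x, (avg D)^[k] f x - star D ((avg D)^[k] f) x ≤ e / 2 ^ k := by
  induction k with
  | zero => simpa using h
  | succ k ih =>
    rw [Function.iterate_succ_apply', pow_succ, ← div_div]
    exact defect_avg (hf.iter hD k) ih ((hf.iter hD k).avg hD)

/-- In a metric space with integer distances whose balls have the Helly property, two points
moved at most `R` by an isometry are joined by a coarse path of points moved at most `R + 3`.
The path is an approximate conical geodesic: its points are approximate centres for averaged
convex combinations of the distance functions of the end points, and this construction commutes
with isometries. -/
lemma exists_path (hD : ∀ a b, D a b = D b a) (h0 : ∀ a, D a a = 0) (htri : ∀ a b c, D a c ≤ D a b + D b c)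
    (helly : ∀ h : X → ℕ, (∀ a b, D a b ≤ h a + h b) → ∃ w, ∀ a, D w a ≤ h a)
    (φ : X ≃ X) (hφ : ∀ a b, D (φ a) (φ b) = D a b) {y z : X} {R : ℕ}
    (hy : D y (φ y) ≤ R) (hz : D z (φ z) ≤ R) :
    Relation.ReflTransGen (fun a b => D a b ≤ 4 ∧ D a (φ a) ≤ R + 3 ∧ D b (φ b) ≤ R + 3) y z := by
  obtain ⟨N, hN⟩ : ∃ N, N = D y z + 1 := ⟨_, rfl⟩
  have hN0 : (0 : ℝ) < N := by rw [hN]; positivity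
  have hNr : (N : ℝ) = D y z + 1 := by rw [hN]; push_cast; rfl
  have tri : ∀ a b c, (D a c : ℝ) ≤ D a b + D b c := fun a b c => by exact_mod_cast htri a b c
  have nn : ∀ a b, (0 : ℝ) ≤ D a b := fun a b => Nat.cast_nonneg _
  have sym : ∀ a b, (D a b : ℝ) = D b a := fun a b => by rw [hD]
  let f : ℕ → X → ℝ := fun i a => (1 - i / N) * D y a + (i / N) * D z a
  have hw : ∀ i ≤ N, (0 : ℝ) ≤ i / N ∧ (i : ℝ) / N ≤ 1 := fun i hi =>
    ⟨by positivity, (div_le_one hN0).2 (by exact_mod_cast hi)⟩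
  have hadm : ∀ i ≤ N, Adm D (f i) := fun i hi a b => by
    obtain ⟨h1, h2⟩ := hw i hi
    have e1 := tri a y b
    have e2 := tri a z b
    rw [sym a y] at e1
    rw [sym a z] at e2
    simp only [f]
    nlinarith
  have hdef : ∀ i ≤ N, ∀ x, f i x - star D (f i) x ≤ 2 * N := fun i hi x => by
    obtain ⟨h1, h2⟩ := hw i hi
    have e := (hadm i hi).le_star x y
    have e1 := tri z y x
    have e2 := sym x y
    have e3 := sym z y
    have e4 : (D y y : ℝ) = 0 := by rw [h0]; simp
    simp only [f] at e ⊢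
    have := nn y z
    nlinarith
  obtain ⟨k, hk⟩ := pow_unbounded_of_one_lt (2 * N : ℝ) (one_lt_two)
  set F : ℕ → X → ℝ := fun i => (avg D)^[k] (f i) with hF
  have hFadm : ∀ i ≤ N, Adm D (F i) := fun i hi => (hadm i hi).iter hD k
  have hFdef : ∀ i ≤ N, ∀ x, F i x - star D (F i) x ≤ 1 := fun i hi x =>
    (defect_iter hD (hadm i hi) (hdef i hi) k x).trans ((div_le_one (by positivity)).2 hk.le)
  have hcen : ∀ i, ∃ w, i ≤ N → ∀ a, (D w a : ℝ) ≤ F i a + 1 := fun i => by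
    by_cases hi : i ≤ N
    · obtain ⟨w, hw⟩ := helly (fun a => ⌈F i a⌉₊) fun a b => by
        have h1 := hFadm i hi a b
        have h2 := Nat.le_ceil (F i a)
        have h3 := Nat.le_ceil (F i b)
        exact_mod_cast (by linarith : (D a b : ℝ) ≤ ⌈F i a⌉₊ + ⌈F i b⌉₊)
      refine ⟨w, fun _ a => ?_⟩
      have h1 : (0 : ℝ) ≤ F i a := by
        have := hFadm i hi a a
        rw [h0] at this
        push_cast at this
        linarith
      have h2 := (Nat.ceil_lt_add_one h1).le
      have h3 : (D w a : ℝ) ≤ ⌈F i a⌉₊ := by exact_mod_cast hw a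
      linarith
    · exact ⟨y, fun h => absurd h hi⟩
  choose w hw' using hcen
  have hFw : ∀ i ≤ N, F i (w i) ≤ 2 := fun i hi => by
    have h1 := hFdef i hi (w i)
    have h2 : star D (F i) (w i) ≤ 1 := star_le fun a => by linarith [hw' i hi a]
    linarith
  have habs : ∀ a b c, |(D a c : ℝ) - D b c| ≤ D a b := fun a b c => by
    have e1 := tri a b c
    have e2 := tri b a c
    rw [sym b a] at e2
    exact abs_le.2 ⟨by linarith, by linarith⟩
  have hstep : ∀ i, i + 1 ≤ N → D (w i) (w (i + 1)) ≤ 4 := fun i hi => by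
    have h1 := hw' i (by omega) (w (i + 1))
    have h2 := hFw (i + 1) hi
    have h3 : |F i (w (i + 1)) - F (i + 1) (w (i + 1))| ≤ 1 := by
      refine abs_iter_sub_le hD (hadm i (by omega)) (hadm _ hi) (fun x => ?_) k _
      have e : f i x - f (i + 1) x = (D y x - D z x) / N := by
        simp only [f]; push_cast; field_simp; ring
      rw [e, abs_div, abs_of_pos hN0, div_le_one hN0]
      exact (habs y z x).trans (by rw [hNr]; linarith)
    have h4 := (abs_le.1 h3).2
    exact_mod_cast (by linarith : (D (w i) (w (i + 1)) : ℝ) ≤ 4)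
  have hdisp : ∀ i ≤ N, D (w i) (φ (w i)) ≤ R + 3 := fun i hi => by
    have h1 := hw' i hi (φ (w i))
    have h2 := hFw i hi
    have hadm' : Adm D (fun a => f i (φ a)) := fun a b => by
      rw [← hφ]; exact hadm i hi _ _
    have h3 := abs_iter_sub_le hD hadm' (hadm i hi) (c := R) (fun x => by
      have a1 : |(D y (φ x) : ℝ) - D y x| ≤ R := by
        rw [← hφ y x]
        exact (habs _ _ _).trans (by exact_mod_cast hy)
      have a2 : |(D z (φ x) : ℝ) - D z x| ≤ R := by
        rw [← hφ z x]
        exact (habs _ _ _).trans (by exact_mod_cast hz)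
      obtain ⟨h1, h2⟩ := hw i hi
      rw [abs_le] at a1 a2 ⊢
      simp only [f]
      constructor <;> nlinarith) k (w i)
    rw [iter_comp φ hφ] at h3
    have h4 := (abs_le.1 h3).2
    exact_mod_cast (by simp only [hF] at h1 h2; linarith : (D (w i) (φ (w i)) : ℝ) ≤ R + 3)
  have hpath : ∀ i ≤ N, Relation.ReflTransGen
      (fun a b => D a b ≤ 4 ∧ D a (φ a) ≤ R + 3 ∧ D b (φ b) ≤ R + 3) y (w i) := by
    intro i
    induction i with
    | zero =>
      intro hi
      refine Relation.ReflTransGen.single ⟨?_, by omega, hdisp 0 hi⟩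
      have h1 := hw' 0 hi y
      have h2 := (hadm 0 hi).iter_le hD k y
      have h3 : f 0 y = 0 := by simp [f, h0]
      rw [h3] at h2
      have h4 : (D (w 0) y : ℝ) ≤ 1 := by linarith
      have h5 : D (w 0) y ≤ 1 := by exact_mod_cast h4
      rw [hD]; omega
    | succ i ih =>
      intro hi
      exact (ih (by omega)).tail ⟨hstep i hi, hdisp i (by omega), hdisp _ hi⟩
  refine (hpath N le_rfl).tail ⟨?_, hdisp N le_rfl, by omega⟩
  have h1 := hw' N le_rfl z
  have h2 := (hadm N le_rfl).iter_le hD k z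
  have h3 : f N z = 0 := by simp [f, h0, hN0.ne']
  rw [h3] at h2
  have h4 : (D (w N) z : ℝ) ≤ 1 := by linarith
  have h5 : D (w N) z ≤ 1 := by exact_mod_cast h4
  omega

end Metric

/-! ### The metric of a group with a central Garside element -/

/-- A group whose order `a ≤ b ↔ a⁻¹ * b ∈ pos` has binary joins, with a central element `z`
whose powers are cofinal and a length function that is positive on the positive elements. -/
structure GarsideGroup (G : Type*) [Group G] where
  pos : Submonoid G
  z : G
  z_mem : z ∈ pos
  z_comm : ∀ g, Commute z g
  len : G → ℤ
  len_mul : ∀ a b, len (a * b) = len a + len b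
  len_nonneg : ∀ g ∈ pos, 0 ≤ len g
  eq_one_of_len : ∀ g ∈ pos, len g = 0 → g = 1
  exists_sup : ∀ a b, ∃ c, a⁻¹ * c ∈ pos ∧ b⁻¹ * c ∈ pos ∧
    ∀ d, a⁻¹ * d ∈ pos → b⁻¹ * d ∈ pos → c⁻¹ * d ∈ pos
  cofinal : ∀ g, ∃ k : ℕ, z ^ k * g ∈ pos

namespace GarsideGroup

section

variable {G : Type*} [Group G] (S : GarsideGroup G)

/-- The order of a Garside group. -/
def Le (a b : G) : Prop := a⁻¹ * b ∈ S.pos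

variable {S}

lemma len_one : S.len 1 = 0 := by
  have := S.len_mul 1 1
  rw [mul_one] at this
  omega

lemma len_inv (a : G) : S.len a⁻¹ = - S.len a := by
  have := S.len_mul a⁻¹ a
  rw [inv_mul_cancel, len_one] at this
  omega

lemma Le.trans {a b c : G} (h : S.Le a b) (h' : S.Le b c) : S.Le a c := by
  have := mul_mem h h'
  rwa [mul_assoc, mul_inv_cancel_left] at this

lemma Le.refl (a : G) : S.Le a a := by
  unfold Le; rw [inv_mul_cancel]; exact one_mem _

lemma Le.len_le {a b : G} (h : S.Le a b) : S.len a ≤ S.len b := by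
  have := S.len_nonneg _ h
  rw [S.len_mul, len_inv] at this
  omega

lemma Le.eq_of_len {a b : G} (h : S.Le a b) (hl : S.len b ≤ S.len a) : a = b := by
  have h2 := h.len_le
  have := S.eq_one_of_len _ h (by rw [S.len_mul, len_inv]; omega)
  exact inv_mul_eq_one.1 this

lemma Le.antisymm {a b : G} (h : S.Le a b) (h' : S.Le b a) : a = b := h.eq_of_len h'.len_le

lemma le_mul_left_iff (c : G) {a b : G} : S.Le (c * a) (c * b) ↔ S.Le a b := by
  unfold Le
  rw [mul_inv_rev, mul_assoc, inv_mul_cancel_left]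

/-- Two families, one below the other, are separated by an element: the elements above some fixed
member of the lower family and below the upper family have bounded length, and a longest one
must lie above the whole lower family. -/
lemma exists_between {ι : Type*} [Nonempty ι] (s t : ι → G) (h : ∀ a b, S.Le (s a) (t b)) :
    ∃ w, ∀ a, S.Le (s a) w ∧ S.Le w (t a) := by
  obtain ⟨i⟩ := ‹Nonempty ι›
  obtain ⟨l, ⟨w, hw, hl⟩, hmax⟩ := Int.exists_greatest_of_bdd
    (P := fun l => ∃ c, (S.Le (s i) c ∧ ∀ b, S.Le c (t b)) ∧ S.len c = l)
    ⟨S.len (t i), by rintro _ ⟨c, hc, rfl⟩; exact (hc.2 i).len_le⟩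
    ⟨_, s i, ⟨Le.refl _, h i⟩, rfl⟩
  refine ⟨w, fun a => ⟨?_, hw.2 a⟩⟩
  obtain ⟨d, h1, h2, h3⟩ := S.exists_sup w (s a)
  have hd := hmax _ ⟨d, ⟨hw.1.trans h1, fun b => h3 _ (hw.2 b) (h a b)⟩, rfl⟩
  rw [← Le.eq_of_len (S := S) h1 (by omega)] at h2
  exact h2

variable (S)

/-- The ball of radius `k` about `1` of the metric defined by the powers of `z`. -/
def Bd (k : ℕ) (g : G) : Prop := S.z ^ k * g ∈ S.pos ∧ S.z ^ k * g⁻¹ ∈ S.pos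

variable {S}

lemma zpow_comm (k : ℕ) (g : G) : S.z ^ k * g = g * S.z ^ k := ((S.z_comm g).pow_left k).eq

lemma Bd.mono {k l : ℕ} {g : G} (h : S.Bd k g) (hkl : k ≤ l) : S.Bd l g := by
  obtain ⟨j, rfl⟩ := Nat.exists_eq_add_of_le' hkl
  unfold Bd
  rw [pow_add, mul_assoc, mul_assoc]
  exact ⟨mul_mem (pow_mem S.z_mem _) h.1, mul_mem (pow_mem S.z_mem _) h.2⟩

lemma exists_bd (S : GarsideGroup G) (g : G) : ∃ k, S.Bd k g := by
  obtain ⟨k, hk⟩ := S.cofinal g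
  obtain ⟨l, hl⟩ := S.cofinal g⁻¹
  refine ⟨k + l, ?_, ?_⟩
  · rw [add_comm, pow_add, mul_assoc]
    exact mul_mem (pow_mem S.z_mem _) hk
  · rw [pow_add, mul_assoc]
    exact mul_mem (pow_mem S.z_mem _) hl

lemma bd_one : S.Bd 0 1 := by simp [Bd, one_mem]

lemma Bd.inv {k : ℕ} {g : G} (h : S.Bd k g) : S.Bd k g⁻¹ := by
  unfold Bd; rw [inv_inv]; exact ⟨h.2, h.1⟩

lemma Bd.mul {k l : ℕ} {g h : G} (hg : S.Bd k g) (hh : S.Bd l h) : S.Bd (k + l) (g * h) := by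
  constructor
  · have := mul_mem hg.1 hh.1
    rwa [mul_assoc, ← mul_assoc g, ← zpow_comm, mul_assoc, ← mul_assoc, ← pow_add] at this
  · have := mul_mem hh.2 hg.2
    rwa [mul_assoc, ← mul_assoc h⁻¹, ← zpow_comm, mul_assoc, ← mul_assoc, ← pow_add, ← mul_inv_rev,
      add_comm] at this

variable (S)

open Classical in
/-- The distance: the least `k` with `a * z⁻ᵏ ≤ b ≤ a * zᵏ`. -/
noncomputable def dist (a b : G) : ℕ := Nat.find (S.exists_bd (a⁻¹ * b))

variable {S}

lemma dist_le {a b : G} {k : ℕ} : S.dist a b ≤ k ↔ S.Bd k (a⁻¹ * b) := by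
  classical
  constructor
  · exact fun h => (Nat.find_spec (S.exists_bd (a⁻¹ * b))).mono h
  · exact fun h => Nat.find_min' _ h

lemma dist_self (a : G) : S.dist a a = 0 := by
  rw [← Nat.le_zero, dist_le, inv_mul_cancel]; exact bd_one

lemma dist_comm (a b : G) : S.dist a b = S.dist b a := by
  have h : ∀ a b, S.dist a b ≤ S.dist b a := fun a b => by
    rw [dist_le]
    have := (dist_le.1 (le_refl (S.dist b a))).inv
    rwa [mul_inv_rev, inv_inv] at this
  exact le_antisymm (h _ _) (h _ _)

lemma dist_tri (a b c : G) : S.dist a c ≤ S.dist a b + S.dist b c := by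
  have := (dist_le.1 (le_refl (S.dist a b))).mul (dist_le.1 (le_refl (S.dist b c)))
  rw [dist_le]
  rwa [mul_assoc, mul_inv_cancel_left] at this

/-- Balls have the Helly property, since a ball is an order interval. -/
lemma helly (h : G → ℕ) (hh : ∀ a b, S.dist a b ≤ h a + h b) : ∃ w, ∀ a, S.dist w a ≤ h a := by
  obtain ⟨w, hw⟩ := exists_between (S := S) (fun a => (S.z ^ h a)⁻¹ * a) (fun a => S.z ^ h a * a)
    (fun a b => by
      have := (dist_le.1 (hh a b)).1
      unfold Le
      rw [mul_inv_rev, inv_inv, mul_assoc, ← mul_assoc (S.z ^ h a), ← pow_add, ← mul_assoc,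
        ← zpow_comm, mul_assoc]
      exact this)
  refine ⟨w, fun a => dist_le.2 ⟨?_, ?_⟩⟩
  · have := (hw a).2
    unfold Le at this
    rwa [← mul_assoc, ← zpow_comm, mul_assoc] at this
  · have := (hw a).1
    unfold Le at this
    rw [mul_inv_rev, inv_inv, ← zpow_comm, mul_assoc] at this
    rwa [mul_inv_rev, inv_inv]

/-- Twisted conjugacy classes are coarsely connected: if `v = y⁻¹ * u * ε y`, where `ε` is an
automorphism preserving the balls about `1`, then `u` and `v` are joined by a chain of twisted
conjugations by elements of the ball of radius `4` within a ball whose radius depends on `u`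
and `v` only. -/
lemma twisted_chain (ε : G ≃* G) (hε : ∀ k g, S.Bd k (ε g) ↔ S.Bd k g) {R : ℕ} {u v y : G}
    (hu : S.Bd R u) (hv : S.Bd R v) (hy : v = y⁻¹ * u * ε y) :
    Relation.ReflTransGen (fun c d => S.Bd (R + 3) c ∧ S.Bd (R + 3) d ∧
      ∃ t, S.Bd 4 t ∧ d = t⁻¹ * c * ε t) u v := by
  let φ : G ≃ G := ε.toEquiv.trans (Equiv.mulLeft u)
  have hφ : ∀ a, φ a = u * ε a := fun a => rfl
  have hiso : ∀ a b, S.dist (φ a) (φ b) = S.dist a b := fun a b => by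
    refine eq_of_forall_ge_iff fun k => ?_
    rw [dist_le, dist_le, ← hε k (a⁻¹ * b), map_mul, map_inv, hφ, hφ, mul_inv_rev, mul_assoc,
      inv_mul_cancel_left]
  have hpath := exists_path (D := S.dist) dist_comm dist_self dist_tri helly φ hiso (y := 1)
    (z := y) (R := R) (by rw [dist_le, hφ, map_one]; simpa using hu)
    (by rw [dist_le, hφ, ← mul_assoc, ← hy]; exact hv)
  have := hpath.lift (fun a => a⁻¹ * φ a) (p := fun c d => S.Bd (R + 3) c ∧ S.Bd (R + 3) d ∧
      ∃ t, S.Bd 4 t ∧ d = t⁻¹ * c * ε t) (by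
    rintro a b ⟨h1, h2, h3⟩
    rw [dist_le] at h1 h2 h3
    refine ⟨h2, h3, a⁻¹ * b, h1, ?_⟩
    change b⁻¹ * (u * ε b) = (a⁻¹ * b)⁻¹ * (a⁻¹ * (u * ε a)) * ε (a⁻¹ * b)
    rw [map_mul, map_inv]
    group)
  simpa [Function.onFun, hφ, ← mul_assoc, ← hy] using this

end

end GarsideGroup

/-! ### Deciding positivity -/

namespace GarsideGroup

section

variable {G : Type*} [Group G] (S : GarsideGroup G)

/-- The interval from `1` to `z ^ 2`. -/
def Dv : Set G := {g | g ∈ S.pos ∧ g⁻¹ * S.z ^ 2 ∈ S.pos}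

variable {S}

/-- The complement `a⁻¹ * (a ∨ b)`, on the interval `Dv`. -/
lemma exists_res (a b : S.Dv) : ∃ c d : S.Dv, (a : G) * c = b * d ∧
    ∀ x, S.Le a x → S.Le b x → S.Le (a * c) x := by
  obtain ⟨a, ha, ha'⟩ := a
  obtain ⟨b, hb, hb'⟩ := b
  obtain ⟨s, h1, h2, h3⟩ := S.exists_sup a b
  have hs := h3 _ ha' hb'
  have hsz : ∀ c ∈ S.pos, (c⁻¹ * s)⁻¹ * S.z ^ 2 ∈ S.pos := fun c hc => by
    rw [mul_inv_rev, inv_inv, mul_assoc, ← zpow_comm, ← mul_assoc]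
    exact mul_mem hs hc
  exact ⟨⟨a⁻¹ * s, h1, hsz a ha⟩, ⟨b⁻¹ * s, h2, hsz b hb⟩, by simp,
    fun x hx hx' => by simpa [Le] using h3 x hx hx'⟩

section Table

variable {N : ℕ} (val : Fin N → G) (res : Fin N → Fin N → Fin N)

/-- One step of the computation of the join of `d` with a product: the state consists of the
complement of the part read so far and of the reversed list of complementary factors. -/
def divStep (st : Fin N × List (Fin N)) (e : Fin N) : Fin N × List (Fin N) :=
  (res e st.1, res st.1 e :: st.2)

variable {val res}

lemma foldl_divStep (hpos : ∀ a, val a ∈ S.pos)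
    (hres : ∀ a b, val a * val (res a b) = val b * val (res b a))
    (hlub : ∀ a b x, S.Le (val a) x → S.Le (val b) x → S.Le (val a * val (res a b)) x)
    (p : List (Fin N)) : ∀ (d : Fin N) (A : List (Fin N)), ∃ s Q,
      p.foldl (divStep res) (d, A) = (s, Q ++ A) ∧
      val d * (Q.reverse.map val).prod = (p.map val).prod * val s ∧
      ∀ x, S.Le (val d) x → S.Le (p.map val).prod x → S.Le ((p.map val).prod * val s) x := by
  induction p with
  | nil => exact fun d A => ⟨d, [], rfl, by simp, fun x h _ => by simpa using h⟩
  | cons e p ih =>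
    intro d A
    obtain ⟨s, Q, h1, h2, h3⟩ := ih (res e d) (res d e :: A)
    refine ⟨s, Q ++ [res d e], by simp [divStep, h1], ?_, fun x hx hx' => ?_⟩
    · simp only [List.reverse_append, List.reverse_cons, List.reverse_nil, List.nil_append,
        List.map_append, List.map_cons, List.map_nil, List.prod_append, List.prod_cons,
        List.prod_nil, mul_one]
      rw [← mul_assoc, hres, mul_assoc, h2, mul_assoc]
    · rw [List.map_cons, List.prod_cons] at hx' ⊢
      have hp : (p.map val).prod ∈ S.pos := by
        refine list_prod_mem fun x hx => ?_
        obtain ⟨a, -, rfl⟩ := List.mem_map.1 hx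
        exact hpos a
      have hex : S.Le (val e) x := Le.trans (b := val e * (p.map val).prod)
        (by unfold Le; rwa [inv_mul_cancel_left]) hx'
      have key := fun {y : G} => le_mul_left_iff (S := S) (val e) (a := y) (b := (val e)⁻¹ * x)
      simp only [mul_inv_cancel_left] at key
      rw [mul_assoc, key]
      exact h3 _ (key.1 (hlub e d x hex hx)) (key.1 hx')

variable (res)

/-- Attempt to divide a product of table entries by the entry `zi`; the flag records success. -/
def divOnce (zi oi : Fin N) (st : Bool × List (Fin N)) : Bool × List (Fin N) :=
  (st.1 && decide ((st.2.foldl (divStep res) (zi, [])).1 = oi),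
    (st.2.foldl (divStep res) (zi, [])).2.reverse)

variable {res}

lemma divOnce_iterate (hinj : Function.Injective val) (hpos : ∀ a, val a ∈ S.pos)
    (hres : ∀ a b, val a * val (res a b) = val b * val (res b a))
    (hlub : ∀ a b x, S.Le (val a) x → S.Le (val b) x → S.Le (val a * val (res a b)) x)
    {zi oi : Fin N} (hz : val zi = S.z) (ho : val oi = 1) (p : List (Fin N)) (k : ℕ) :
    (((divOnce res zi oi)^[k] (true, p)).1 = true ↔ S.Le (S.z ^ k) (p.map val).prod) ∧
    (((divOnce res zi oi)^[k] (true, p)).1 = true →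
      S.z ^ k * (((divOnce res zi oi)^[k] (true, p)).2.map val).prod = (p.map val).prod) := by
  induction k with
  | zero =>
    refine ⟨?_, by simp⟩
    simp only [Function.iterate_zero, id_eq, pow_zero, true_iff, Le, inv_one, one_mul]
    refine list_prod_mem fun x hx => ?_
    obtain ⟨a, -, rfl⟩ := List.mem_map.1 hx
    exact hpos a
  | succ k ih =>
    rw [Function.iterate_succ_apply']
    generalize (divOnce res zi oi)^[k] (true, p) = st at ih ⊢
    obtain ⟨b, q⟩ := st
    obtain ⟨s, Q, h1, h2, h3⟩ := foldl_divStep hpos hres hlub q zi []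
    simp only [divOnce, h1, Bool.and_eq_true, decide_eq_true_eq, List.append_nil] at ih ⊢
    have hs : s = oi ↔ val s = 1 := by rw [← ho, hinj.eq_iff]
    rw [hs]
    have hsucc : ∀ x, S.z ^ (k + 1) * x = S.z ^ k * (S.z * x) := fun x => by
      rw [pow_succ, mul_assoc]
    have hle : S.Le (S.z ^ (k + 1)) (p.map val).prod → S.Le (S.z ^ k) (p.map val).prod := by
      refine fun h => Le.trans (b := S.z ^ (k + 1)) ?_ h
      unfold Le
      rw [pow_succ, inv_mul_cancel_left]
      exact S.z_mem
    have main : b = true → (val s = 1 ↔ S.Le (S.z ^ (k + 1)) (p.map val).prod) := by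
      intro hb
      rw [← ih.2 hb, pow_succ, le_mul_left_iff]
      constructor
      · intro h
        rw [h, mul_one] at h2
        rw [← h2, hz]
        unfold Le
        rw [inv_mul_cancel_left]
        refine list_prod_mem fun x hx => ?_
        obtain ⟨a, -, rfl⟩ := List.mem_map.1 hx
        exact hpos a
      · intro h
        have h4 := h3 _ (by rw [hz]; exact h) (Le.refl _)
        have h5 : S.Le (q.map val).prod ((q.map val).prod * val s) := by
          unfold Le; rw [inv_mul_cancel_left]; exact hpos s
        simpa using h4.antisymm h5
    refine ⟨⟨fun h => (main h.1).1 h.2, fun h => ?_⟩, fun h => ?_⟩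
    · have hb := ih.1.2 (hle h)
      exact ⟨hb, (main hb).2 h⟩
    · rw [hsucc, ← hz, h2, h.2, mul_one, hz]
      exact ih.2 h.1

lemma primrec_divOnce (zi oi : Fin N) : Primrec (divOnce res zi oi) := by
  have hr : Primrec₂ (res) := Primrec.dom_finite (fun p : Fin N × Fin N => res p.1 p.2)
  have hst : Primrec₂ (divStep res) := by
    refine Primrec.pair ?_ ?_
    · exact hr.comp Primrec.snd (Primrec.fst.comp Primrec.fst)
    · exact Primrec.list_cons.comp (hr.comp (Primrec.fst.comp Primrec.fst) Primrec.snd)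
        (Primrec.snd.comp Primrec.fst)
  have hf : Primrec (fun st : Bool × List (Fin N) => st.2.foldl (divStep res) (zi, [])) :=
    Primrec.list_foldl Primrec.snd (Primrec.const _) (hst.comp₂
      (Primrec.fst.comp₂ Primrec₂.right) (Primrec.snd.comp₂ Primrec₂.right))
  refine Primrec.pair ?_ ?_
  · refine Primrec.and.comp Primrec.fst ?_
    exact (Primrec.dom_finite (fun a : Fin N => decide (a = oi))).comp (Primrec.fst.comp hf)
  · exact Primrec.list_reverse.comp (Primrec.snd.comp hf)

end Table

/-- Positivity of a product of elements of the unit ball is primitive recursive. -/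
lemma exists_primrec_pos (hfin : S.Dv.Finite) {α : Type*} [Primcodable α] [Finite α]
    (ev : α → G) (hev : ∀ a, S.Bd 1 (ev a)) :
    ∃ t : List α → Bool, Primrec t ∧ ∀ w, t w = true ↔ (w.map ev).prod ∈ S.pos := by
  have : Finite S.Dv := hfin
  obtain ⟨N, ⟨e⟩⟩ := Finite.exists_equiv_fin S.Dv
  choose r r' hr1 hr2 using exists_res (S := S)
  have hle : ∀ (a : G) (c : S.Dv), S.Le a (a * c) := fun a c => by
    unfold Le; rw [inv_mul_cancel_left]; exact c.2.1
  have hhalf : ∀ a b : S.Dv, S.Le ((a : G) * r a b) (b * r b a) := fun a b =>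
    hr2 a b _ (by rw [hr1 b a]; exact hle _ _) (hle _ _)
  have hrr : ∀ a b : S.Dv, (a : G) * r a b = b * r b a := fun a b =>
    (hhalf a b).antisymm (hhalf b a)
  let val : Fin N → G := fun i => e.symm i
  let res : Fin N → Fin N → Fin N := fun i j => e (r (e.symm i) (e.symm j))
  have hinj : Function.Injective val := Subtype.val_injective.comp e.symm.injective
  have hpos : ∀ a, val a ∈ S.pos := fun a => (e.symm a).2.1
  have hres : ∀ a b, val a * val (res a b) = val b * val (res b a) := fun a b => by
    simp only [val, res, Equiv.symm_apply_apply]; exact hrr _ _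
  have hlub : ∀ a b x, S.Le (val a) x → S.Le (val b) x → S.Le (val a * val (res a b)) x :=
    fun a b x => by
      simp only [val, res, Equiv.symm_apply_apply]; exact hr2 _ _ x
  have hsurj : ∀ g ∈ S.Dv, ∃ i, val i = g := fun g hg => ⟨e ⟨g, hg⟩, by simp [val]⟩
  obtain ⟨zi, hz⟩ := hsurj S.z ⟨S.z_mem, by rw [pow_two, inv_mul_cancel_left]; exact S.z_mem⟩
  obtain ⟨oi, ho⟩ := hsurj 1 ⟨one_mem _, by simpa using pow_mem S.z_mem 2⟩
  have hlt : ∀ a, ∃ i, val i = S.z * ev a := fun a => by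
    refine hsurj _ ⟨by simpa using (hev a).1, ?_⟩
    have := (hev a).2
    rw [pow_one] at this
    rwa [mul_inv_rev, pow_two, mul_assoc, inv_mul_cancel_left, ← (S.z_comm _).eq]
  choose lt hlt using hlt
  have hprod : ∀ w : List α, ((w.map lt).map val).prod = S.z ^ w.length * (w.map ev).prod := by
    intro w
    induction w with
    | nil => simp
    | cons a w ih =>
      rw [List.map_cons, List.map_cons, List.prod_cons, ih, hlt, List.map_cons, List.prod_cons,
        List.length_cons, pow_succ', mul_assoc, ← mul_assoc (ev a), ← zpow_comm]
      simp only [mul_assoc]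
  refine ⟨fun w => ((divOnce res zi oi)^[w.length] (true, w.map lt)).1, ?_, fun w => ?_⟩
  · refine Primrec.fst.comp (Primrec.nat_iterate Primrec.list_length
      (Primrec.pair (Primrec.const _) (Primrec.list_map Primrec.id ?_)) ?_)
    · exact (Primrec.dom_finite lt).comp₂ Primrec₂.right
    · exact (primrec_divOnce zi oi).comp₂ Primrec₂.right
  · rw [(divOnce_iterate hinj hpos hres hlub hz ho _ _).1, hprod]
    unfold Le
    rw [inv_mul_cancel_left]

end

end GarsideGroup

/-! ### Enumerating words -/

section Words

variable {α : Type*}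

/-- The list of all words of length at most `k` over the alphabet `l`. -/
def wordsLE (l : List α) (k : ℕ) : List (List α) :=
  Nat.rec [[]] (fun _ L => [] :: L.flatMap fun w => l.map fun a => a :: w) k

lemma mem_wordsLE {l : List α} (hl : ∀ a, a ∈ l) (k : ℕ) :
    ∀ w : List α, w ∈ wordsLE l k ↔ w.length ≤ k := by
  induction k with
  | zero => intro w; simp [wordsLE]
  | succ k ih =>
    intro w
    change w ∈ [] :: (wordsLE l k).flatMap (fun w => l.map fun a => a :: w) ↔ _
    cases w with
    | nil => simp
    | cons a w => simp [ih, hl]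

lemma primrec_wordsLE [Primcodable α] (l : List α) : Primrec (wordsLE l) := by
  refine Primrec.nat_rec₁ _ ?_
  refine Primrec.list_cons.comp₂ (Primrec₂.const _) ?_
  refine Primrec.list_flatMap Primrec.snd ?_
  refine Primrec.list_map (Primrec.const l) ?_
  exact Primrec.list_cons.comp₂ Primrec₂.right (Primrec.snd.comp₂ Primrec₂.left)

lemma primrec_any [Primcodable α] {β : Type*} [Primcodable β] {f : α → List β} {p : α → β → Bool}
    (hf : Primrec f) (hp : Primrec₂ p) : Primrec fun a => (f a).any (p a) := by
  refine (Primrec.list_foldr (g := fun _ => false) (h := fun a (q : β × Bool) => p a q.1 || q.2)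
    hf (Primrec.const _) ?_).of_eq fun a => ?_
  · exact Primrec.or.comp₂ (hp.comp₂ Primrec₂.left (Primrec.fst.comp₂ Primrec₂.right))
      (Primrec.snd.comp₂ Primrec₂.right)
  · induction f a with
    | nil => rfl
    | cons b l ih => simp [← ih]

end Words

/-- A chain staying in a finite set can be shortened to at most as many steps as the set has
elements, up to one. Here `Q k` is any property satisfied by all points reached within `k` steps. -/
lemma chain_bound {V : Type*} {r : V → V → Prop} {s : Set V} (hs : s.Finite)
    (hr : ∀ c d, r c d → d ∈ s) {a b : V} (h : Relation.ReflTransGen r a b) (Q : ℕ → V → Prop)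
    (h0 : Q 0 a) (hmono : ∀ k c, Q k c → Q (k + 1) c)
    (hstep : ∀ k c d, Q k c → r c d → Q (k + 1) d) : ∃ k ≤ s.ncard + 1, Q k b := by
  let T : ℕ → Set V := fun k =>
    Nat.rec {a} (fun _ A => A ∪ {d | ∃ c ∈ A, r c d}) k
  have hT : ∀ k, T (k + 1) = T k ∪ {d | ∃ c ∈ T k, r c d} := fun k => rfl
  have hTQ : ∀ k, ∀ c ∈ T k, Q k c := by
    intro k
    induction k with
    | zero => intro c hc; rw [show c = a from hc]; exact h0
    | succ k ih =>
      rintro c (hc | ⟨d, hd, hdc⟩)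
      · exact hmono _ _ (ih c hc)
      · exact hstep _ _ _ (ih d hd) hdc
  have hTs : ∀ k, T k ⊆ insert a s := by
    intro k
    induction k with
    | zero => intro c hc; rw [show c = a from hc]; exact Set.mem_insert _ _
    | succ k ih =>
      rintro c (hc | ⟨d, hd, hdc⟩)
      · exact ih hc
      · exact Set.mem_insert_of_mem _ (hr _ _ hdc)
  have hfin : (insert a s).Finite := hs.insert a
  have haT : ∀ k, a ∈ T k := by
    intro k
    induction k with
    | zero => rfl
    | succ k ih => exact Or.inl ih
  obtain ⟨k, hk, hkT⟩ : ∃ k ≤ s.ncard + 1, T (k + 1) = T k := by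
    by_contra! hne
    have hcard : ∀ k ≤ s.ncard + 1, k < (T k).ncard := by
      intro k
      induction k with
      | zero =>
        intro _
        exact (Set.ncard_pos (hfin.subset (hTs 0))).2 ⟨a, haT 0⟩
      | succ k ih =>
        intro hk
        have h1 := ih (by omega)
        have h2 : T k ⊂ T (k + 1) :=
          (Set.subset_union_left).ssubset_of_ne (hne k (by omega)).symm
        have := Set.ncard_lt_ncard h2 (hfin.subset (hTs (k + 1)))
        omega
    have h1 := hcard (s.ncard + 1) le_rfl
    have h2 := Set.ncard_le_ncard (hTs (s.ncard + 1)) hfin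
    have h3 := Set.ncard_insert_le a s
    omega
  refine ⟨k, hk, hTQ k b ?_⟩
  induction h with
  | refl => exact haT k
  | tail _ hcd ih => rw [← hkT]; exact Or.inr ⟨_, ih, hcd⟩

/-! ### The braid group as a Garside group with reversal -/

section Braid

variable {n : ℕ} {rev : B n → B n}

lemma rev_one (hm : ∀ x y, rev (x * y) = rev y * rev x) : rev 1 = 1 := by
  have := hm 1 1
  rw [mul_one] at this
  simpa using this

lemma rev_inv (hm : ∀ x y, rev (x * y) = rev y * rev x) (x : B n) : rev x⁻¹ = (rev x)⁻¹ := by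
  rw [eq_inv_iff_mul_eq_one, ← hm, mul_inv_cancel, rev_one hm]

lemma rev_rev (hm : ∀ x y, rev (x * y) = rev y * rev x) (hg : ∀ i, rev (σ i) = σ i) (x : B n) :
    rev (rev x) = x := by
  induction x using B_induction with
  | one => rw [rev_one hm, rev_one hm]
  | mul i g ih => rw [hm, hm, ih, hg, hg]
  | inv_mul i g ih => rw [hm, hm, ih, rev_inv hm, hg, rev_inv hm, hg]

lemma rev_mem (hm : ∀ x y, rev (x * y) = rev y * rev x) (hg : ∀ i, rev (σ i) = σ i) {x : B n}
    (h : x ∈ P n) : rev x ∈ P n := by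
  induction h using Submonoid.closure_induction with
  | mem x hx => obtain ⟨i, rfl⟩ := hx; rw [hg]; exact Submonoid.subset_closure ⟨i, rfl⟩
  | one => rw [rev_one hm]; exact one_mem _
  | mul x y _ _ hx hy => rw [hm]; exact mul_mem hy hx

/-- The Garside structure of the braid group. The central element is the full twist times its
reversal, which is visibly invariant under reversal. -/
lemma exists_garside (hm : ∀ x y, rev (x * y) = rev y * rev x) (hg : ∀ i, rev (σ i) = σ i) :
    ∃ S : GarsideGroup (B n), S.pos = P n ∧ (∀ i, S.Bd 1 (σ i)) ∧ rev S.z = S.z ∧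
      ∀ a, S.len (inc n a) = ln a := by
  obtain ⟨F, hF⟩ := lift_rels (n := n) (fun _ => Multiplicative.ofAdd (1 : ℤ))
    (fun _ _ _ => rfl) (fun _ _ _ => rfl)
  have hlen : ∀ a, (F (inc n a)).toAdd = (ln a : ℤ) := by
    intro a
    induction a using BM.rec_gen with
    | one => simp
    | mul i a ih =>
      rw [map_mul, map_mul, inc_gen, hF, toAdd_mul, ih, ln_mul, ln_gen]
      push_cast; rfl
  set z0 := inc n (zt (n - 1)) with hz0
  have hz0P : z0 ∈ P n := mem_P_iff.2 ⟨_, rfl⟩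
  have hc0 : ∀ g, Commute z0 g := inc_zt_comm
  have hc1 : ∀ g, Commute (rev z0) g := fun g => by
    have := congrArg rev (hc0 (rev g)).eq
    rw [hm, hm, rev_rev hm hg] at this
    exact this.symm
  have hP1 : rev z0 ∈ P n := rev_mem hm hg hz0P
  refine ⟨{ pos := P n, z := z0 * rev z0, z_mem := mul_mem hz0P hP1,
            z_comm := fun g => (hc0 g).mul_left (hc1 g), len := fun g => (F g).toAdd,
            len_mul := fun a b => by rw [map_mul, toAdd_mul],
            len_nonneg := fun g h => ?_, eq_one_of_len := fun g h hl => ?_,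
            exists_sup := exists_sup, cofinal := fun g => ?_ }, rfl, fun i => ?_, ?_, hlen⟩
  · obtain ⟨a, rfl⟩ := mem_P_iff.1 h
    rw [hlen]; positivity
  · obtain ⟨a, rfl⟩ := mem_P_iff.1 h
    rw [hlen] at hl
    have ha : a = 1 := eq_one_of_ln (by exact_mod_cast hl)
    rw [ha, map_one]
  · obtain ⟨k, hk⟩ := exists_pow_mul_mem g
    refine ⟨k, ?_⟩
    rw [(hc0 _).eq, (hc1 _).mul_pow, mul_assoc]
    exact mul_mem (pow_mem hP1 k) hk
  · have hσ : σ i ∈ P n := Submonoid.subset_closure ⟨i, rfl⟩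
    constructor
    · exact mul_mem (by rw [pow_one]; exact mul_mem hz0P hP1) hσ
    · obtain ⟨t, ht⟩ := gen_dvd_zt i
      have e : z0 * (σ i)⁻¹ = inc n t := by
        rw [(hc0 _).eq, hz0, ht, map_mul, inc_gen, inv_mul_cancel_left]
      change (z0 * rev z0) ^ 1 * (σ i)⁻¹ ∈ P n
      rw [pow_one, (hc0 _).eq, mul_assoc, e]
      exact mul_mem hP1 (mem_P_iff.2 ⟨t, rfl⟩)
  · change rev (z0 * rev z0) = z0 * rev z0
    rw [hm, rev_rev hm hg]

/-! ### Signed words -/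

/-- The formal inverse of a signed word. -/
def invWord (w : List (Fin (n - 1) × Bool)) : List (Fin (n - 1) × Bool) :=
  (w.map fun p => (p.1, !p.2)).reverse

lemma π_nil : (π [] : B n) = 1 := rfl

lemma π_cons (p : Fin (n - 1) × Bool) (w : List (Fin (n - 1) × Bool)) :
    (π (p :: w) : B n) = (if p.2 then σ p.1 else (σ p.1)⁻¹) * π w := by
  simp [π]

lemma π_append (v w : List (Fin (n - 1) × Bool)) : (π (v ++ w) : B n) = π v * π w := by
  simp [π]

lemma π_invWord (w : List (Fin (n - 1) × Bool)) : (π (invWord w) : B n) = (π w)⁻¹ := by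
  induction w with
  | nil => simp [invWord, π]
  | cons p w ih =>
    have : invWord (p :: w) = invWord w ++ [(p.1, !p.2)] := by simp [invWord]
    rw [this, π_append, ih, π_cons, π_cons, π_nil, mul_inv_rev]
    rcases p with ⟨i, _ | _⟩ <;> simp

lemma length_invWord (w : List (Fin (n - 1) × Bool)) : (invWord w).length = w.length := by
  simp [invWord]

lemma π_reverse (hm : ∀ x y, rev (x * y) = rev y * rev x) (hg : ∀ i, rev (σ i) = σ i)
    (w : List (Fin (n - 1) × Bool)) : π w.reverse = rev (π w) := by
  induction w with
  | nil => simp [π, rev_one hm]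
  | cons p w ih =>
    rw [List.reverse_cons, π_append, ih, π_cons, π_cons, π_nil, hm, mul_one]
    rcases p with ⟨i, _ | _⟩ <;> simp [rev_inv hm, hg]

lemma exists_word (a : BM (n - 1)) :
    ∃ w : List (Fin (n - 1) × Bool), π w = inc n a ∧ w.length = ln a := by
  induction a using BM.rec_gen with
  | one => exact ⟨[], by simp [π], by simp⟩
  | mul i a ih =>
    obtain ⟨w, h1, h2⟩ := ih
    exact ⟨(i, true) :: w, by simp [π_cons, h1], by simp [h2, add_comm]⟩

variable {S : GarsideGroup (B n)}

lemma bd_letter (hσ : ∀ i, S.Bd 1 (σ i)) (p : Fin (n - 1) × Bool) :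
    S.Bd 1 (if p.2 then σ p.1 else (σ p.1)⁻¹) := by
  split
  · exact hσ _
  · exact (hσ _).inv

lemma bd_π (hσ : ∀ i, S.Bd 1 (σ i)) (w : List (Fin (n - 1) × Bool)) : S.Bd w.length (π w) := by
  induction w with
  | nil => exact GarsideGroup.bd_one
  | cons p w ih =>
    rw [π_cons, List.length_cons, add_comm]
    exact (bd_letter hσ p).mul ih

/-- Elements of a ball are represented by words of length linear in the radius. -/
lemma exists_ball_word (hP : S.pos = P n) (hlen : ∀ a, S.len (inc n a) = ln a) :
    ∃ C : ℕ, ∀ r g, S.Bd r g → ∃ w : List (Fin (n - 1) × Bool), w.length ≤ C * r ∧ π w = g := by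
  obtain ⟨c, hc⟩ := mem_P_iff.1 (hP ▸ S.z_mem)
  obtain ⟨wz, hw1, hw2⟩ := exists_word c
  have hlz : S.len S.z = ln c := by rw [← hc, hlen]
  have hlpow : ∀ r : ℕ, S.len (S.z ^ r) = r * ln c := by
    intro r
    induction r with
    | zero => simp [GarsideGroup.len_one]
    | succ r ih => rw [pow_succ, S.len_mul, ih, hlz]; push_cast; ring
  have hpow : ∀ r : ℕ, ∃ w : List (Fin (n - 1) × Bool), w.length = ln c * r ∧
      π w = (S.z ^ r)⁻¹ := by
    intro r
    induction r with
    | zero => exact ⟨[], by simp, by simp [π]⟩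
    | succ r ih =>
      obtain ⟨w, h1, h2⟩ := ih
      refine ⟨invWord wz ++ w, by simp [length_invWord, h1, hw2]; ring, ?_⟩
      rw [π_append, π_invWord, hw1, hc, h2, pow_succ, mul_inv_rev]
  refine ⟨3 * ln c, fun r g hg => ?_⟩
  obtain ⟨a, ha⟩ := mem_P_iff.1 (hP ▸ hg.1)
  obtain ⟨w, h1, h2⟩ := hpow r
  obtain ⟨w', h3, h4⟩ := exists_word a
  refine ⟨w ++ w', ?_, by rw [π_append, h2, h3, ha, inv_mul_cancel_left]⟩
  have e1 : (ln a : ℤ) = r * ln c + S.len g := by rw [← hlen, ha, S.len_mul, hlpow]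
  have e2 := S.len_nonneg _ hg.2
  rw [S.len_mul, hlpow, GarsideGroup.len_inv] at e2
  have e3 : (ln a : ℤ) ≤ 2 * (ln c * r) := by linarith
  have e4 : ln a ≤ 2 * (ln c * r) := by exact_mod_cast e3
  rw [List.length_append, h1, h4]
  linarith

lemma ball_finite_card {C : ℕ}
    (hC : ∀ r g, S.Bd r g → ∃ w : List (Fin (n - 1) × Bool), w.length ≤ C * r ∧ π w = g)
    {l : List (Fin (n - 1) × Bool)} (hl : ∀ a, a ∈ l) (r : ℕ) :
    {g | S.Bd r g}.Finite ∧ {g | S.Bd r g}.ncard ≤ (wordsLE l (C * r)).length := by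
  classical
  have hsub : {g | S.Bd r g} ⊆ (((wordsLE l (C * r)).map π).toFinset : Set (B n)) := by
    intro g hg
    obtain ⟨w, h1, rfl⟩ := hC r g hg
    simp only [List.coe_toFinset, Set.mem_ofPred_eq]
    exact List.mem_map_of_mem ((mem_wordsLE hl _ _).2 h1)
  refine ⟨(Finset.finite_toSet _).subset hsub, ?_⟩
  refine (Set.ncard_le_ncard hsub (Finset.finite_toSet _)).trans ?_
  rw [Set.ncard_coe_finset]
  exact (List.toFinset_card_le _).trans (by simp)

/-- Twisted conjugate elements are twisted conjugate by an element of bounded word length. -/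
lemma bounded_conjugator (hm : ∀ x y, rev (x * y) = rev y * rev x) (hg : ∀ i, rev (σ i) = σ i)
    (hP : S.pos = P n) (hz : rev S.z = S.z) {C : ℕ}
    (hC : ∀ r g, S.Bd r g → ∃ w : List (Fin (n - 1) × Bool), w.length ≤ C * r ∧ π w = g)
    {l : List (Fin (n - 1) × Bool)} (hl : ∀ a, a ∈ l) {R : ℕ} {u v x : B n}
    (hu : S.Bd R u) (hv : S.Bd R v) (hx : v = rev x * u * x) :
    ∃ w : List (Fin (n - 1) × Bool),
      w.length ≤ C * 4 * ((wordsLE l (C * (R + 3))).length + 1) ∧ v = rev (π w) * u * π w := by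
  have hii : ∀ x, rev (rev x)⁻¹ = x⁻¹ := fun x => by rw [rev_inv hm, rev_rev hm hg]
  let ε : B n ≃* B n :=
    { toFun := fun g => (rev g)⁻¹
      invFun := fun g => (rev g)⁻¹
      left_inv := fun g => by simp [hii]
      right_inv := fun g => by simp [hii]
      map_mul' := fun a b => by rw [hm, mul_inv_rev] }
  have hεa : ∀ g, ε g = (rev g)⁻¹ := fun g => rfl
  have hzpow : ∀ k : ℕ, rev (S.z ^ k) = S.z ^ k := by
    intro k
    induction k with
    | zero => simp [rev_one hm]
    | succ k ih => rw [pow_succ, hm, ih, hz, GarsideGroup.zpow_comm]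
  have hrevBd : ∀ k g, S.Bd k g → S.Bd k (rev g) := by
    rintro k g ⟨h1, h2⟩
    rw [hP] at h1 h2
    have h3 := rev_mem hm hg h1
    have h4 := rev_mem hm hg h2
    rw [hm, hzpow, ← GarsideGroup.zpow_comm] at h3 h4
    rw [rev_inv hm] at h4
    exact ⟨by rwa [hP], by rwa [hP]⟩
  have hε : ∀ k g, S.Bd k (ε g) ↔ S.Bd k g := fun k g => by
    refine ⟨fun h => ?_, fun h => (hrevBd k g h).inv⟩
    have := hrevBd _ _ h.inv
    rwa [hεa, inv_inv, rev_rev hm hg] at this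
  have hchain := GarsideGroup.twisted_chain ε hε (y := (rev x)⁻¹) hu hv (by
    rw [hεa, hii, inv_inv, inv_inv]; exact hx)
  obtain ⟨hf, hcard⟩ := ball_finite_card hC hl (R + 3)
  obtain ⟨k, hk, w, hw, hvw⟩ := chain_bound hf (fun c d h => h.2.1) hchain
    (fun k c => ∃ w : List (Fin (n - 1) × Bool), w.length ≤ C * 4 * k ∧
      c = rev (π w) * u * π w)
    ⟨[], by simp, by simp [π, rev_one hm]⟩
    (fun k c ⟨w, h1, h2⟩ => ⟨w, h1.trans (Nat.mul_le_mul_left _ (Nat.le_succ k)), h2⟩)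
    (by
      rintro k c d ⟨w, h1, rfl⟩ ⟨-, -, t, ht, rfl⟩
      obtain ⟨w', h3, h4⟩ := hC 4 (ε t) ((hε _ _).2 ht)
      refine ⟨w ++ w', by rw [List.length_append, mul_add, mul_one]; omega, ?_⟩
      rw [π_append, hm, h4]
      conv_rhs => rw [hεa t, hii]
      rw [hεa]
      simp only [mul_assoc])
  exact ⟨w, hw.trans (Nat.mul_le_mul_left _ (by omega)), hvw⟩

end Braid

/-! ### The decision procedure -/

lemma primrec_invWord {n : ℕ} : Primrec (invWord (n := n)) :=
  Primrec.list_reverse.comp (Primrec.list_map Primrec.id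
    ((Primrec.dom_finite fun p : Fin (n - 1) × Bool => (p.1, !p.2)).comp₂ Primrec₂.right))

/-- The word problem of the braid group is primitive recursive: an element is trivial if and only
if it and its inverse are positive. -/
lemma exists_primrec_word_problem {n : ℕ} {S : GarsideGroup (B n)} (hfin : S.Dv.Finite)
    (hσ : ∀ i, S.Bd 1 (σ i)) :
    ∃ t : List (Fin (n - 1) × Bool) → Bool, Primrec t ∧ ∀ w, t w = true ↔ (π w : B n) = 1 := by
  obtain ⟨t, ht, htw⟩ := GarsideGroup.exists_primrec_pos hfin
    (fun p : Fin (n - 1) × Bool => (if p.2 then σ p.1 else (σ p.1)⁻¹ : B n)) (bd_letter hσ)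
  have htw' : ∀ w, t w = true ↔ (π w : B n) ∈ S.pos := htw
  refine ⟨fun w => t w && t (invWord w), Primrec.and.comp ht (ht.comp primrec_invWord),
    fun w => ?_⟩
  rw [Bool.and_eq_true, htw', htw', π_invWord]
  constructor
  · rintro ⟨h1, h2⟩
    have h3 : S.Le 1 (π w) := by simpa [GarsideGroup.Le] using h1
    have h4 : S.Le (π w) 1 := by simpa [GarsideGroup.Le] using h2
    exact (h3.antisymm h4).symm
  · intro h
    rw [h, inv_one]
    exact ⟨one_mem _, one_mem _⟩

end TwistedBraid

open TwistedBraid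

/-- the ε-twisted conjugacy problem is decidable in `B n`. -/
theorem eps_twisted_conjugacy_decidable (n : ℕ) (hn : 2 ≤ n)
    (rev : B n → B n)
    (hrev_mul : ∀ x y : B n, rev (x * y) = rev y * rev x)
    (hrev_gen : ∀ i : Fin (n - 1), rev (σ i) = σ i) :
    ∃ f : List (Fin (n - 1) × Bool) × List (Fin (n - 1) × Bool) → Bool,
      Computable f ∧
      ∀ u v : List (Fin (n - 1) × Bool),
        (f (u, v) = true ↔ ∃ x : B n, π v = rev x * π u * x) := by
  obtain ⟨S, hP, hσ, hz, hlen⟩ := exists_garside hrev_mul hrev_gen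
  obtain ⟨C, hC⟩ := exists_ball_word hP hlen
  obtain ⟨l, -, hl⟩ := Finite.exists_univ_list (Fin (n - 1) × Bool)
  have hfin : S.Dv.Finite := by
    refine (ball_finite_card hC hl 2).1.subset fun g hg => ⟨?_, ?_⟩
    · exact mul_mem (pow_mem S.z_mem 2) hg.1
    · rw [GarsideGroup.zpow_comm]; exact hg.2
  obtain ⟨t, ht, htw⟩ := exists_primrec_word_problem hfin hσ
  -- The bound on the word length of a twisted conjugator.
  let K : ℕ → ℕ := fun R => C * 4 * ((wordsLE l (C * (R + 3))).length + 1)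
  have hK : Primrec K := by
    refine Primrec.nat_mul.comp (Primrec.const _) (Primrec.succ.comp (Primrec.list_length.comp
      ((primrec_wordsLE l).comp (Primrec.nat_mul.comp (Primrec.const _) ?_))))
    exact Primrec.nat_add.comp Primrec.id (Primrec.const 3)
  refine ⟨fun p => (wordsLE l (K (p.1.length + p.2.length))).any fun x =>
    t (invWord p.2 ++ (x.reverse ++ (p.1 ++ x))), Primrec.to_comp ?_, fun u v => ?_⟩
  · refine primrec_any ?_ ?_
    · exact (primrec_wordsLE l).comp (hK.comp (Primrec.nat_add.comp
        (Primrec.list_length.comp Primrec.fst) (Primrec.list_length.comp Primrec.snd)))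
    · exact ht.comp (Primrec.list_append.comp
        (primrec_invWord.comp (Primrec.snd.comp Primrec.fst))
        (Primrec.list_append.comp (Primrec.list_reverse.comp Primrec.snd)
          (Primrec.list_append.comp (Primrec.fst.comp Primrec.fst) Primrec.snd)))
  · have htest : ∀ x, t (invWord v ++ (x.reverse ++ (u ++ x))) = true ↔
        π v = rev (π x) * π u * π x := fun x => by
      rw [htw, π_append, π_append, π_append, π_invWord, π_reverse hrev_mul hrev_gen,
        inv_mul_eq_one, mul_assoc]
    simp only [List.any_eq_true, htest]
    constructor
    · rintro ⟨x, -, hx⟩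
      exact ⟨π x, hx⟩
    · rintro ⟨x, hx⟩
      obtain ⟨w, hw, hvw⟩ := bounded_conjugator hrev_mul hrev_gen hP hz hC hl
        ((bd_π hσ u).mono (Nat.le_add_right _ v.length))
        ((bd_π hσ v).mono (Nat.le_add_left _ u.length)) hx
      exact ⟨w, (mem_wordsLE hl _ _).2 hw, hvw⟩
end

section
/- Let u, v ∈ B_n be positive, palindromic-free braids that are ε-twisted conjugated and satisfy ℓ(u) ≤ r and ℓ(v) ≤ r for some natural number r. Then there exist k ∈ ℕ and a chain u = u_0, u_1, …, u_k = v of positive, palindromic-free braids with ℓ(u_i) ≤ r for all i, such that u_{i−1} is simply ε-twisted conjugated to u_i for i = 1,…,k. -/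
namespace Garside

/-! ### The positive braid monoid -/

/-- The defining relations of the positive braid monoid with `m` generators. -/
inductive MRel (m : ℕ) : FreeMonoid (Fin m) → FreeMonoid (Fin m) → Prop
  | comm (i j : Fin m) (h : (i : ℕ) + 1 < j) :
      MRel m (.of i * .of j) (.of j * .of i)
  | braid (i j : Fin m) (h : (i : ℕ) + 1 = j) :
      MRel m (.of i * .of j * .of i) (.of j * .of i * .of j)

/-- The abstract positive braid monoid with `m` generators, presented by the braid relations.
It is a priori only known to map onto the positive braids; `toB_injective` shows that it embeds. -/
abbrev BMon (m : ℕ) := PresentedMonoid (MRel m)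

section Monoid

variable {m : ℕ}

/-- The generators of the positive braid monoid. -/
def s (i : Fin m) : BMon m := PresentedMonoid.of _ i

/-- Two generators satisfy the braid relation of length three. -/
def Adj (i j : Fin m) : Prop := (i : ℕ) + 1 = j ∨ (j : ℕ) + 1 = i

lemma Adj.symm {i j : Fin m} (h : Adj i j) : Adj j i := Or.symm h

lemma s_comm {i j : Fin m} (hij : i ≠ j) (h : ¬ Adj i j) : s i * s j = s j * s i := by
  unfold Adj at h
  rcases lt_or_gt_of_ne (Fin.val_ne_of_ne hij) with hlt | hlt
  · exact PresentedMonoid.mk_eq_mk_of_rel (MRel.comm i j (by omega))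
  · exact (PresentedMonoid.mk_eq_mk_of_rel (MRel.comm j i (by omega))).symm

lemma s_braid {i j : Fin m} (h : Adj i j) : s i * s j * s i = s j * s i * s j := by
  rcases h with h | h
  · exact PresentedMonoid.mk_eq_mk_of_rel (MRel.braid i j h)
  · exact (PresentedMonoid.mk_eq_mk_of_rel (MRel.braid j i h)).symm

lemma s_comm' {i j : Fin m} (hij : i ≠ j) (h : ¬ Adj i j) (x : BMon m) :
    s i * (s j * x) = s j * (s i * x) := by
  rw [← mul_assoc, s_comm hij h, mul_assoc]

lemma s_braid' {i j : Fin m} (h : Adj i j) (x : BMon m) :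
    s i * (s j * (s i * x)) = s j * (s i * (s j * x)) := by
  have := congrArg (· * x) (s_braid h)
  simpa only [mul_assoc] using this

/-- The word length, as a homomorphism. -/
def lenHom (m : ℕ) : BMon m →* Multiplicative ℕ :=
  PresentedMonoid.lift (fun _ => Multiplicative.ofAdd 1) (by
    rintro a b (⟨i, j, h⟩ | ⟨i, j, h⟩) <;> simp)

/-- The word length of an element of the positive braid monoid. -/
def len (x : BMon m) : ℕ := (lenHom m x).toAdd

@[simp] lemma len_mul (x y : BMon m) : len (x * y) = len x + len y := by simp [len]
@[simp] lemma len_one : len (1 : BMon m) = 0 := by simp [len]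
@[simp] lemma len_s (i : Fin m) : len (s i) = 1 := by simp [len, s, lenHom]

open Classical in
/-- The complement of the generator `i` in the least common right multiple of `i` and `j`, so that
`s i * compl i j = s j * compl j i` is that multiple. -/
noncomputable def compl (i j : Fin m) : BMon m :=
  if i = j then 1 else if Adj i j then s j * s i else s j

@[simp] lemma compl_self (i : Fin m) : compl i i = 1 := by simp [compl]

lemma compl_adj {i j : Fin m} (hij : i ≠ j) (h : Adj i j) : compl i j = s j * s i := by
  simp [compl, hij, h]

lemma compl_far {i j : Fin m} (hij : i ≠ j) (h : ¬ Adj i j) : compl i j = s j := by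
  simp [compl, hij, h]

lemma s_mul_compl (i j : Fin m) : s i * compl i j = s j * compl j i := by
  by_cases hij : i = j
  · subst hij; rfl
  by_cases h : Adj i j
  · rw [compl_adj hij h, compl_adj (Ne.symm hij) h.symm, ← mul_assoc, ← mul_assoc, s_braid h]
  · rw [compl_far hij h, compl_far (Ne.symm hij) (fun h' => h h'.symm), s_comm hij h]

/-- Garside's lemma for elements `s i * x` with `x` of length less than `N`: a common right
multiple of two generators is a multiple of their least common multiple. -/
def KeyBelow (m N : ℕ) : Prop :=
  ∀ (i j : Fin m) (x y : BMon m), len x < N → s i * x = s j * y →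
    ∃ z, x = compl i j * z ∧ y = compl j i * z

lemma KeyBelow.cancel {N : ℕ} (H : KeyBelow m N) (i : Fin m) (x y : BMon m) (hx : len x < N)
    (h : s i * x = s i * y) : x = y := by
  obtain ⟨z, h1, h2⟩ := H i i x y hx h
  rw [h1, h2]

lemma KeyBelow.far {N : ℕ} (H : KeyBelow m N) {i j : Fin m} (hij : i ≠ j) (hn : ¬ Adj i j)
    {x y : BMon m} (hx : len x < N) (h : s i * x = s j * y) :
    ∃ z, x = s j * z ∧ y = s i * z := by
  obtain ⟨z, h1, h2⟩ := H i j x y hx h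
  exact ⟨z, by rw [h1, compl_far hij hn],
    by rw [h2, compl_far (Ne.symm hij) (fun h' => hn h'.symm)]⟩

lemma KeyBelow.adj {N : ℕ} (H : KeyBelow m N) {i j : Fin m} (hij : i ≠ j) (hn : Adj i j)
    {x y : BMon m} (hx : len x < N) (h : s i * x = s j * y) :
    ∃ z, x = s j * (s i * z) ∧ y = s i * (s j * z) := by
  obtain ⟨z, h1, h2⟩ := H i j x y hx h
  exact ⟨z, by rw [h1, compl_adj hij hn, mul_assoc],
    by rw [h2, compl_adj (Ne.symm hij) hn.symm, mul_assoc]⟩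

lemma len_eq_of_eq {x y : BMon m} (h : x = y) : len x = len y := congrArg len h

/-- Transitivity step of Garside's lemma. If `s i * x` and `s k * v` agree through a multiple of the
lcm of `i, k`, and `s k * v` and `s j * y` through a multiple of the lcm of `k, j`, then `s i * x`
and `s j * y` agree through a multiple of the lcm of `i, j`. The cases are the possible Coxeter
diagrams on `i, k, j`. -/
lemma cube {N : ℕ} (H : KeyBelow m N) (i k j : Fin m) (x y z t : BMon m)
    (hlen : len (compl k i * z) ≤ N)
    (hx : x = compl i k * z) (hv : compl k i * z = compl k j * t) (hy : y = compl j k * t) :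
    ∃ w, x = compl i j * w ∧ y = compl j i * w := by
  by_cases hik : i = k
  · subst hik
    exact ⟨t, by simpa using hx.trans (by simpa using hv), hy⟩
  by_cases hkj : k = j
  · subst hkj
    refine ⟨z, hx, ?_⟩
    rw [hv, hy]
  have hki := Ne.symm hik
  have hjk := Ne.symm hkj
  by_cases hij : i = j
  · subst hij
    have hzt : z = t := by
      by_cases h : Adj k i
      · rw [compl_adj hki h, mul_assoc, mul_assoc] at hv
        rw [compl_adj hki h] at hlen
        simp at hlen
        exact H.cancel _ _ _ (by omega) (H.cancel _ _ _ (by simp; omega) hv)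
      · rw [compl_far hki h] at hv hlen
        simp at hlen
        exact H.cancel _ _ _ (by omega) hv
    subst hzt
    exact ⟨x, by simp, by rw [hy, hx]; simp⟩
  have hji := Ne.symm hij
  have hnot : ¬ (Adj i k ∧ Adj k j ∧ Adj i j) := by unfold Adj; omega
  by_cases a1 : Adj i k <;> by_cases a2 : Adj k j <;> by_cases a3 : Adj i j
  · exact absurd ⟨a1, a2, a3⟩ hnot
  · -- diagram `i - k - j`
    have b3 : ¬ Adj j i := fun h => a3 h.symm
    rw [compl_adj hki a1.symm] at hv hlen
    rw [compl_adj hkj a2] at hv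
    rw [compl_adj hik a1] at hx
    rw [compl_adj hjk a2.symm] at hy
    rw [compl_far hij a3, compl_far hji b3]
    simp only [mul_assoc] at hv hx hy
    simp at hlen
    have l0 := len_eq_of_eq hv
    simp at l0
    obtain ⟨z1, e1, e2⟩ := H.far hij a3 (by simp; omega) hv
    obtain ⟨z2, e3, e4⟩ := H.adj hkj a2 (by omega) e1
    obtain ⟨z3, e5, e6⟩ := H.adj hki a1.symm (by omega) e2
    rw [e4] at e6
    have l4 := len_eq_of_eq e4
    have l5 := len_eq_of_eq e1
    simp at l4 l5
    have e7 := H.cancel _ _ _ (by simp; omega) e6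
    obtain ⟨z4, e8, e9⟩ := H.far hji b3 (by omega) e7
    subst e8 e9 e3 e5
    have c := s_comm' hij a3
    have c1 := s_braid' a1
    have c2 := s_braid' a2
    exact ⟨s k * (s j * (s i * (s k * z4))), by grind, by grind⟩
  · -- diagram `k - i - j`
    rw [compl_adj hki a1.symm] at hv hlen
    rw [compl_far hkj a2] at hv
    rw [compl_adj hik a1] at hx
    rw [compl_far hjk (fun h => a2 h.symm)] at hy
    rw [compl_adj hij a3, compl_adj hji a3.symm]
    simp only [mul_assoc] at hv hx hy ⊢
    simp at hlen
    obtain ⟨z1, e1, e2⟩ := H.adj hij a3 (by simp; omega) hv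
    obtain ⟨z2, e3, e4⟩ := H.far hkj a2 (by omega) e1
    have l1 := len_eq_of_eq e3
    have l2 := len_eq_of_eq e4
    simp at l1 l2
    obtain ⟨z3, e5, e6⟩ := H.adj hik a1 (by omega) e4
    subst e5 e6 e3 e2
    have c := s_comm' hkj a2
    have c1 := s_braid' a1
    have c2 := s_braid' a3
    exact ⟨s k * (s i * (s j * z3)), by grind, by grind⟩
  · -- `j` commutes with `i - k`
    rw [compl_adj hki a1.symm] at hv hlen
    rw [compl_far hkj a2] at hv
    rw [compl_adj hik a1] at hx
    rw [compl_far hjk (fun h => a2 h.symm)] at hy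
    rw [compl_far hij a3, compl_far hji (fun h => a3 h.symm)]
    simp only [mul_assoc] at hv hx hy ⊢
    simp at hlen
    obtain ⟨z1, e1, e2⟩ := H.far hij a3 (by simp; omega) hv
    obtain ⟨z2, e3, e4⟩ := H.far hkj a2 (by omega) e1
    subst e4 e3 e2
    have c := s_comm' hkj a2
    have c1 := s_braid' a1
    have c2 := s_comm' hij a3
    exact ⟨s k * (s i * z2), by grind, by grind⟩
  · -- diagram `i - j - k`
    rw [compl_far hki (fun h => a1 h.symm)] at hv hlen
    rw [compl_adj hkj a2] at hv
    rw [compl_far hik a1] at hx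
    rw [compl_adj hjk a2.symm] at hy
    rw [compl_adj hij a3, compl_adj hji a3.symm]
    simp only [mul_assoc] at hv hx hy ⊢
    simp at hlen
    have l0 := len_eq_of_eq hv
    simp at l0
    obtain ⟨z1, e1, e2⟩ := H.adj hij a3 (by omega) hv
    obtain ⟨z2, e3, e4⟩ := H.far hki (fun h => a1 h.symm) (by omega) e2
    have l1 := len_eq_of_eq e1
    simp at l1
    obtain ⟨z3, e5, e6⟩ := H.adj hjk a2.symm (by omega) e4
    subst e5 e6 e3 e1
    have c := s_comm' hik a1
    have c1 := s_braid' a2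
    have c2 := s_braid' a3
    exact ⟨s k * (s j * (s i * z3)), by grind, by grind⟩
  · -- `i` commutes with `k - j`
    rw [compl_far hki (fun h => a1 h.symm)] at hv hlen
    rw [compl_adj hkj a2] at hv
    rw [compl_far hik a1] at hx
    rw [compl_adj hjk a2.symm] at hy
    rw [compl_far hij a3, compl_far hji (fun h => a3 h.symm)]
    simp only [mul_assoc] at hv hx hy ⊢
    simp at hlen
    have l0 := len_eq_of_eq hv
    simp at l0
    obtain ⟨z1, e1, e2⟩ := H.far hij a3 (by omega) hv
    obtain ⟨z2, e3, e4⟩ := H.far hki (fun h => a1 h.symm) (by omega) e2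
    subst e4 e3 e1
    have c := s_comm' hik a1
    have c1 := s_braid' a2
    have c2 := s_comm' hij a3
    exact ⟨s k * (s j * z2), by grind, by grind⟩
  · -- `k` commutes with `i - j`
    rw [compl_far hki (fun h => a1 h.symm)] at hv hlen
    rw [compl_far hkj a2] at hv
    rw [compl_far hik a1] at hx
    rw [compl_far hjk (fun h => a2 h.symm)] at hy
    rw [compl_adj hij a3, compl_adj hji a3.symm]
    simp only [mul_assoc] at hv hx hy ⊢
    simp at hlen
    obtain ⟨z1, e1, e2⟩ := H.adj hij a3 (by omega) hv
    subst e1 e2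
    have c := s_comm' hik a1
    have c1 := s_comm' hkj a2
    exact ⟨s k * z1, by grind, by grind⟩
  · -- all three commute
    rw [compl_far hki (fun h => a1 h.symm)] at hv hlen
    rw [compl_far hkj a2] at hv
    rw [compl_far hik a1] at hx
    rw [compl_far hjk (fun h => a2 h.symm)] at hy
    rw [compl_far hij a3, compl_far hji (fun h => a3 h.symm)]
    simp at hlen
    obtain ⟨z1, e1, e2⟩ := H.far hij a3 (by omega) hv
    subst e1 e2
    have c := s_comm' hik a1
    have c1 := s_comm' hkj a2
    exact ⟨s k * z1, by grind, by grind⟩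

end Monoid
end Garside

namespace Garside

section Monoid

variable {m : ℕ}

/-- The class of a word in the positive braid monoid. -/
abbrev mkW : FreeMonoid (Fin m) →* BMon m := PresentedMonoid.mk (MRel m)

/-- Garside's lemma on the level of derivations between words, by induction on the derivation. -/
lemma key_word {N : ℕ} (H : KeyBelow m N) {w w' : FreeMonoid (Fin m)}
    (h : ConGen.Rel (MRel m) w w') (hlen : len (mkW w) ≤ N + 1) :
    (w = 1 ∧ w' = 1) ∨ ∃ i j X Y z, w = .of i * X ∧ w' = .of j * Y ∧
      mkW X = compl i j * z ∧ mkW Y = compl j i * z := by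
  induction h with
  | of x y h =>
    right
    rcases h with ⟨i, j, h⟩ | ⟨i, j, h⟩
    · have hij : i ≠ j := by rintro rfl; omega
      have hn : ¬ Adj i j := by unfold Adj; omega
      refine ⟨i, j, _, _, 1, rfl, rfl, ?_, ?_⟩
      · rw [compl_far hij hn, mul_one]; rfl
      · rw [compl_far hij.symm (fun h' => hn h'.symm), mul_one]; rfl
    · have hij : i ≠ j := by rintro rfl; omega
      have hn : Adj i j := Or.inl h
      refine ⟨i, j, .of j * .of i, .of i * .of j, 1, by rw [mul_assoc], by rw [mul_assoc], ?_, ?_⟩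
      · rw [compl_adj hij hn, mul_one]; rfl
      · rw [compl_adj hij.symm hn.symm, mul_one]; rfl
  | refl x =>
    induction x using FreeMonoid.casesOn with
    | one => left; simp
    | of_mul i xs => exact Or.inr ⟨i, i, xs, xs, mkW xs, rfl, rfl, by simp, by simp⟩
  | @symm x y h ih =>
    have hxy : mkW x = mkW y := PresentedMonoid.mk_eq_mk_iff.2 h
    rcases ih (by rwa [hxy]) with ⟨h1, h2⟩ | ⟨i, j, X, Y, z, h1, h2, h3, h4⟩
    · exact Or.inl ⟨h2, h1⟩
    · exact Or.inr ⟨j, i, Y, X, z, h2, h1, h4, h3⟩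
  | @trans x y z h h' ih ih' =>
    have hxy : mkW x = mkW y := PresentedMonoid.mk_eq_mk_iff.2 h
    rcases ih hlen with ⟨h1, h2⟩ | ⟨i, k, X, V, a, h1, h2, h3, h4⟩ <;>
      rcases ih' (by rwa [← hxy]) with ⟨h1', h2'⟩ | ⟨k', j, V', Y, b, h1', h2', h3', h4'⟩
    · exact Or.inl ⟨h1, h2'⟩
    · rw [h2] at h1'
      exact absurd h1' (by intro h; simpa using (congrArg FreeMonoid.length h).symm)
    · rw [h1'] at h2
      exact absurd h2 (by intro h; simpa using (congrArg FreeMonoid.length h).symm)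
    · rw [h2] at h1'
      obtain ⟨rfl, rfl⟩ : k = k' ∧ V = V' := List.cons.inj h1'
      have hl : len (compl k i * a) ≤ N := by
        rw [hxy, h2, map_mul, len_mul] at hlen
        have : len (mkW (.of k)) = 1 := len_s k
        rw [← h4]; omega
      obtain ⟨w, e1, e2⟩ := cube H i k j _ _ a b hl h3 (by rw [← h4, h3']) h4'
      exact Or.inr ⟨i, j, X, Y, w, h1, h2', e1, e2⟩
  | @mul w x y z h h' ih ih' =>
    have hyz : mkW y = mkW z := PresentedMonoid.mk_eq_mk_iff.2 h'
    rw [map_mul, len_mul] at hlen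
    rcases ih (by omega) with ⟨rfl, rfl⟩ | ⟨i, j, X, Y, a, h1, h2, h3, h4⟩
    · simpa using ih' (by omega)
    · refine Or.inr ⟨i, j, X * y, Y * z, a * mkW y, by rw [h1, mul_assoc], by rw [h2, mul_assoc],
        ?_, ?_⟩
      · rw [map_mul, h3, mul_assoc]
      · rw [map_mul, h4, mul_assoc, hyz]

lemma keyBelow (m N : ℕ) : KeyBelow m N := by
  induction N with
  | zero => intro i j x y h; omega
  | succ N ih =>
    intro i j x y hx h
    obtain ⟨X, hX⟩ : ∃ X, mkW X = x := PresentedMonoid.surjective_mk x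
    obtain ⟨Y, hY⟩ : ∃ Y, mkW Y = y := PresentedMonoid.surjective_mk y
    subst hX hY
    have h' : mkW (.of i * X) = mkW (.of j * Y) := by rw [map_mul, map_mul]; exact h
    have hl : len (mkW (.of i * X)) ≤ N + 1 := by
      rw [map_mul, len_mul]
      have : len (mkW (.of i)) = 1 := len_s i
      omega
    rcases key_word ih (PresentedMonoid.mk_eq_mk_iff.1 h') hl with
      ⟨h1, -⟩ | ⟨i', j', X', Y', z, h1, h2, h3, h4⟩
    · exact absurd h1 (by intro h; simpa using congrArg FreeMonoid.length h)
    · obtain ⟨rfl, rfl⟩ : i = i' ∧ X = X' := List.cons.inj h1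
      obtain ⟨rfl, rfl⟩ : j = j' ∧ Y = Y' := List.cons.inj h2
      exact ⟨z, h3, h4⟩

/-- Garside's lemma: in the positive braid monoid a common right multiple of two generators is a
multiple of their least common multiple. -/
lemma key {i j : Fin m} {x y : BMon m} (h : s i * x = s j * y) :
    ∃ z, x = compl i j * z ∧ y = compl j i * z :=
  keyBelow m (len x + 1) i j x y (by omega) h

lemma bmon_induction {p : BMon m → Prop} (one : p 1) (mul : ∀ i x, p x → p (s i * x)) (x : BMon m) :
    p x := by
  obtain ⟨X, rfl⟩ := PresentedMonoid.surjective_mk x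
  induction X using FreeMonoid.recOn with
  | one => simpa using one
  | of_mul i xs ih => rw [map_mul]; exact mul i _ ih

lemma left_cancel (a x y : BMon m) (h : a * x = a * y) : x = y := by
  induction a using bmon_induction with
  | one => simpa using h
  | mul i a ih =>
    rw [mul_assoc, mul_assoc] at h
    obtain ⟨z, h1, h2⟩ := key h
    exact ih (by rw [h1, h2])

/-- Word reversal, as a homomorphism to the opposite monoid. -/
def revHom (m : ℕ) : BMon m →* (BMon m)ᵐᵒᵖ :=
  PresentedMonoid.lift (fun i => .op (s i)) (by
    rintro a b (⟨i, j, h⟩ | ⟨i, j, h⟩)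
    · have hij : i ≠ j := by rintro rfl; omega
      have hn : ¬ Adj i j := by unfold Adj; omega
      simp only [map_mul, FreeMonoid.lift_eval_of, ← MulOpposite.op_mul]
      rw [s_comm hij hn]
    · simp only [map_mul, FreeMonoid.lift_eval_of, ← MulOpposite.op_mul]
      rw [← mul_assoc, ← mul_assoc, s_braid (Or.inl h)])

lemma revHom_revHom (x : BMon m) : (revHom m (revHom m x).unop).unop = x := by
  induction x using bmon_induction with
  | one => simp
  | mul i x ih =>
    have : revHom m (s i) = .op (s i) := rfl
    simp [this, ih]

lemma right_cancel (a x y : BMon m) (h : x * a = y * a) : x = y := by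
  have h' := congrArg (fun x => (revHom m x).unop) h
  simp only [map_mul, MulOpposite.unop_mul] at h'
  rw [← revHom_revHom x, ← revHom_revHom y, left_cancel _ _ _ h']

end Monoid

/-! ### The half twist in a monoid with braid relations -/

section HalfTwist

variable {A : Type*} [Monoid A] (t : ℕ → A)

/-- The descending product `t k * ⋯ * t 1 * t 0`. -/
def desc (k : ℕ) : A := ((List.range (k + 1)).reverse.map t).prod

/-- The half twist in the first `k` generators. -/
def half (k : ℕ) : A := ((List.range k).map (desc t)).prod

lemma desc_zero : desc t 0 = t 0 := by simp [desc]
lemma desc_succ (k : ℕ) : desc t (k + 1) = t (k + 1) * desc t k := by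
  simp [desc, List.range_succ]
lemma half_zero : half t 0 = 1 := by simp [half]
lemma half_succ (k : ℕ) : half t (k + 1) = half t k * desc t k := by
  simp [half, List.range_succ]

variable {t} {m : ℕ}

lemma comm_desc (hc : ∀ i j, i + 1 < j → t i * t j = t j * t i)
    (k j : ℕ) (h : k + 1 < j) : t j * desc t k = desc t k * t j := by
  induction k with
  | zero => rw [desc_zero, hc _ _ h]
  | succ k ih =>
    rw [desc_succ, ← mul_assoc, ← hc _ _ h, mul_assoc, ih (by omega), mul_assoc]

lemma comm_half (hc : ∀ i j, i + 1 < j → t i * t j = t j * t i)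
    (k j : ℕ) (h : k < j) : t j * half t k = half t k * t j := by
  induction k with
  | zero => simp [half_zero]
  | succ k ih =>
    rw [half_succ, ← mul_assoc, ih (by omega), mul_assoc, comm_desc hc _ _ h, mul_assoc]

lemma mul_desc (hc : ∀ i j, i + 1 < j → t i * t j = t j * t i)
    (hb : ∀ i, i + 1 < m → t i * t (i + 1) * t i = t (i + 1) * t i * t (i + 1))
    (k i : ℕ) (hk : k < m) (h : i < k) : t i * desc t k = desc t k * t (i + 1) := by
  induction k with
  | zero => omega
  | succ k ih =>
    rcases Nat.lt_succ_iff_lt_or_eq.1 h with h | rfl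
    · rw [desc_succ, ← mul_assoc, hc _ _ (by omega), mul_assoc, ih (by omega) h, mul_assoc]
    · cases i with
      | zero => rw [desc_succ, desc_zero, ← mul_assoc, hb 0 hk]
      | succ i =>
        rw [desc_succ, desc_succ, ← mul_assoc, ← mul_assoc, hb _ hk, mul_assoc,
          comm_desc hc _ _ (by omega)]
        simp only [mul_assoc]

lemma desc_mul_desc (hc : ∀ i j, i + 1 < j → t i * t j = t j * t i)
    (hb : ∀ i, i + 1 < m → t i * t (i + 1) * t i = t (i + 1) * t i * t (i + 1))
    (k j : ℕ) (hk : k < m) (h : j < k) :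
    desc t j * desc t k * t 0 = desc t k * desc t (j + 1) := by
  induction j with
  | zero => rw [desc_zero, mul_desc hc hb k 0 hk h, desc_succ, desc_zero, mul_assoc]
  | succ j ih =>
    rw [desc_succ t j, mul_assoc, mul_assoc, ← mul_assoc (desc t j), ih (by omega), ← mul_assoc,
      mul_desc hc hb _ _ hk h, mul_assoc, ← desc_succ]

/-- The half twist conjugates each generator to its mirror image. -/
lemma mul_half (hc : ∀ i j, i + 1 < j → t i * t j = t j * t i)
    (hb : ∀ i, i + 1 < m → t i * t (i + 1) * t i = t (i + 1) * t i * t (i + 1))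
    (k i : ℕ) (hk : k ≤ m) (h : i < k) :
    t i * half t k = half t k * t (k - 1 - i) := by
  induction k generalizing i with
  | zero => omega
  | succ k ih =>
    rcases Nat.lt_succ_iff_lt_or_eq.1 h with h | rfl
    · rw [half_succ, ← mul_assoc, ih i (by omega) h, mul_assoc,
        mul_desc hc hb _ _ (by omega) (by omega), mul_assoc]
      congr 3; omega
    · cases i with
      | zero => simp [half_succ, half_zero, desc_zero]
      | succ i =>
        have e : i + 1 + 1 - 1 - (i + 1) = 0 := by omega
        rw [e, half_succ, half_succ, mul_assoc, mul_assoc, mul_assoc, ← mul_assoc,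
          comm_half hc _ _ (by omega), mul_assoc, ← mul_assoc (t (i + 1)), ← desc_succ,
          ← desc_mul_desc hc hb (i + 1) i (by omega) (by omega), mul_assoc]

lemma half_right (hc : ∀ i j, i + 1 < j → t i * t j = t j * t i)
    (hb : ∀ i, i + 1 < m → t i * t (i + 1) * t i = t (i + 1) * t i * t (i + 1))
    (k i : ℕ) (hk : k ≤ m) (h : i < k) : ∃ y, half t k = y * t i := by
  induction k generalizing i with
  | zero => omega
  | succ k ih =>
    cases i with
    | zero =>
      cases k with
      | zero => exact ⟨1, by simp [half_succ, half_zero, desc_zero]⟩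
      | succ k =>
        rw [half_succ]
        have : ∀ k, ∃ y, desc t k = y * t 0 := by
          intro k
          induction k with
          | zero => exact ⟨1, by simp [desc_zero]⟩
          | succ k ih => obtain ⟨y, hy⟩ := ih; exact ⟨t (k + 1) * y, by rw [desc_succ, hy, mul_assoc]⟩
        obtain ⟨y, hy⟩ := this (k + 1)
        exact ⟨half t (k + 1) * y, by rw [hy, mul_assoc]⟩
    | succ i =>
      obtain ⟨y, hy⟩ := ih i (by omega) (by omega)
      exact ⟨y * desc t k, by
        rw [half_succ, hy, mul_assoc, mul_desc hc hb _ _ (by omega) (by omega), mul_assoc]⟩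

/-- The half twist, written starting with its ascending factor. -/
lemma half_succ' (hc : ∀ i j, i + 1 < j → t i * t j = t j * t i)
    (k : ℕ) : half t (k + 1) = ((List.range (k + 1)).map t).prod * half t k := by
  induction k with
  | zero => simp [half_succ, half_zero, desc_zero]
  | succ k ih =>
    rw [half_succ t (k + 1), ih, desc_succ, mul_assoc, ← mul_assoc (half t k),
      ← comm_half hc k (k + 1) (by omega), mul_assoc, ← half_succ, ← mul_assoc,
      List.range_succ (n := k + 1)]
    simp [ih]

end HalfTwist

end Garside

namespace Garside

/-! ### The positive braid monoid embeds in the braid group -/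

section Embedding

variable {m : ℕ}

/-- The generators of the positive braid monoid indexed by `ℕ`, with value `1` out of range. -/
def gen (m j : ℕ) : BMon m := if h : j < m then s ⟨j, h⟩ else 1

lemma gen_comm (i j : ℕ) (h : i + 1 < j) : gen m i * gen m j = gen m j * gen m i := by
  unfold gen
  split_ifs with h1 h2 <;> try simp
  exact s_comm (by simp; omega) (by simp [Adj]; omega)

lemma gen_braid (i : ℕ) (h : i + 1 < m) :
    gen m i * gen m (i + 1) * gen m i = gen m (i + 1) * gen m i * gen m (i + 1) := by
  have h' : i < m := by omega
  simp only [gen, h, h', dif_pos]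
  exact s_braid (Or.inl rfl)

/-- The half twist in the positive braid monoid. -/
def delta (m : ℕ) : BMon m := half (gen m) m

lemma delta_mul_s (i : Fin m) : ∃ j, delta m * s i = s j * delta m := by
  refine ⟨⟨m - 1 - i, by omega⟩, ?_⟩
  have := mul_half gen_comm gen_braid m (m - 1 - i) le_rfl (by omega)
  have e : m - 1 - (m - 1 - (i : ℕ)) = i := by omega
  have e1 : m - 1 - (i : ℕ) < m := by omega
  rw [e] at this
  simpa [gen, e1, delta] using this.symm

lemma delta_mul (x : BMon m) : ∃ y, delta m * x = y * delta m := by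
  induction x using bmon_induction with
  | one => exact ⟨1, by simp⟩
  | mul i x ih =>
    obtain ⟨y, hy⟩ := ih
    obtain ⟨j, hj⟩ := delta_mul_s i
    exact ⟨s j * y, by rw [← mul_assoc, hj, mul_assoc, hy, mul_assoc]⟩

lemma delta_pow_mul (k : ℕ) (x : BMon m) : ∃ y, delta m ^ k * x = y * delta m ^ k := by
  induction k generalizing x with
  | zero => exact ⟨x, by simp⟩
  | succ k ih =>
    obtain ⟨y, hy⟩ := delta_mul x
    obtain ⟨z, hz⟩ := ih y
    exact ⟨z, by rw [pow_succ, mul_assoc, hy, ← mul_assoc, hz, mul_assoc]⟩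

lemma exists_mul_eq_delta_pow (a : BMon m) : ∃ k y, y * a = delta m ^ k := by
  induction a using bmon_induction with
  | one => exact ⟨0, 1, by simp⟩
  | mul i a ih =>
    obtain ⟨k, y, hy⟩ := ih
    obtain ⟨z, hz⟩ := half_right gen_comm gen_braid m i le_rfl i.2
    obtain ⟨y', hy'⟩ := delta_mul y
    refine ⟨k + 1, y' * z, ?_⟩
    have hg : gen m i = s i := by simp [gen]
    rw [hg] at hz
    change delta m = z * s i at hz
    rw [pow_succ', ← hy, ← mul_assoc (delta m), hy', mul_assoc y', mul_assoc y', hz]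
    simp only [mul_assoc]

lemma exists_ore (r a : BMon m) : ∃ p : BMon m × BMon m, p.2 * r = p.1 * a := by
  obtain ⟨k, y, hy⟩ := exists_mul_eq_delta_pow a
  obtain ⟨z, hz⟩ := delta_pow_mul k r
  exact ⟨(z * y, delta m ^ k), by simp [hz, mul_assoc, hy]⟩

/-- The positive braid monoid is cancellative and has common left multiples, so it satisfies the
Ore condition. -/
noncomputable instance : OreLocalization.OreSet (⊤ : Submonoid (BMon m)) where
  ore_right_cancel r₁ r₂ a h := ⟨1, by rw [right_cancel _ _ _ h]⟩
  oreNum r a := (exists_ore r (a : BMon m)).choose.1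
  oreDenom r a := ⟨(exists_ore r (a : BMon m)).choose.2, trivial⟩
  ore_eq r a := (exists_ore r (a : BMon m)).choose_spec

/-- The monoid of left fractions of the positive braid monoid. -/
abbrev Frac (m : ℕ) := OreLocalization (⊤ : Submonoid (BMon m)) (BMon m)

lemma numerator_injective :
    Function.Injective (OreLocalization.numeratorHom : BMon m →* Frac m) := by
  intro x y h
  rw [OreLocalization.numeratorHom_apply, OreLocalization.numeratorHom_apply,
    OreLocalization.oreDiv_eq_iff] at h
  obtain ⟨u, v, h1, h2⟩ := h
  have huv : (u : BMon m) = v := by simpa using h2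
  rw [Submonoid.smul_def, smul_eq_mul, smul_eq_mul, huv] at h1
  exact (left_cancel _ _ _ h1).symm

variable {n : ℕ}

/-- A generator as an invertible element of the monoid of fractions. -/
noncomputable def unitS (i : Fin m) : (Frac m)ˣ :=
  OreLocalization.numeratorUnit (⟨s i, trivial⟩ : (⊤ : Submonoid (BMon m)))

lemma coe_unitS (i : Fin m) : (unitS i : Frac m) = OreLocalization.numeratorHom (s i) := rfl

lemma lift_eq_one_of_rels {G : Type*} [Group G] (f : Fin m → G)
    (hc : ∀ i j : Fin m, (i : ℕ) + 1 < j → f i * f j = f j * f i)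
    (hb : ∀ i j : Fin m, (i : ℕ) + 1 = j → f i * f j * f i = f j * f i * f j) :
    ∀ r ∈ braidRels m, FreeGroup.lift f r = 1 := by
  rintro r (⟨i, j, h, rfl⟩ | ⟨i, j, h, rfl⟩)
  · simp [hc i j h]
  · simp [hb i j h]

/-- The homomorphism from the braid group to a group with elements satisfying the braid
relations. -/
def liftB {G : Type*} [Group G] (f : Fin (n - 1) → G)
    (hc : ∀ i j : Fin (n - 1), (i : ℕ) + 1 < j → f i * f j = f j * f i)
    (hb : ∀ i j : Fin (n - 1), (i : ℕ) + 1 = j → f i * f j * f i = f j * f i * f j) :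
    B n →* G :=
  PresentedGroup.toGroup (lift_eq_one_of_rels f hc hb)

@[simp] lemma liftB_σ {G : Type*} [Group G] (f : Fin (n - 1) → G) (hc hb) (i : Fin (n - 1)) :
    liftB f hc hb (σ i) = f i := PresentedGroup.toGroup.of _

lemma σ_comm (i j : Fin (n - 1)) (h : (i : ℕ) + 1 < j) : (σ i : B n) * σ j = σ j * σ i := by
  have : (PresentedGroup.mk (braidRels (n - 1))) (FreeGroup.of i * FreeGroup.of j *
      (FreeGroup.of i)⁻¹ * (FreeGroup.of j)⁻¹) = 1 :=
    PresentedGroup.one_of_mem (Or.inl ⟨i, j, h, rfl⟩)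
  simp only [map_mul, map_inv] at this
  change σ i * σ j * (σ i)⁻¹ * (σ j)⁻¹ = 1 at this
  rwa [mul_inv_eq_one, mul_inv_eq_iff_eq_mul] at this

lemma σ_braid (i j : Fin (n - 1)) (h : (i : ℕ) + 1 = j) :
    (σ i : B n) * σ j * σ i = σ j * σ i * σ j := by
  have : (PresentedGroup.mk (braidRels (n - 1))) (FreeGroup.of i * FreeGroup.of j *
      FreeGroup.of i * (FreeGroup.of j)⁻¹ * (FreeGroup.of i)⁻¹ * (FreeGroup.of j)⁻¹) = 1 :=
    PresentedGroup.one_of_mem (Or.inr ⟨i, j, h, rfl⟩)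
  simp only [map_mul, map_inv] at this
  change σ i * σ j * σ i * (σ j)⁻¹ * (σ i)⁻¹ * (σ j)⁻¹ = 1 at this
  rwa [mul_inv_eq_one, mul_inv_eq_iff_eq_mul, mul_inv_eq_iff_eq_mul] at this

/-- The canonical map from the positive braid monoid to the braid group. -/
def toB (n : ℕ) : BMon (n - 1) →* B n :=
  PresentedMonoid.lift σ (by
    rintro a b (⟨i, j, h⟩ | ⟨i, j, h⟩)
    · simpa using σ_comm i j h
    · simpa using σ_braid i j h)

@[simp] lemma toB_s (i : Fin (n - 1)) : toB n (s i) = σ i := rfl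

/-- Ore's theorem: the positive braid monoid embeds in the braid group. -/
lemma toB_injective (n : ℕ) : Function.Injective (toB n) := by
  let f : B n →* (Frac (n - 1))ˣ := liftB unitS
    (by
      intro i j h
      ext
      simp only [Units.val_mul, coe_unitS, ← map_mul]
      rw [s_comm (by rintro rfl; omega) (by unfold Adj; omega)])
    (by
      intro i j h
      ext
      simp only [Units.val_mul, coe_unitS, ← map_mul]
      rw [s_braid (Or.inl h)])
  have hf : ∀ x, (f (toB n x) : Frac (n - 1)) = OreLocalization.numeratorHom x := by
    intro x
    induction x using bmon_induction with
    | one => simp only [map_one, Units.val_one]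
    | mul i x ih =>
      rw [map_mul, map_mul, Units.val_mul, ih, map_mul, toB_s]
      congr 1
      simp only [f, liftB_σ]
      rfl
  intro x y h
  apply numerator_injective
  rw [← hf, ← hf, h]

lemma mem_P_iff {x : B n} : x ∈ P n ↔ ∃ X, toB n X = x := by
  constructor
  · intro h
    induction h using Submonoid.closure_induction with
    | mem x hx => obtain ⟨i, rfl⟩ := hx; exact ⟨s i, rfl⟩
    | one => exact ⟨1, map_one _⟩
    | mul x y _ _ hx hy =>
      obtain ⟨X, rfl⟩ := hx
      obtain ⟨Y, rfl⟩ := hy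
      exact ⟨X * Y, map_mul _ _ _⟩
  · rintro ⟨X, rfl⟩
    induction X using bmon_induction with
    | one => simp
    | mul i X ih =>
      rw [map_mul]
      exact mul_mem (Submonoid.subset_closure ⟨i, rfl⟩) ih

lemma σ_mem (i : Fin (n - 1)) : (σ i : B n) ∈ P n := Submonoid.subset_closure ⟨i, rfl⟩

end Embedding

/-! ### Length, the automorphism `ε`, and the half twist in the braid group -/

section Group

variable {n : ℕ}

/-- The exponent sum, as a homomorphism. -/
def lenBHom (n : ℕ) : B n →* Multiplicative ℤ :=
  liftB (fun _ => Multiplicative.ofAdd 1) (by intros; rfl) (by intros; rfl)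

/-- The exponent sum of a braid. -/
def lenB (x : B n) : ℤ := (lenBHom n x).toAdd

@[simp] lemma lenB_mul (x y : B n) : lenB (x * y) = lenB x + lenB y := by simp [lenB]
@[simp] lemma lenB_one : lenB (1 : B n) = 0 := by simp [lenB]
@[simp] lemma lenB_inv (x : B n) : lenB x⁻¹ = - lenB x := by simp [lenB]
@[simp] lemma lenB_σ (i : Fin (n - 1)) : lenB (σ i : B n) = 1 := by simp [lenB, lenBHom]

lemma lenB_nonneg {x : B n} (h : x ∈ P n) : 0 ≤ lenB x := by
  induction h using Submonoid.closure_induction with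
  | mem x hx => obtain ⟨i, rfl⟩ := hx; simp
  | one => simp
  | mul x y _ _ hx hy => rw [lenB_mul]; omega

lemma P_cases {x : B n} (h : x ∈ P n) : x = 1 ∨ ∃ i, ∃ y ∈ P n, x = σ i * y := by
  obtain ⟨X, rfl⟩ := mem_P_iff.1 h
  induction X using bmon_induction with
  | one => left; simp
  | mul i X _ => exact Or.inr ⟨i, _, mem_P_iff.2 ⟨X, rfl⟩, by simp⟩

lemma eq_one_of_mem {x : B n} (h : x ∈ P n) (h' : x⁻¹ ∈ P n) : x = 1 := by
  rcases P_cases h with rfl | ⟨i, y, hy, rfl⟩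
  · rfl
  · have h1 := lenB_nonneg hy
    have h2 := lenB_nonneg h'
    simp at h2
    omega

/-- The automorphism `ε` inverting every generator. -/
def eps (n : ℕ) : B n →* B n :=
  liftB (fun i => (σ i)⁻¹)
    (by intro i j h; rw [← mul_inv_rev, ← mul_inv_rev, σ_comm i j h])
    (by
      intro i j h
      rw [← mul_inv_rev, ← mul_inv_rev, ← mul_inv_rev, ← mul_inv_rev, ← mul_assoc, ← mul_assoc,
        σ_braid i j h])

@[simp] lemma eps_σ (i : Fin (n - 1)) : eps n (σ i) = (σ i)⁻¹ := by simp [eps]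

@[simp] lemma eps_eps (x : B n) : eps n (eps n x) = x := by
  have : (eps n).comp (eps n) = MonoidHom.id _ := by
    apply PresentedGroup.ext
    intro i
    change eps n (eps n (σ i)) = σ i
    simp
  exact DFunLike.congr_fun this x

lemma inv_eps_mem {x : B n} (h : x ∈ P n) : (eps n x)⁻¹ ∈ P n := by
  induction h using Submonoid.closure_induction with
  | mem x hx => obtain ⟨i, rfl⟩ := hx; simpa using σ_mem i
  | one => simp
  | mul x y _ _ hx hy => rw [map_mul, mul_inv_rev]; exact mul_mem hy hx

lemma P_cases' {x : B n} (h : x ∈ P n) : x = 1 ∨ ∃ i, ∃ y ∈ P n, x = y * σ i := by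
  rcases P_cases (inv_eps_mem h) with h1 | ⟨i, y, hy, h1⟩
  · left
    rw [inv_eq_one] at h1
    rw [← eps_eps x, h1, map_one]
  · refine Or.inr ⟨i, _, inv_eps_mem hy, ?_⟩
    have := congrArg (fun z => (eps n z)⁻¹) h1
    simpa using this

lemma σ'_comm (i j : ℕ) (h : i + 1 < j) : (σ' i : B n) * σ' j = σ' j * σ' i := by
  unfold σ'
  split_ifs with h1 h2 <;> try simp
  exact σ_comm _ _ h

lemma σ'_braid (i : ℕ) (h : i + 1 < n - 1) :
    (σ' i : B n) * σ' (i + 1) * σ' i = σ' (i + 1) * σ' i * σ' (i + 1) := by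
  have h' : i < n - 1 := by omega
  simp only [σ', h, h', dif_pos]
  exact σ_braid _ _ rfl

lemma Δ_eq_half (n : ℕ) : Δ n = half σ' (n - 1) := rfl

lemma map_desc {A A' : Type*} [Monoid A] [Monoid A'] (f : A →* A') (t : ℕ → A) (k : ℕ) :
    f (desc t k) = desc (f ∘ t) k := by
  simp [desc, map_list_prod]

lemma map_half {A A' : Type*} [Monoid A] [Monoid A'] (f : A →* A') (t : ℕ → A) (k : ℕ) :
    f (half t k) = half (f ∘ t) k := by
  simp [half, map_list_prod, Function.comp_def, map_desc]

lemma toB_delta (n : ℕ) : toB n (delta (n - 1)) = Δ n := by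
  rw [Δ_eq_half, delta, map_half]
  congr 1
  funext j
  simp only [Function.comp, gen, σ']
  split_ifs <;> simp

lemma Δ_mem (n : ℕ) : Δ n ∈ P n := mem_P_iff.2 ⟨_, toB_delta n⟩

lemma σ_mul_Δ (i : Fin (n - 1)) : ∃ j, σ i * Δ n = Δ n * σ j ∧ σ j * Δ n = Δ n * σ i := by
  have hi := i.2
  have e : n - 1 - 1 - (n - 1 - 1 - (i : ℕ)) = i := by omega
  have e1 : n - 1 - 1 - (i : ℕ) < n - 1 := by omega
  refine ⟨⟨n - 1 - 1 - i, e1⟩, ?_, ?_⟩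
  · have := mul_half (t := (σ' : ℕ → B n)) σ'_comm σ'_braid (n - 1) i le_rfl i.2
    simpa [σ', e1, ← Δ_eq_half] using this
  · have := mul_half (t := (σ' : ℕ → B n)) σ'_comm σ'_braid (n - 1) (n - 1 - 1 - i) le_rfl e1
    rw [e] at this
    simpa [σ', e1, ← Δ_eq_half] using this

lemma conj_mem {x : B n} (h : x ∈ P n) : (Δ n)⁻¹ * x * Δ n ∈ P n := by
  induction h using Submonoid.closure_induction with
  | mem x hx =>
    obtain ⟨i, rfl⟩ := hx
    obtain ⟨j, h1, -⟩ := σ_mul_Δ i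
    rw [mul_assoc, h1, inv_mul_cancel_left]
    exact σ_mem j
  | one => simp
  | mul x y _ _ hx hy =>
    have := mul_mem hx hy
    simpa only [mul_assoc, mul_inv_cancel_left] using this

lemma conj_mem' {x : B n} (h : x ∈ P n) : Δ n * x * (Δ n)⁻¹ ∈ P n := by
  induction h using Submonoid.closure_induction with
  | mem x hx =>
    obtain ⟨i, rfl⟩ := hx
    obtain ⟨j, -, h1⟩ := σ_mul_Δ i
    rw [← h1, mul_inv_cancel_right]
    exact σ_mem j
  | one => simp
  | mul x y _ _ hx hy =>
    have := mul_mem hx hy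
    simpa only [mul_assoc, inv_mul_cancel_left] using this

lemma Δ_mul_σ_inv_mem (i : Fin (n - 1)) : Δ n * (σ i)⁻¹ ∈ P n := by
  obtain ⟨z, hz⟩ := half_right (t := gen (n - 1)) gen_comm gen_braid (n - 1) i le_rfl i.2
  have h := congrArg (toB n) hz
  rw [map_mul] at h
  change toB n (delta (n - 1)) = _ at h
  rw [toB_delta] at h
  have hg : gen (n - 1) i = s i := by simp [gen]
  rw [hg, toB_s] at h
  rw [h, mul_inv_cancel_right]
  exact mem_P_iff.2 ⟨z, rfl⟩

lemma σ_inv_mul_Δ_mem (i : Fin (n - 1)) : (σ i)⁻¹ * Δ n ∈ P n := by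
  have := conj_mem (Δ_mul_σ_inv_mem i)
  simpa [mul_assoc] using this

lemma eps_σ' (j : ℕ) : eps n (σ' j) = (σ' j)⁻¹ := by
  unfold σ'
  split_ifs <;> simp

lemma inv_eps_desc (k : ℕ) :
    (eps n (desc σ' k))⁻¹ = ((List.range (k + 1)).map (σ' : ℕ → B n)).prod := by
  induction k with
  | zero => simp [desc_zero, eps_σ']
  | succ k ih =>
    rw [desc_succ, map_mul, mul_inv_rev, ih, List.range_succ (n := k + 1)]
    simp [eps_σ']

lemma inv_eps_half (k : ℕ) : (eps n (half σ' k))⁻¹ = half σ' k := by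
  induction k with
  | zero => simp [half_zero]
  | succ k ih =>
    rw [half_succ, map_mul, mul_inv_rev, ih, inv_eps_desc, ← half_succ, half_succ' σ'_comm]

@[simp] lemma eps_Δ (n : ℕ) : eps n (Δ n) = (Δ n)⁻¹ := by
  rw [← inv_inv (eps n (Δ n)), Δ_eq_half, inv_eps_half]

end Group

end Garside

namespace Garside

/-! ### The lattice order on the braid group -/

section Lattice

variable {n : ℕ}

/-- The prefix order: `x ≤ y` when `y = x * p` for a positive braid `p`. -/
instance : PartialOrder (B n) where
  le x y := x⁻¹ * y ∈ P n
  le_refl x := by simp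
  le_trans x y z h1 h2 := by simpa [mul_assoc] using mul_mem h1 h2
  le_antisymm x y h1 h2 := by
    have h := eq_one_of_mem h1 (by simpa using h2)
    rwa [inv_mul_eq_one] at h

lemma le_def {x y : B n} : x ≤ y ↔ x⁻¹ * y ∈ P n := Iff.rfl

lemma one_le_iff {x : B n} : 1 ≤ x ↔ x ∈ P n := by rw [le_def, inv_one, one_mul]

instance : MulLeftMono (B n) where
  elim z x y h := by
    change (z * x)⁻¹ * (z * y) ∈ P n
    rwa [mul_inv_rev, mul_assoc, inv_mul_cancel_left]

lemma eps_le_eps {x y : B n} (h : x ≤ y) : eps n y ≤ eps n x := by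
  rw [le_def] at h ⊢
  simpa using inv_eps_mem h

lemma eps_le_eps_iff {x y : B n} : eps n x ≤ eps n y ↔ y ≤ x :=
  ⟨fun h => by simpa using eps_le_eps h, eps_le_eps⟩

/-- The group form of `key`: a common upper bound of two generators is above their canonical
common multiple. -/
lemma σ_mul_compl_le {i j : Fin (n - 1)} {y : B n} (hi : σ i ≤ y) (hj : σ j ≤ y) :
    σ i * toB n (compl i j) ≤ y := by
  obtain ⟨X, hX⟩ := mem_P_iff.1 hi
  obtain ⟨Y, hY⟩ := mem_P_iff.1 hj
  have h : s i * X = s j * Y := by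
    apply toB_injective n
    rw [map_mul, map_mul, hX, hY, toB_s, toB_s, mul_inv_cancel_left, mul_inv_cancel_left]
  obtain ⟨z, hz, -⟩ := key h
  refine mem_P_iff.2 ⟨z, ?_⟩
  rw [hz, map_mul] at hX
  rw [mul_inv_rev, mul_assoc, ← hX, inv_mul_cancel_left]

lemma exists_lub_of_bdd (N : ℕ) : ∀ x a b : B n, lenB x ≤ N → a ∈ P n → b ∈ P n → a ≤ x → b ≤ x →
    ∃ m, a ≤ m ∧ b ≤ m ∧ ∀ y, a ≤ y → b ≤ y → m ≤ y := by
  induction N with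
  | zero =>
    intro x a b hx ha hb hax hbx
    rcases P_cases ha with rfl | ⟨i, a', ha', rfl⟩
    · exact ⟨b, one_le_iff.2 hb, le_rfl, fun y _ h => h⟩
    · have h1 := lenB_nonneg hax
      have h2 := lenB_nonneg ha'
      simp at h1 hx
      omega
  | succ N ih =>
    intro x a b hx ha hb hax hbx
    rcases P_cases ha with rfl | ⟨i, a', ha', rfl⟩
    · exact ⟨b, one_le_iff.2 hb, le_rfl, fun y _ h => h⟩
    rcases P_cases hb with rfl | ⟨j, b', hb', rfl⟩
    · exact ⟨_, le_rfl, one_le_iff.2 ha, fun y h _ => h⟩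
    have hq : toB n (compl i j) ∈ P n := mem_P_iff.2 ⟨_, rfl⟩
    have hq' : toB n (compl j i) ∈ P n := mem_P_iff.2 ⟨_, rfl⟩
    have hl : σ i * toB n (compl i j) = σ j * toB n (compl j i) := by
      have := congrArg (toB n) (s_mul_compl i j)
      simpa using this
    have hia : ∀ c ∈ P n, (σ i : B n) ≤ σ i * c := fun c hc => by
      rw [le_def, inv_mul_cancel_left]; exact hc
    have hjb : ∀ c ∈ P n, (σ j : B n) ≤ σ j * c := fun c hc => by
      rw [le_def, inv_mul_cancel_left]; exact hc
    set q := toB n (compl i j)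
    set q' := toB n (compl j i)
    have hlx : σ i * q ≤ x := σ_mul_compl_le ((hia _ ha').trans hax) ((hjb _ hb').trans hbx)
    obtain ⟨m₁, ha₁, hq₁, hm₁⟩ := ih ((σ i)⁻¹ * x) a' q (by simp at hx ⊢; omega) ha' hq
      (le_inv_mul_iff_mul_le.2 hax) (le_inv_mul_iff_mul_le.2 hlx)
    obtain ⟨m₂, hb₂, hq₂, hm₂⟩ := ih ((σ j)⁻¹ * x) b' q' (by simp at hx ⊢; omega) hb' hq'
      (le_inv_mul_iff_mul_le.2 hbx) (le_inv_mul_iff_mul_le.2 (hl ▸ hlx))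
    have e₁ : ∀ y, q⁻¹ * m₁ ≤ (σ i * q)⁻¹ * y ↔ m₁ ≤ (σ i)⁻¹ * y := fun y => by
      rw [mul_inv_rev, mul_assoc, mul_le_mul_iff_left]
    have e₂ : ∀ y, q'⁻¹ * m₂ ≤ (σ i * q)⁻¹ * y ↔ m₂ ≤ (σ j)⁻¹ * y := fun y => by
      rw [hl, mul_inv_rev, mul_assoc, mul_le_mul_iff_left]
    obtain ⟨z, hz₁, hz₂, hz⟩ := ih ((σ i * q)⁻¹ * x) (q⁻¹ * m₁) (q'⁻¹ * m₂)
      (by have := lenB_nonneg hq; simp at hx ⊢; omega) hq₁ hq₂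
      ((e₁ x).2 (hm₁ _ (le_inv_mul_iff_mul_le.2 hax) (le_inv_mul_iff_mul_le.2 hlx)))
      ((e₂ x).2 (hm₂ _ (le_inv_mul_iff_mul_le.2 hbx) (le_inv_mul_iff_mul_le.2 (hl ▸ hlx))))
    have f₁ : m₁ ≤ (σ i)⁻¹ * (σ i * q * z) := (e₁ _).1 (by rwa [inv_mul_cancel_left])
    have f₂ : m₂ ≤ (σ j)⁻¹ * (σ i * q * z) := (e₂ _).1 (by rwa [inv_mul_cancel_left])
    refine ⟨σ i * q * z, le_inv_mul_iff_mul_le.1 (ha₁.trans f₁),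
      le_inv_mul_iff_mul_le.1 (hb₂.trans f₂), fun y hay hby => ?_⟩
    have hly : σ i * q ≤ y := σ_mul_compl_le ((hia _ ha').trans hay) ((hjb _ hb').trans hby)
    refine le_inv_mul_iff_mul_le.1 (hz _ ((e₁ y).2 (hm₁ _ ?_ ?_)) ((e₂ y).2 (hm₂ _ ?_ ?_)))
    · exact le_inv_mul_iff_mul_le.2 hay
    · exact le_inv_mul_iff_mul_le.2 hly
    · exact le_inv_mul_iff_mul_le.2 hby
    · exact le_inv_mul_iff_mul_le.2 (hl ▸ hly)

lemma mul_Δ_le {x y : B n} (h : x ≤ y) : x * Δ n ≤ y * Δ n := by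
  have := conj_mem h
  rw [le_def]
  simpa [mul_assoc] using this

lemma mul_Δ_inv_le {x y : B n} (h : x ≤ y) : x * (Δ n)⁻¹ ≤ y * (Δ n)⁻¹ := by
  have := conj_mem' h
  rw [le_def]
  simpa [mul_assoc] using this

/-- Conjugation by `Δ` preserves positivity, so right multiplication by powers of `Δ` is
monotone. -/
lemma mul_zpow_le {x y : B n} (h : x ≤ y) (k : ℤ) : x * Δ n ^ k ≤ y * Δ n ^ k := by
  induction k with
  | zero => simpa using h
  | succ k ih =>
    rw [zpow_add, zpow_one, ← mul_assoc, ← mul_assoc]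
    exact mul_Δ_le ih
  | pred k ih =>
    rw [zpow_sub, zpow_one, ← mul_assoc, ← mul_assoc]
    exact mul_Δ_inv_le ih

lemma le_mul_pos {x p : B n} (h : p ∈ P n) : x ≤ x * p := by
  rwa [le_def, inv_mul_cancel_left]

lemma zpow_le_zpow {i j : ℤ} (h : i ≤ j) : Δ n ^ i ≤ Δ n ^ j := by
  rw [le_def, ← zpow_neg, ← zpow_add]
  obtain ⟨k, hk⟩ := Int.eq_ofNat_of_zero_le (show 0 ≤ -i + j by omega)
  rw [hk, zpow_natCast]
  exact pow_mem (Δ_mem n) k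

/-- Every braid lies between two powers of `Δ`. -/
lemma exists_zpow_bounds (x : B n) : ∃ k : ℕ, Δ n ^ (-(k : ℤ)) ≤ x ∧ x ≤ Δ n ^ (k : ℤ) := by
  induction x using PresentedGroup.induction_on with
  | _ w =>
  induction w using FreeGroup.induction_on with
  | C1 => exact ⟨0, by simp, by simp⟩
  | of i =>
    refine ⟨1, ?_, ?_⟩
    · refine le_trans (b := 1) ?_ (one_le_iff.2 (σ_mem i))
      simpa using zpow_le_zpow (n := n) (show (-1 : ℤ) ≤ 0 by omega)
    · rw [Nat.cast_one, zpow_one]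
      exact σ_inv_mul_Δ_mem i
  | inv_of i _ =>
    refine ⟨1, ?_, ?_⟩
    · rw [le_def, Nat.cast_one, zpow_neg, zpow_one, inv_inv, map_inv]
      exact Δ_mul_σ_inv_mem i
    · refine le_trans (b := 1) ?_ ?_
      · rw [le_def, map_inv, inv_inv, mul_one]
        exact σ_mem i
      · simpa using zpow_le_zpow (n := n) (show (0 : ℤ) ≤ 1 by omega)
  | mul x y hx hy =>
    obtain ⟨k, hk, hk'⟩ := hx
    obtain ⟨l, hl, hl'⟩ := hy
    rw [map_mul]
    refine ⟨k + l, ?_, ?_⟩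
    · have h1 := mul_zpow_le hk (-(l : ℤ))
      have h2 := mul_le_mul_right hl (PresentedGroup.mk (braidRels (n - 1)) x)
      refine le_trans (le_of_eq ?_) (h1.trans h2)
      rw [← zpow_add]
      congr 1
      push_cast
      ring
    · have h1 := mul_zpow_le hk' (l : ℤ)
      have h2 := mul_le_mul_right hl' (PresentedGroup.mk (braidRels (n - 1)) x)
      refine (h2.trans h1).trans (le_of_eq ?_)
      rw [← zpow_add]
      congr 1

lemma exists_lub (a b : B n) : ∃ m, a ≤ m ∧ b ≤ m ∧ ∀ y, a ≤ y → b ≤ y → m ≤ y := by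
  obtain ⟨k, hk, hk'⟩ := exists_zpow_bounds a
  obtain ⟨l, hl, hl'⟩ := exists_zpow_bounds b
  set d := Δ n ^ (-((k : ℤ) + l)) with hd
  have had : d ≤ a := (zpow_le_zpow (by omega)).trans hk
  have hbd : d ≤ b := (zpow_le_zpow (by omega)).trans hl
  have hat : a ≤ Δ n ^ ((k : ℤ) + l) := hk'.trans (zpow_le_zpow (by omega))
  have hbt : b ≤ Δ n ^ ((k : ℤ) + l) := hl'.trans (zpow_le_zpow (by omega))
  obtain ⟨m, ham, hbm, hm⟩ := exists_lub_of_bdd (lenB (d⁻¹ * Δ n ^ ((k : ℤ) + l))).toNat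
    (d⁻¹ * Δ n ^ ((k : ℤ) + l)) (d⁻¹ * a) (d⁻¹ * b) (Int.self_le_toNat _) had hbd
    (mul_le_mul_right hat _) (mul_le_mul_right hbt _)
  refine ⟨d * m, inv_mul_le_iff_le_mul.1 ham, inv_mul_le_iff_le_mul.1 hbm, fun y hay hby => ?_⟩
  exact le_inv_mul_iff_mul_le.1 (hm _ (mul_le_mul_right hay _) (mul_le_mul_right hby _))

/-- Garside's theorem: the prefix order is a lattice order. Meets are obtained from joins through
the order-reversing automorphism `ε`. -/
noncomputable instance : Lattice (B n) where
  sup a b := (exists_lub a b).choose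
  le_sup_left a b := (exists_lub a b).choose_spec.1
  le_sup_right a b := (exists_lub a b).choose_spec.2.1
  sup_le a b c h1 h2 := (exists_lub a b).choose_spec.2.2 c h1 h2
  inf a b := eps n (exists_lub (eps n a) (eps n b)).choose
  inf_le_left a b := by
    simpa using eps_le_eps (exists_lub (eps n a) (eps n b)).choose_spec.1
  inf_le_right a b := by
    simpa using eps_le_eps (exists_lub (eps n a) (eps n b)).choose_spec.2.1
  le_inf a b c h1 h2 := by
    simpa using eps_le_eps
      ((exists_lub (eps n b) (eps n c)).choose_spec.2.2 _ (eps_le_eps h1) (eps_le_eps h2))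

lemma eps_sup (x y : B n) : eps n (x ⊔ y) = eps n x ⊓ eps n y := by
  apply le_antisymm
  · exact le_inf (eps_le_eps le_sup_left) (eps_le_eps le_sup_right)
  · rw [← eps_le_eps_iff, eps_eps]
    refine sup_le ?_ ?_
    · simpa using eps_le_eps (inf_le_left (a := eps n x) (b := eps n y))
    · simpa using eps_le_eps (inf_le_right (a := eps n x) (b := eps n y))

lemma eps_inf (x y : B n) : eps n (x ⊓ y) = eps n x ⊔ eps n y := by
  rw [← eps_eps (eps n x ⊔ eps n y), eps_sup, eps_eps, eps_eps]

lemma eps_zpow (k : ℤ) : eps n (Δ n ^ k) = Δ n ^ (-k) := by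
  rw [map_zpow, eps_Δ, inv_zpow, zpow_neg]

lemma mul_zpow_le_iff {x y : B n} (k : ℤ) : x * Δ n ^ k ≤ y * Δ n ^ k ↔ x ≤ y :=
  ⟨fun h => by simpa [mul_assoc] using mul_zpow_le h (-k), fun h => mul_zpow_le h k⟩

lemma mul_zpow_le_iff' {x y : B n} (k : ℤ) : x * Δ n ^ k ≤ y ↔ x ≤ y * Δ n ^ (-k) := by
  rw [← mul_zpow_le_iff k (y := y * Δ n ^ (-k)), mul_assoc, ← zpow_add]
  simp

end Lattice

end Garside

namespace Garside

/-! ### Twisted conjugation and palindromic-free braids -/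

section Twisted

variable {n : ℕ}

/-- The `ε`-twisted conjugate `ε(c)⁻¹ u c`, which equals `rev(c) u c`. -/
def tw (u c : B n) : B n := (eps n c)⁻¹ * u * c

lemma tw_one (u : B n) : tw u 1 = u := by simp [tw]

lemma tw_mul (u c d : B n) : tw u (c * d) = tw (tw u c) d := by
  simp [tw, mul_assoc]

lemma tw_mem_iff {u c : B n} : tw u c ∈ P n ↔ eps n c ≤ u * c := by
  rw [le_def, tw, mul_assoc]

lemma tw_le_iff {u c z : B n} : tw u c ≤ z ↔ u * c ≤ eps n c * z := by
  rw [tw, mul_assoc, inv_mul_le_iff_le_mul]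

lemma tw_σ_inv (x : B n) (i : Fin (n - 1)) : tw x (σ i)⁻¹ = (σ i)⁻¹ * x * (σ i)⁻¹ := by
  simp [tw]

/-- Stripping palindromic pairs of letters from a positive braid ends in a palindromic-free one. -/
lemma exists_palFree (N : ℕ) : ∀ x : B n, lenB x ≤ N → x ∈ P n →
    ∃ p ∈ P n, tw x p⁻¹ ∈ P n ∧ PalFree (tw x p⁻¹) := by
  induction N with
  | zero =>
    intro x hx hP
    refine ⟨1, one_mem _, by simpa [tw_one] using hP, ?_⟩
    intro i hi
    have := lenB_nonneg hi
    simp [tw_one] at this hx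
    omega
  | succ N ih =>
    intro x hx hP
    by_cases h : PalFree x
    · exact ⟨1, one_mem _, by simpa [tw_one] using hP, by simpa [tw_one] using h⟩
    · unfold PalFree at h
      push Not at h
      obtain ⟨i, hi⟩ := h
      obtain ⟨p, hp, h1, h2⟩ := ih _ (by simp at hx ⊢; omega) hi
      rw [← tw_σ_inv, ← tw_mul, ← mul_inv_rev] at h1 h2
      exact ⟨p * σ i, mul_mem hp (σ_mem i), h1, h2⟩

/-- The elements `d` for which `tw u d` is positive form an up-set, and `tw u c` is
palindromic-free only if `c` is minimal in it. -/
lemma eq_of_palFree {u c d : B n} (hc : PalFree (tw u c)) (hdc : d ≤ c)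
    (hd : eps n d ≤ u * d) : d = c := by
  rcases P_cases' hdc with h | ⟨i, y, hy, h⟩
  · exact inv_mul_eq_one.1 h
  · exfalso
    apply hc i
    have hcd : c * (σ i)⁻¹ = d * y := by
      rw [mul_inv_eq_iff_eq_mul, mul_assoc, ← h, mul_inv_cancel_left]
    rw [← tw_σ_inv, ← tw_mul, hcd, tw_mem_iff]
    have h1 : d ≤ d * y := le_mul_pos hy
    exact (eps_le_eps h1).trans (hd.trans (mul_le_mul_right h1 u))

lemma zpow_le_mul {u : B n} (hu : 1 ≤ u) (k : ℤ) : Δ n ^ k ≤ u * Δ n ^ k := by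
  simpa using mul_zpow_le hu k

lemma mul_zpow_le_zpow {u : B n} {r : ℕ} (hu : u ≤ Δ n ^ (r : ℤ)) (k : ℤ) :
    u * Δ n ^ k ≤ Δ n ^ (r + k) := by
  rw [zpow_add]
  exact mul_zpow_le hu k

lemma inv_le_zpow {c : B n} {k : ℤ} (h : Δ n ^ (-k) ≤ c) : c⁻¹ ≤ Δ n ^ k := by
  have h1 := mul_le_mul_right (mul_zpow_le h k) c⁻¹
  simpa using h1

lemma zpow_le_inv {c : B n} {k : ℤ} (h : c ≤ Δ n ^ k) : Δ n ^ (-k) ≤ c⁻¹ := by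
  have h1 := mul_le_mul_right (mul_zpow_le h (-k)) c⁻¹
  simpa using h1

lemma eps_le_zpow {c : B n} {k : ℤ} (h : Δ n ^ (-k) ≤ c) : eps n c ≤ Δ n ^ k := by
  simpa [eps_zpow] using eps_le_eps h

/-- A conjugator leading to a palindromic-free braid is bounded above as soon as it is bounded
below: otherwise `c ⊓ Δ ^ k` would contradict minimality. -/
lemma le_zpow_of_palFree {u c : B n} {k : ℤ} (hk : 0 ≤ k) (hu : u ∈ P n) (hc : tw u c ∈ P n)
    (hpf : PalFree (tw u c)) (h : Δ n ^ (-k) ≤ c) : c ≤ Δ n ^ k := by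
  rw [tw_mem_iff] at hc
  rw [← one_le_iff] at hu
  have hle : eps n (c ⊓ Δ n ^ k) ≤ u * (c ⊓ Δ n ^ k) := by
    rw [eps_inf, mul_inf, eps_zpow]
    refine sup_le (le_inf hc ?_) (le_inf ?_ ?_)
    · exact (eps_le_zpow h).trans (zpow_le_mul hu k)
    · exact (zpow_le_mul hu _).trans (mul_le_mul_right h u)
    · exact (zpow_le_zpow (by omega)).trans (zpow_le_mul hu k)
  exact inf_eq_left.1 (eq_of_palFree hpf inf_le_left hle)

lemma zpow_le_of_palFree {u c : B n} {k : ℤ} (hk : 0 ≤ k) (hu : u ∈ P n) (hpf : PalFree u)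
    (hc : tw u c ∈ P n) (h : c ≤ Δ n ^ k) : Δ n ^ (-k) ≤ c := by
  have e : tw (tw u c) c⁻¹ = u := by rw [← tw_mul, mul_inv_cancel, tw_one]
  have h1 := le_zpow_of_palFree (u := tw u c) (c := c⁻¹) hk hc (by rwa [e]) (by rwa [e])
    (zpow_le_inv h)
  simpa using zpow_le_inv h1

/-- The interpolation step. Write `φ x = u⁻¹ ε(x)`, an order-reversing map; the conjugators `x`
for which `tw u x` lies between `1` and `Δ ^ r` are those with `φ x ≤ x ≤ φ x * Δ ^ r`. Truncating
such a `c` to `d = (c ⊓ Δ ^ k) ⊔ Δ ^ (-k)` may violate the first inequality, and `d ⊔ φ d`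
repairs it. -/
lemma exists_interpolant {u c : B n} {r : ℕ} (hr : 1 ≤ r) (k : ℕ) (hu : 1 ≤ u)
    (hur : u ≤ Δ n ^ (r : ℤ)) (hc : eps n c ≤ u * c) (hcr : u * c ≤ eps n c * Δ n ^ (r : ℤ))
    (hl : Δ n ^ (-((k : ℤ) + 1)) ≤ c) :
    ∃ g, eps n g ≤ u * g ∧ u * g ≤ eps n g * Δ n ^ (r : ℤ) ∧ g ≤ Δ n ^ (k : ℤ) ∧
      g ≤ c * Δ n ^ (1 : ℤ) := by
  let φ : B n → B n := fun x => u⁻¹ * eps n x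
  have hφ : ∀ {x y : B n}, x ≤ y → φ y ≤ φ x := fun h => mul_le_mul_right (eps_le_eps h) _
  have hφΔ : ∀ (x : B n) (i : ℤ), φ (x * Δ n ^ i) = φ x * Δ n ^ (-i) := fun x i => by
    simp only [φ, map_mul, eps_zpow, mul_assoc]
  have hφΔ' : ∀ i : ℤ, φ (Δ n ^ i) ≤ Δ n ^ (-i) := fun i => by
    simp only [φ, eps_zpow]
    exact inv_mul_le_iff_le_mul.2 (zpow_le_mul hu _)
  have hΔφ : ∀ i : ℤ, Δ n ^ (-i) * Δ n ^ (-(r : ℤ)) ≤ φ (Δ n ^ i) := fun i => by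
    simp only [φ, eps_zpow]
    rw [le_inv_mul_iff_mul_le, ← zpow_add]
    refine (mul_zpow_le_zpow hur _).trans (zpow_le_zpow (by omega))
  have hφc : φ c ≤ c := inv_mul_le_iff_le_mul.2 hc
  have hcφ : c * Δ n ^ (-(r : ℤ)) ≤ φ c := by
    rw [mul_zpow_le_iff', neg_neg, mul_assoc, le_inv_mul_iff_mul_le]
    exact hcr
  have hφsup : ∀ x y, φ (x ⊔ y) = φ x ⊓ φ y := fun x y => by simp only [φ, eps_sup, mul_inf]
  have hφinf : ∀ x y, φ (x ⊓ y) = φ x ⊔ φ y := fun x y => by simp only [φ, eps_inf, mul_sup]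
  have hshift : ∀ (x : B n) (i : ℤ), 0 ≤ i → x * Δ n ^ (-i) ≤ x := fun x i hi => by
    have := mul_le_mul_right (zpow_le_zpow (n := n) (show -i ≤ 0 by omega)) x
    simpa using this
  have hunshift : ∀ (x : B n) (i : ℤ), 0 ≤ i → x ≤ x * Δ n ^ i := fun x i hi => by
    have := mul_le_mul_right (zpow_le_zpow (n := n) hi) x
    simpa using this
  set d := (c ⊓ Δ n ^ (k : ℤ)) ⊔ Δ n ^ (-(k : ℤ)) with hd
  have hφd : φ d = (φ c ⊔ φ (Δ n ^ (k : ℤ))) ⊓ φ (Δ n ^ (-(k : ℤ))) := by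
    rw [hd, hφsup, hφinf]
  have hΔc : Δ n ^ (-(k : ℤ)) ≤ c * Δ n ^ (1 : ℤ) := by
    have := mul_zpow_le hl 1
    rw [← zpow_add] at this
    exact le_trans (zpow_le_zpow (by omega)) this
  have hdk : d ≤ Δ n ^ (k : ℤ) := sup_le inf_le_right (zpow_le_zpow (by omega))
  have hdc : d ≤ c * Δ n ^ (1 : ℤ) :=
    sup_le (inf_le_left.trans (hunshift c 1 (by omega))) hΔc
  have hφdk : φ d ≤ Δ n ^ (k : ℤ) := by
    rw [hφd]
    refine inf_le_right.trans ((hφΔ' _).trans ?_)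
    rw [neg_neg]
  have hφdc : φ d ≤ c * Δ n ^ (1 : ℤ) := by
    rw [hφd]
    exact inf_le_left.trans (sup_le (hφc.trans (hunshift c 1 (by omega))) ((hφΔ' _).trans hΔc))
  have h1 : d * Δ n ^ (-(r : ℤ)) ≤ φ d := by
    rw [hφd, mul_zpow_le_iff']
    refine sup_le ?_ ?_ <;> rw [← mul_zpow_le_iff']
    · refine le_inf (le_sup_of_le_left ?_) ?_
      · exact (mul_zpow_le inf_le_left _).trans hcφ
      · refine (mul_zpow_le inf_le_right _).trans ?_
        simpa using hΔφ (-(k : ℤ))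
    · refine le_inf (le_sup_of_le_right ?_) ?_
      · exact hΔφ k
      · refine (mul_zpow_le (zpow_le_zpow (show -(k : ℤ) ≤ k by omega)) _).trans ?_
        simpa using hΔφ (-(k : ℤ))
  have h2 : φ d * Δ n ^ (-(r : ℤ)) ≤ φ (φ d) := by
    rw [← hφΔ]
    apply hφ
    refine le_trans ?_ (mul_le_mul_right (zpow_le_zpow (show (1 : ℤ) ≤ r by omega)) d)
    rw [← neg_neg (1 : ℤ), ← mul_zpow_le_iff']
    refine le_sup_of_le_left (le_inf ?_ ?_)
    · rw [mul_zpow_le_iff', neg_neg]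
      exact hφdc
    · exact (hshift _ _ (by omega)).trans hφdk
  have h3 : d * Δ n ^ (-(r : ℤ)) ≤ φ (φ d) := by
    have hcc : c * Δ n ^ (-(r : ℤ)) ≤ φ (φ c) := hcφ.trans (hφ hφc)
    have hΔΔ : ∀ i : ℤ, Δ n ^ i * Δ n ^ (-(r : ℤ)) ≤ φ (φ (Δ n ^ i)) := fun i => by
      refine le_trans ?_ (hφ (hφΔ' i))
      simpa using hΔφ (-i)
    rw [mul_zpow_le_iff', hφd, hφinf, hφsup]
    refine sup_le ?_ ?_ <;> rw [← mul_zpow_le_iff']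
    · refine le_sup_of_le_left (le_inf ?_ ?_)
      · exact (mul_zpow_le inf_le_left _).trans hcc
      · exact (mul_zpow_le inf_le_right _).trans (hΔΔ _)
    · exact le_sup_of_le_right (hΔΔ _)
  have hg1 : φ (d ⊔ φ d) ≤ d ⊔ φ d := by
    rw [hφsup d (φ d)]
    exact inf_le_left.trans le_sup_right
  have hg2 : (d ⊔ φ d) * Δ n ^ (-(r : ℤ)) ≤ φ (d ⊔ φ d) := by
    rw [hφsup d (φ d), mul_zpow_le_iff']
    refine sup_le ?_ ?_ <;> rw [← mul_zpow_le_iff']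
    · exact le_inf h1 h3
    · exact le_inf (hshift _ _ (by omega)) h2
  refine ⟨d ⊔ φ d, inv_mul_le_iff_le_mul.1 hg1, ?_, sup_le hdk hφdk, sup_le hdc hφdc⟩
  rw [mul_zpow_le_iff', neg_neg, mul_assoc, le_inv_mul_iff_mul_le] at hg2
  exact hg2

/-! ### Building the chain -/

/-- One step of the chain: `x` and `y` are simply `ε`-twisted conjugated and `y` is a positive
palindromic-free prefix of `Δ ^ r`. -/
def Step (r : ℕ) (x y : B n) : Prop :=
  (y ∈ P n ∧ PalFree y ∧ y ≤ Δ n ^ (r : ℤ)) ∧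
    ∃ a b : B n, Simple a ∧ Simple b ∧ tw x a = tw y b

lemma step_of_bounds {r : ℕ} {u e : B n} (h0 : tw u e ∈ P n) (h1 : PalFree (tw u e))
    (h2 : tw u e ≤ Δ n ^ (r : ℤ)) (hl : Δ n ^ (-(1 : ℤ)) ≤ e) (hle : e ≤ Δ n ^ (1 : ℤ)) :
    Step r u (tw u e) := by
  have hΔ : (1 : B n) ≤ Δ n := one_le_iff.2 (Δ_mem n)
  have hl' := inv_le_zpow hl
  rw [zpow_one] at hl' hle
  refine ⟨⟨h0, h1, h2⟩, e ⊔ 1, e⁻¹ * (e ⊔ 1), ⟨?_, ?_⟩, ⟨?_, ?_⟩, ?_⟩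
  · exact one_le_iff.1 le_sup_right
  · exact sup_le hle hΔ
  · exact le_def.1 le_sup_left
  · rw [mul_sup, inv_mul_cancel, mul_one]
    exact sup_le hΔ hl'
  · rw [← tw_mul, mul_inv_cancel_left]

lemma chain_of_bounds {r : ℕ} (hr : 1 ≤ r) {u : B n} (hu : u ∈ P n) (hpf : PalFree u)
    (hur : u ≤ Δ n ^ (r : ℤ)) (k : ℕ) : ∀ c : B n, tw u c ∈ P n → PalFree (tw u c) →
    tw u c ≤ Δ n ^ (r : ℤ) → Δ n ^ (-(k : ℤ)) ≤ c → c ≤ Δ n ^ (k : ℤ) →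
    Relation.ReflTransGen (Step r) u (tw u c) := by
  induction k with
  | zero =>
    intro c _ _ _ h1 h2
    have : c = 1 := le_antisymm (by simpa using h2) (by simpa using h1)
    rw [this, tw_one]
  | succ k ih =>
    intro c hc hcpf hcr h1 _
    push_cast at h1
    obtain ⟨g, hg, hgr, hgk, hgc⟩ := exists_interpolant hr k (one_le_iff.2 hu) hur
      (tw_mem_iff.1 hc) (tw_le_iff.1 hcr) h1
    obtain ⟨p, hp, hP, hPF⟩ := exists_palFree (lenB (tw u g)).toNat (tw u g)
      (Int.self_le_toNat _) (tw_mem_iff.2 hg)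
    rw [← tw_mul] at hP hPF
    have hgg : g * p⁻¹ ≤ g := by
      have := le_mul_pos (x := g * p⁻¹) hp
      rwa [inv_mul_cancel_right] at this
    set g' := g * p⁻¹
    have hr' : tw u g' ≤ Δ n ^ (r : ℤ) := by
      rw [tw_le_iff]
      exact (mul_le_mul_right hgg u).trans (hgr.trans (mul_zpow_le (eps_le_eps hgg) _))
    have hgk' := hgg.trans hgk
    have hgc' := hgg.trans hgc
    have hchain := ih g' hP hPF hr' (zpow_le_of_palFree (by omega) hu hpf hP hgk') hgk'
    have e : tw u c = tw (tw u g') (g'⁻¹ * c) := by rw [← tw_mul, mul_inv_cancel_left]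
    have hlow : Δ n ^ (-(1 : ℤ)) ≤ g'⁻¹ * c := by
      rw [le_inv_mul_iff_mul_le, mul_zpow_le_iff', neg_neg]
      exact hgc'
    rw [e] at hc hcpf hcr ⊢
    exact hchain.tail (step_of_bounds hc hcpf hcr hlow
      (le_zpow_of_palFree (by omega) hP hc hcpf hlow))

/-! ### Canonical length of palindromic-free braids -/

lemma eq_Δ_of_le {x : B n} (hpf : PalFree x) (h : Δ n ≤ x) : x = Δ n := by
  rcases P_cases' h with h1 | ⟨i, y, hy, h1⟩
  · exact (inv_mul_eq_one.1 h1).symm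
  · exfalso
    apply hpf i
    have hx : x = Δ n * y * σ i := by rw [mul_assoc, ← h1, mul_inv_cancel_left]
    have := mul_mem (σ_inv_mul_Δ_mem i) hy
    rw [hx]
    simpa [mul_assoc] using this

lemma le_or_eq_Δ {x : B n} {r : ℕ} (hpf : PalFree x) (h : lenLE x r) :
    x ≤ Δ n ^ (r : ℤ) ∨ x = Δ n := by
  obtain ⟨p, h1, h2⟩ := h
  rcases le_or_gt p 0 with hp | hp
  · left
    exact le_trans (b := Δ n ^ (p + (r : ℤ))) h2 (zpow_le_zpow (by omega))
  · right
    refine eq_Δ_of_le hpf ?_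
    rw [zpow_neg] at h1
    have h3 : Δ n ^ p ≤ x := h1
    have h4 := zpow_le_zpow (n := n) (show 1 ≤ p by omega)
    rw [zpow_one] at h4
    exact h4.trans h3

lemma lenLE_of_le {x : B n} {r : ℕ} (hx : x ∈ P n) (h : x ≤ Δ n ^ (r : ℤ)) : lenLE x r :=
  ⟨0, by simpa using hx, by rw [zero_add]; exact h⟩

/-- The permutation of the strands, as a permutation of `ℕ`. -/
def permHom (n : ℕ) : B n →* Equiv.Perm ℕ :=
  liftB (fun i => Equiv.swap (i : ℕ) (i + 1))
    (by
      intro i j h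
      refine (Equiv.Perm.Disjoint.commute ?_).eq
      intro x
      rcases lt_or_ge x (j : ℕ) with hx | hx
      · right
        exact Equiv.swap_apply_of_ne_of_ne (by omega) (by omega)
      · left
        exact Equiv.swap_apply_of_ne_of_ne (by omega) (by omega))
    (by
      intro i j h
      rw [← h]
      ext x
      simp only [Equiv.Perm.mul_apply, Equiv.swap_apply_def]
      split_ifs <;> omega)

lemma permHom_eps (c : B n) : permHom n (eps n c) = permHom n c := by
  have : (permHom n).comp (eps n) = permHom n := by
    apply PresentedGroup.ext
    intro i
    change permHom n (eps n (σ i)) = permHom n (σ i)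
    rw [eps_σ, map_inv, permHom, liftB_σ, Equiv.swap_inv]
  exact DFunLike.congr_fun this c

lemma permHom_σ' {j : ℕ} (h : j < n - 1) : permHom n (σ' j) = Equiv.swap j (j + 1) := by
  rw [σ', dif_pos h, permHom, liftB_σ]

lemma permHom_desc (k : ℕ) (hk : k < n - 1) :
    permHom n (desc σ' k) 0 = k + 1 ∧ ∀ j, k + 1 < j → permHom n (desc σ' k) j = j := by
  induction k with
  | zero =>
    rw [desc_zero, permHom_σ' hk]
    exact ⟨by simp, fun j hj => Equiv.swap_apply_of_ne_of_ne (by omega) (by omega)⟩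
  | succ k ih =>
    obtain ⟨h1, h2⟩ := ih (by omega)
    rw [desc_succ, map_mul, permHom_σ' hk]
    refine ⟨by simp [h1], fun j hj => ?_⟩
    rw [Equiv.Perm.mul_apply, h2 j (by omega)]
    exact Equiv.swap_apply_of_ne_of_ne (by omega) (by omega)

lemma permHom_half (k : ℕ) (hk : k ≤ n - 1) :
    permHom n (half σ' k) 0 = k ∧ ∀ j, k < j → permHom n (half σ' k) j = j := by
  induction k with
  | zero => simp [half_zero]
  | succ k ih =>
    obtain ⟨h1, h2⟩ := ih (by omega)
    obtain ⟨h3, h4⟩ := permHom_desc (n := n) k (by omega)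
    rw [half_succ, map_mul]
    refine ⟨?_, fun j hj => ?_⟩
    · rw [Equiv.Perm.mul_apply, h3, h2 (k + 1) (by omega)]
    · rw [Equiv.Perm.mul_apply, h4 _ hj, h2 j (by omega)]

/-- The half twist is nontrivial on strands, hence it is `1` only in the trivial braid group. -/
lemma Δ_eq_one_of_permHom (h : permHom n (Δ n) = 1) : Δ n = 1 := by
  have h1 := (permHom_half (n := n) (n - 1) le_rfl).1
  rw [← Δ_eq_half, h] at h1
  have h2 : n - 1 = 0 := by simpa using h1.symm
  have h3 : ∀ m, m = 0 → half (σ' : ℕ → B n) m = 1 := by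
    rintro _ rfl
    exact half_zero _
  exact h3 _ h2

lemma permHom_tw (u c : B n) :
    permHom n (tw u c) = (permHom n c)⁻¹ * permHom n u * permHom n c := by
  simp [tw, permHom_eps]

/-- In canonical length zero the only palindromic-free positive braids are `1` and `Δ`, and these
have non-conjugate permutations. -/
lemma eq_of_lenLE_zero {u c : B n} (hu : u ∈ P n) (hpu : PalFree u) (hv : tw u c ∈ P n)
    (hpv : PalFree (tw u c)) (hlu : lenLE u 0) (hlv : lenLE (tw u c) 0) : u = tw u c := by
  have key0 : ∀ x : B n, x ∈ P n → PalFree x → lenLE x 0 → x = 1 ∨ x = Δ n := by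
    intro x hx hpx hlx
    rcases le_or_eq_Δ hpx hlx with h | h
    · exact Or.inl (le_antisymm (by simpa using h) (one_le_iff.2 hx))
    · exact Or.inr h
  have hperm := permHom_tw u c
  rcases key0 _ hu hpu hlu with h1 | h1 <;> rcases key0 _ hv hpv hlv with h2 | h2
  · rw [h1] at h2 ⊢
    exact h2.symm
  · rw [h2, h1] at hperm
    rw [h2, h1, Δ_eq_one_of_permHom (by simpa using hperm)]
  · rw [h2, h1, map_one, eq_comm, mul_assoc, inv_mul_eq_one, eq_comm, mul_eq_right] at hperm
    rw [h2, h1, Δ_eq_one_of_permHom hperm]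
  · rw [h2, h1]

/-- The anti-automorphism `rev` is determined by its values on the generators. -/
lemma rev_eq {rev : B n → B n} (hmul : ∀ x y : B n, rev (x * y) = rev y * rev x)
    (hgen : ∀ i : Fin (n - 1), rev (σ i) = σ i) (c : B n) : rev c = (eps n c)⁻¹ := by
  let f : B n →* B n := MonoidHom.mk' (fun x => (rev x)⁻¹) (by
    intro a b
    rw [hmul, mul_inv_rev])
  have : f = eps n := by
    apply PresentedGroup.ext
    intro i
    change (rev (σ i))⁻¹ = eps n (σ i)
    rw [hgen, eps_σ]
  rw [← this]
  exact (inv_inv _).symm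

lemma exists_chain {r : ℕ} {u v : B n} (hu : u ∈ P n ∧ PalFree u ∧ u ≤ Δ n ^ (r : ℤ))
    (h : Relation.ReflTransGen (Step r) u v) :
    ∃ (k : ℕ) (w : ℕ → B n), w 0 = u ∧ w k = v ∧
      (∀ i ≤ k, w i ∈ P n ∧ PalFree (w i) ∧ w i ≤ Δ n ^ (r : ℤ)) ∧
      (∀ i < k, ∃ a b : B n, Simple a ∧ Simple b ∧ tw (w i) a = tw (w (i + 1)) b) := by
  induction h with
  | refl => exact ⟨0, fun _ => u, rfl, rfl, fun _ _ => hu, fun i hi => by omega⟩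
  | tail _ hstep ih =>
    rename_i x y _
    obtain ⟨k, w, h0, hk, hw, hs⟩ := ih
    refine ⟨k + 1, fun i => if i ≤ k then w i else y, by simpa using h0, by simp, ?_, ?_⟩
    · intro i _
      dsimp only
      split_ifs with hik
      · exact hw i hik
      · exact hstep.1
    · intro i hi
      rcases Nat.lt_or_ge i k with hik | hik
      · have h1 : i ≤ k := by omega
        have h2 : i + 1 ≤ k := by omega
        simpa only [h1, h2, if_true] using hs i hik
      · obtain rfl : i = k := by omega
        simpa [hk] using hstep.2

end Twisted

end Garside

/-- chains of simple ε-twisted conjugations between positive palindromic-free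
ε-twisted conjugated braids of canonical length at most `r`. -/
theorem chain_of_simple_twisted_conjugations (n : ℕ)
    (rev : B n → B n)
    (hrev_mul : ∀ x y : B n, rev (x * y) = rev y * rev x)
    (hrev_gen : ∀ i : Fin (n - 1), rev (σ i) = σ i)
    (u v : B n) (r : ℕ)
    (hu_pos : u ∈ P n) (hu_pf : PalFree u)
    (hv_pos : v ∈ P n) (hv_pf : PalFree v)
    (htc : ∃ c : B n, v = rev c * u * c)
    (hlu : lenLE u r) (hlv : lenLE v r) :
    ∃ (k : ℕ) (w : ℕ → B n),
      w 0 = u ∧ w k = v ∧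
      (∀ i ≤ k, w i ∈ P n ∧ PalFree (w i) ∧ lenLE (w i) r) ∧
      (∀ i < k, ∃ a b : B n, Simple a ∧ Simple b ∧
        rev a * w i * a = rev b * w (i + 1) * b) := by
  obtain ⟨c, hc⟩ := htc
  have hrev := Garside.rev_eq hrev_mul hrev_gen
  replace hc : v = Garside.tw u c := by rw [hc, hrev, Garside.tw]
  subst hc
  rcases Nat.eq_zero_or_pos r with rfl | hr
  · have huv := Garside.eq_of_lenLE_zero hu_pos hu_pf hv_pos hv_pf hlu hlv
    exact ⟨0, fun _ => u, rfl, huv, fun _ _ => ⟨hu_pos, hu_pf, hlu⟩, fun i hi => by omega⟩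
  have hbound : ∀ x : B n, PalFree x → lenLE x r → x ≤ Δ n ^ (r : ℤ) := by
    intro x hpx hlx
    rcases Garside.le_or_eq_Δ hpx hlx with h | rfl
    · exact h
    · simpa using Garside.zpow_le_zpow (n := n) (show (1 : ℤ) ≤ r by omega)
  have hur := hbound u hu_pf hlu
  obtain ⟨k, hk, -⟩ := Garside.exists_zpow_bounds c
  have hk' := Garside.le_zpow_of_palFree (by omega) hu_pos hv_pos hv_pf hk
  obtain ⟨l, w, h0, hl, hw, hs⟩ := Garside.exists_chain ⟨hu_pos, hu_pf, hur⟩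
    (Garside.chain_of_bounds hr hu_pos hu_pf hur k c hv_pos hv_pf (hbound _ hv_pf hlv) hk hk')
  refine ⟨l, w, h0, hl, fun i hi => ?_, fun i hi => ?_⟩
  · obtain ⟨h1, h2, h3⟩ := hw i hi
    exact ⟨h1, h2, Garside.lenLE_of_le h1 h3⟩
  · obtain ⟨a, b, ha, hb, hab⟩ := hs i hi
    exact ⟨a, b, ha, hb, by rw [hrev, hrev]; exact hab⟩
end
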